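/- Let the QMC rule Q_{d,n} use the point set P¹_{d,m} = ⋃_{p∈ℙ_m} S_{d,p} with min_{p∈ℙ_m} p ≥ d and n = ∑_{p∈ℙ_m} p². Then the worst-case error of Q_{d,n} on the unit ball of F_d² satisfies e^{wor}(F_d², Q_{d,n}) ≤ 16/(c_ℙ·m). -/

import Mathlib

open Finset

noncomputable section

/-- The support of a frequency vector. -/
def supp {d : ℕ} (k : Fin d → ℤ) : Finset (Fin d) :=
  Finset.univ.filter (fun j => k j ≠ 0)

/-- `width(supp k) = max supp(k) - min supp(k) + 1`, with value 1 for empty support. -/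
def width {d : ℕ} (k : Fin d → ℤ) : ℕ :=
  if h : (supp k).Nonempty then ((supp k).max' h).val - ((supp k).min' h).val + 1 else 1

/-- `min_{j ∈ supp(k)} log |k_j|`, with value 0 for empty support. -/
noncomputable def logmin {d : ℕ} (k : Fin d → ℤ) : ℝ :=
  if h : (supp k).Nonempty then (supp k).inf' h (fun j => Real.log |(k j : ℝ)|) else 0

/-- `exp(2πiz)`. -/
noncomputable def e2pi (z : ℂ) : ℂ := Complex.exp (2 * Real.pi * Complex.I * z)

/-- The set `ℙ_m` of primes `p` with `⌈m/2⌉ < p ≤ m`. -/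
def Pset (m : ℕ) : Finset ℕ :=
  (Finset.range (m + 1)).filter (fun p => p.Prime ∧ (m + 1) / 2 < p)

/-- The `h`-th point of Korobov's `p`-set `S_{d,p}`:
`x_h^{(p)} = ({h/p²}, {h²/p²}, …, {h^d/p²})`. -/
noncomputable def korobovPt (d p h : ℕ) : Fin d → ℝ :=
  fun j => Int.fract ((h : ℝ) ^ (j.val + 1) / (p : ℝ) ^ 2)

/-- The weight `max(width(supp k), min_{j ∈ supp k} log |k_j|)` defining the norm of `F_d²`. -/
noncomputable def weight2 {d : ℕ} (k : Fin d → ℤ) : ℝ := max (width k : ℝ) (logmin k)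

set_option linter.unusedSectionVars false

namespace Kor
open Polynomial

/-- A field extension of `κ` with a pole-like valuation at an element `x`. -/
theorem exists_valued_ext (κ : Type) [Field κ] [Finite κ] :
    ∃ (K : Type) (_ : Field K) (_ : Algebra κ K) (_ : IsAlgClosed K) (V : ValuationSubring K) (x : K),
      1 < V.valuation x ∧ ∀ c : κ, c ≠ 0 → V.valuation (algebraMap κ K c) = 1 := by
  let K := AlgebraicClosure (RatFunc κ)
  letI : Algebra κ K := inferInstance
  let t : K := algebraMap (RatFunc κ) K RatFunc.X
  have ht : Transcendental κ t := by
    have h1 : Transcendental κ (RatFunc.X : RatFunc κ) := RatFunc.transcendental_X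
    exact (transcendental_algebraMap_iff (FaithfulSMul.algebraMap_injective (RatFunc κ) K)).2 h1
  have ht0 : t ≠ 0 := by
    intro h
    apply ht
    rw [h]
    exact isAlgebraic_zero
  let A : Subring K := (Polynomial.aeval (R := κ) t).toRingHom.range
  have htA : t ∈ A := ⟨X, by simp⟩
  let I : Ideal A := Ideal.span {⟨t, htA⟩}
  have hI : I ≠ ⊤ := by
    intro h
    rw [Ideal.eq_top_iff_one, Ideal.mem_span_singleton'] at h
    obtain ⟨⟨a, g, hg⟩, ha⟩ := h
    have ha' : a * t = 1 := congrArg Subtype.val ha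
    apply ht
    refine ⟨g * X - 1, ?_, ?_⟩
    · intro h0
      have := congrArg (Polynomial.eval 0) h0
      simp at this
    · have hg' : aeval t g = a := hg
      simp [hg', ha']
  obtain ⟨V, hV1, hV2⟩ := Ideal.image_subset_nonunits_valuationSubring I hI
  have hvt : V.valuation t < 1 := by
    have : t ∈ V.nonunits := hV2 ⟨⟨t, htA⟩, Ideal.subset_span rfl, rfl⟩
    exact V.mem_nonunits_iff.1 this
  refine ⟨K, inferInstance, inferInstance, inferInstance, V, t⁻¹, ?_, ?_⟩
  · rw [map_inv₀]
    exact (one_lt_inv₀ (by rw [zero_lt_iff]; simpa using ht0)).2 hvt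
  · intro c hc
    have hle : ∀ d : κ, V.valuation (algebraMap κ K d) ≤ 1 := by
      intro d
      rw [V.valuation_le_one_iff]
      exact hV1 ⟨C d, by simp⟩
    refine le_antisymm (hle c) ?_
    have h2 := hle c⁻¹
    rw [map_inv₀, map_inv₀] at h2
    have h0 : 0 < V.valuation (algebraMap κ K c) := by
      rw [zero_lt_iff]; simpa using hc
    exact (inv_le_one₀ h0).1 h2

end Kor

namespace Kor

theorem val_sum {K : Type} [Field K] {Γ : Type*} [LinearOrderedCommGroupWithZero Γ]
    (v : Valuation K Γ) {ι : Type*} [DecidableEq ι] (T : Finset ι) (hT : T.Nonempty) (z : ι → K)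
    (h0 : ∀ t ∈ T, z t ≠ 0) (hinj : ∀ t ∈ T, ∀ t' ∈ T, v (z t) = v (z t') → t = t') :
    ∃ t ∈ T, v (∑ i ∈ T, z i) = v (z t) := by
  obtain ⟨t, ht, hmax⟩ := T.exists_max_image (fun i => v (z i)) hT
  refine ⟨t, ht, ?_⟩
  rw [← Finset.add_sum_erase T z ht]
  apply Valuation.map_add_eq_of_lt_left
  apply Valuation.map_sum_lt
  · simpa using h0 t ht
  · intro i hi
    rw [Finset.mem_erase] at hi
    refine lt_of_le_of_ne (hmax i hi.2) ?_
    intro h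
    exact hi.1 (hinj i hi.2 t ht h)

theorem pj_inj {p s : ℕ} (hp : p.Prime) (hs0 : 0 < s) (hsp : s < p) {i j i' j' : ℕ}
    (hj : j < p) (hj' : j' < p) (h : p * i + s * j = p * i' + s * j') : i = i' ∧ j = j' := by
  have hco : Nat.Coprime p s := (Nat.Prime.coprime_iff_not_dvd hp).2 (fun h => absurd (Nat.le_of_dvd hs0 h) (by omega))
  have h1 : s * j ≡ s * j' [MOD p] := by
    have : (p * i + s * j) % p = (p * i' + s * j') % p := by rw [h]
    simpa [Nat.ModEq, Nat.add_mod] using this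
  have h2 : j ≡ j' [MOD p] := Nat.ModEq.cancel_left_of_coprime hco h1
  have h3 : j = j' := by
    have := h2
    unfold Nat.ModEq at this
    rwa [Nat.mod_eq_of_lt hj, Nat.mod_eq_of_lt hj'] at this
  subst h3
  have : p * i = p * i' := by omega
  exact ⟨Nat.eq_of_mul_eq_mul_left hp.pos this, rfl⟩

section
variable {κ K : Type} [Field κ] [Field K] [Algebra κ K] {Γ : Type*}
    [LinearOrderedCommGroupWithZero Γ] (v : Valuation K Γ) (p s : ℕ) (x y : K)

theorem val_level1 (hp : p.Prime) (hs0 : 0 < s) (hsp : s < p)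
    (hx : 1 < v x) (hy : v y ^ p = v x ^ s) (hc : ∀ c : κ, c ≠ 0 → v (algebraMap κ K c) = 1)
    (l : ℕ) (a : Fin l × Fin p → κ) (ha : a ≠ 0) :
    ∃ e : ℕ, e ≤ p * (l - 1) + s * (p - 1) ∧
      v (∑ t, a t • (x ^ (t.1 : ℕ) * y ^ (t.2 : ℕ))) ^ p = v x ^ e := by
  classical
  have hx0 : v x ≠ 0 := (lt_trans zero_lt_one hx).ne'
  have hy0 : v y ≠ 0 := by
    intro h
    rw [h, zero_pow hp.ne_zero] at hy
    exact pow_ne_zero s hx0 hy.symm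
  have hxK : x ≠ 0 := by simpa using hx0
  have hyK : y ≠ 0 := by simpa using hy0
  let T : Finset (Fin l × Fin p) := univ.filter (fun t => a t ≠ 0)
  have hT : T.Nonempty := by
    obtain ⟨t, ht⟩ := Function.ne_iff.1 ha
    exact ⟨t, by simpa [T] using ht⟩
  have hv : ∀ t ∈ T, v (a t • (x ^ (t.1 : ℕ) * y ^ (t.2 : ℕ))) ^ p
      = v x ^ (p * t.1 + s * t.2 : ℕ) := by
    intro t ht
    have : a t ≠ 0 := by simpa [T] using ht
    rw [Algebra.smul_def, map_mul, hc _ this, one_mul, map_mul, map_pow, map_pow, mul_pow,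
      ← pow_mul, ← pow_mul, mul_comm (t.2 : ℕ) p, pow_mul (v y), hy, ← pow_mul, pow_add,
      mul_comm (t.1 : ℕ) p]
  obtain ⟨t, ht, h⟩ := val_sum v T hT (fun t => a t • (x ^ (t.1 : ℕ) * y ^ (t.2 : ℕ)))
    (by
      intro t ht
      have : a t ≠ 0 := by simpa [T] using ht
      exact smul_ne_zero this (mul_ne_zero (pow_ne_zero _ hxK) (pow_ne_zero _ hyK)))
    (by
      intro t ht t' ht' h
      have h1 := hv t ht
      rw [h, hv t' ht'] at h1
      have h2 := pow_right_injective₀ (zero_lt_one.trans hx) hx.ne' h1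
      obtain ⟨h3, h4⟩ := pj_inj hp hs0 hsp t'.2.2 t.2.2 h2
      exact Prod.ext (Fin.ext h3.symm) (Fin.ext h4.symm))
  refine ⟨p * t.1 + s * t.2, ?_, ?_⟩
  · have h1 := t.1.2
    have h2 := t.2.2
    gcongr <;> omega
  · have hsum : ∑ t, a t • (x ^ (t.1 : ℕ) * y ^ (t.2 : ℕ))
        = ∑ t ∈ T, a t • (x ^ (t.1 : ℕ) * y ^ (t.2 : ℕ)) := by
      symm
      apply Finset.sum_subset (Finset.subset_univ _)
      intro t _ ht
      have : a t = 0 := by simpa [T] using ht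
      simp [this]
    rw [hsum, h, hv t ht]

theorem val_level2 (hp : p.Prime) (hs0 : 0 < s) (hsp : s < p)
    (hx : 1 < v x) (hy : v y ^ p = v x ^ s) (hc : ∀ c : κ, c ≠ 0 → v (algebraMap κ K c) = 1)
    (l m q : ℕ) (hq : p * (l - 1) + s * (p - 1) < q)
    (a : Fin m × Fin p → Fin l × Fin p → κ) (ha : a ≠ 0) :
    (∑ u, (∑ t, a u t • (x ^ (t.1 : ℕ) * y ^ (t.2 : ℕ))) *
      (x ^ (u.1 : ℕ) * y ^ (u.2 : ℕ)) ^ q) ≠ 0 := by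
  classical
  have hx0 : v x ≠ 0 := (lt_trans zero_lt_one hx).ne'
  let T : Finset (Fin m × Fin p) := univ.filter (fun t => a t ≠ 0)
  have hT : T.Nonempty := by
    obtain ⟨t, ht⟩ := Function.ne_iff.1 ha
    exact ⟨t, by simpa [T] using ht⟩
  let z : Fin m × Fin p → K := fun u => (∑ t, a u t • (x ^ (t.1 : ℕ) * y ^ (t.2 : ℕ))) *
      (x ^ (u.1 : ℕ) * y ^ (u.2 : ℕ)) ^ q
  have hv : ∀ u ∈ T, ∃ e : ℕ, e < q ∧ v (z u) ^ p
      = v x ^ (e + q * (p * u.1 + s * u.2) : ℕ) := by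
    intro u hu
    have : a u ≠ 0 := by simpa [T] using hu
    obtain ⟨e, he, h⟩ := val_level1 v p s x y hp hs0 hsp hx hy hc l (a u) this
    refine ⟨e, lt_of_le_of_lt he hq, ?_⟩
    simp only [z]
    rw [map_mul, mul_pow, h, pow_add]
    congr 1
    rw [map_pow, map_mul, map_pow, map_pow, ← pow_mul, mul_pow, ← pow_mul, ← pow_mul,
      show (u.2 : ℕ) * (q * p) = p * (u.2 * q) by ring, pow_mul (v y), hy, ← pow_mul, ← pow_add]
    congr 1
    ring
  have hz0 : ∀ u ∈ T, z u ≠ 0 := by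
    intro u hu h0
    obtain ⟨e, -, h⟩ := hv u hu
    rw [h0, map_zero, zero_pow hp.ne_zero] at h
    exact pow_ne_zero _ hx0 h.symm
  obtain ⟨u, hu, h⟩ := val_sum v T hT z hz0
    (by
      intro t ht t' ht' h
      obtain ⟨e, he, h1⟩ := hv t ht
      obtain ⟨e', he', h1'⟩ := hv t' ht'
      rw [h, h1'] at h1
      have h2 := pow_right_injective₀ (zero_lt_one.trans hx) hx.ne' h1
      have hqpos : 0 < q := by omega
      have h3 : (p * (t'.1 : ℕ) + s * t'.2) = p * t.1 + s * t.2 := by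
        have := congrArg (· / q) h2
        simp only [Nat.add_mul_div_left _ _ hqpos, Nat.div_eq_of_lt he, Nat.div_eq_of_lt he'] at this
        omega
      obtain ⟨h3, h4⟩ := pj_inj hp hs0 hsp t'.2.2 t.2.2 h3
      exact Prod.ext (Fin.ext h3.symm) (Fin.ext h4.symm))
  have hsum : ∑ u, z u = ∑ u ∈ T, z u := by
    symm
    apply Finset.sum_subset (Finset.subset_univ _)
    intro t _ ht
    have : a t = 0 := by simpa [T] using ht
    simp [z, this]
  intro h0
  have h1 : ∑ u, z u = 0 := h0
  rw [← hsum, h1, map_zero] at h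
  exact hz0 u hu ((Valuation.zero_iff v).1 h.symm)

theorem val_y (hp : p.Prime) (hs0 : 0 < s)
    (hx : 1 < v x) (hc : ∀ c : κ, c ≠ 0 → v (algebraMap κ K c) = 1)
    (c : ℤ → κ) (hcs : c s ≠ 0)
    (hxy : y ^ p = y + ∑ i ∈ Finset.Icc (-1 : ℤ) s, c i • x ^ i) : v y ^ p = v x ^ s := by
  have hx0 : v x ≠ 0 := (lt_trans zero_lt_one hx).ne'
  have hf : v (∑ i ∈ Finset.Icc (-1 : ℤ) s, c i • x ^ i) = v x ^ s := by
    have hmem : (s : ℤ) ∈ Finset.Icc (-1 : ℤ) s := by simp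
    have hvs : v (c s • x ^ (s : ℤ)) = v x ^ s := by
      rw [Algebra.smul_def, map_mul, hc _ hcs, one_mul, zpow_natCast, map_pow]
    rw [← Finset.add_sum_erase _ _ hmem, ← hvs]
    apply Valuation.map_add_eq_of_lt_left
    apply Valuation.map_sum_lt
    · rw [hvs]; exact pow_ne_zero _ hx0
    · intro i hi
      rw [hvs]
      rw [Finset.mem_erase, Finset.mem_Icc] at hi
      by_cases hci : c i = 0
      · rw [hci, zero_smul, map_zero]
        exact pow_pos (zero_lt_one.trans hx) _
      · rw [Algebra.smul_def, map_mul, hc _ hci, one_mul, map_zpow₀, ← zpow_natCast]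
        exact (zpow_lt_zpow_iff_right₀ hx).2 (by omega)
  have h1 : y ^ p - y = ∑ i ∈ Finset.Icc (-1 : ℤ) s, c i • x ^ i := by rw [hxy]; ring
  have hgt : 1 < v x ^ s := one_lt_pow₀ hx hs0.ne'
  have hy1 : 1 < v y := by
    by_contra hle
    push Not at hle
    have : v (y ^ p - y) ≤ 1 := by
      refine (Valuation.map_sub v _ _).trans (max_le ?_ hle)
      rw [map_pow]
      exact pow_le_one₀ zero_le hle
    rw [h1, hf] at this
    exact absurd this (not_le.2 hgt)
  rw [← hf, ← h1]
  rw [Valuation.map_sub_eq_of_lt_left, map_pow]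
  rw [map_pow]
  exact lt_self_pow₀ hy1 hp.one_lt

end
end Kor

namespace Kor

section
variable {κ R : Type} [Field κ] [CommRing R] [Algebra κ R] (p : ℕ) (x : Rˣ) (y : R)

/-- monomials -/
def mon (i : ℤ) (j : ℕ) : R := ((x ^ i : Rˣ) : R) * y ^ j

/-- span of monomials `x^i y^j` with `u ≤ i < v` and `j < p`. -/
def MM (κ : Type) {R : Type} [Field κ] [CommRing R] [Algebra κ R] (p : ℕ) (x : Rˣ) (y : R)
    (u v : ℤ) : Submodule κ R :=
  Submodule.span κ (Set.range fun t : (Finset.Ico u v) × Fin p => mon x y t.1 t.2)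

theorem mon_mem {u v i : ℤ} {j : ℕ} (h1 : u ≤ i) (h2 : i < v) (hj : j < p) :
    mon x y i j ∈ MM κ p x y u v :=
  Submodule.subset_span ⟨⟨⟨i, Finset.mem_Ico.2 ⟨h1, h2⟩⟩, ⟨j, hj⟩⟩, rfl⟩

theorem MM_mul {u v u' v' : ℤ} (r : R)
    (h : ∀ i : ℤ, ∀ j : ℕ, u ≤ i → i < v → j < p → r * mon x y i j ∈ MM κ p x y u' v')
    {z : R} (hz : z ∈ MM κ p x y u v) : r * z ∈ MM κ p x y u' v' := by
  unfold MM at hz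
  induction hz using Submodule.span_induction with
  | mem z hz =>
    obtain ⟨t, rfl⟩ := hz
    have := Finset.mem_Ico.1 t.1.2
    exact h _ _ this.1 this.2 t.2.2
  | zero => simp
  | add a b _ _ ha hb => rw [mul_add]; exact add_mem ha hb
  | smul c a _ ha => rw [mul_smul_comm]; exact Submodule.smul_mem _ _ ha

theorem MM_mono {u v u' v' : ℤ} (h1 : u' ≤ u) (h2 : v ≤ v') :
    MM κ p x y u v ≤ MM κ p x y u' v' := by
  intro z hz
  have := MM_mul (κ := κ) p x y (u := u) (v := v) (u' := u') (v' := v') 1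
    (fun i j h3 h4 h5 => by rw [one_mul]; exact mon_mem p x y (by omega) (by omega) h5) hz
  simpa using this

theorem xmul_mon (e i : ℤ) (j : ℕ) : ((x ^ e : Rˣ) : R) * mon x y i j = mon x y (e + i) j := by
  unfold mon
  rw [zpow_add, Units.val_mul, mul_assoc]

theorem MM_xmul {u v : ℤ} (e : ℤ) {z : R} (hz : z ∈ MM κ p x y u v) :
    ((x ^ e : Rˣ) : R) * z ∈ MM κ p x y (u + e) (v + e) := by
  refine MM_mul p x y _ ?_ hz
  intro i j h1 h2 h3
  rw [xmul_mon]
  exact mon_mem p x y (by omega) (by omega) h3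

theorem MM_fmul {u v : ℤ} (s n : ℕ) (d : ℤ → κ) {z : R} (hz : z ∈ MM κ p x y u v) :
    (∑ i ∈ Finset.Icc (-1 : ℤ) s, d i • ((x ^ (i * n) : Rˣ) : R)) * z
      ∈ MM κ p x y (u - n) (v + s * n) := by
  rw [Finset.sum_mul]
  refine sum_mem ?_
  intro i hi
  rw [Finset.mem_Icc] at hi
  rw [smul_mul_assoc]
  refine Submodule.smul_mem _ _ ?_
  refine MM_mono p x y ?_ ?_ (MM_xmul p x y (i * n) hz)
  · nlinarith
  · nlinarith

/-- The Laurent polynomial. -/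
def lau (s : ℕ) (c : ℤ → κ) : R := ∑ i ∈ Finset.Icc (-1 : ℤ) s, c i • ((x ^ i : Rˣ) : R)

variable [hp : Fact p.Prime] [CharP R p]

theorem lau_pow (s : ℕ) (c : ℤ → κ) (t : ℕ) : (lau x s c : R) ^ p ^ t =
    ∑ i ∈ Finset.Icc (-1 : ℤ) s, (c i ^ p ^ t) • ((x ^ (i * (p ^ t : ℕ)) : Rˣ) : R) := by
  unfold lau
  rw [sum_pow_char_pow]
  refine Finset.sum_congr rfl fun i _ => ?_
  rw [smul_pow, zpow_mul, ← Units.val_pow_eq_pow_val, zpow_natCast]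

theorem y_pow {s : ℕ} {c : ℤ → κ} (hxy : y ^ p = y + lau x s c) (ν : ℕ) :
    y ^ p ^ ν = y + ∑ t ∈ Finset.range ν, (lau x s c : R) ^ p ^ t := by
  induction ν with
  | zero => simp
  | succ n ih =>
    rw [pow_succ', pow_mul, hxy, add_pow_char_pow, ih, Finset.sum_range_succ, add_assoc]

theorem MM_ymon {s : ℕ} {c : ℤ → κ} (hxy : y ^ p = y + lau x s c) {u v : ℤ} {z : R}
    (hz : z ∈ MM κ p x y u v) : y * z ∈ MM κ p x y (u - 1) (v + s) := by
  refine MM_mul p x y _ ?_ hz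
  intro i j h1 h2 h3
  have h4 : y * mon x y i j = mon x y i (j + 1) := by unfold mon; ring
  rw [h4]
  by_cases h5 : j + 1 < p
  · exact mon_mem p x y (by omega) (by omega) h5
  · have h6 : j + 1 = p := by omega
    have h7 : mon x y i (j + 1) = mon x y i 1 + (lau x s c : R) * mon x y i 0 := by
      unfold mon; rw [h6, hxy]; ring
    rw [h7]
    refine add_mem (mon_mem p x y (by omega) (by omega) hp.out.one_lt) ?_
    have := MM_fmul (κ := κ) p x y s 1 c
      (mon_mem (κ := κ) (u := i) (v := i + 1) p x y le_rfl (by omega) hp.out.pos)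
    simp only [Nat.cast_one, mul_one] at this
    exact MM_mono p x y (by omega) (by omega) this

theorem MM_yq {s : ℕ} {c : ℤ → κ} (hxy : y ^ p = y + lau x s c) {u v : ℤ} {z : R} (ν : ℕ)
    (hz : z ∈ MM κ p x y u v) : y ^ p ^ (ν + 1) * z ∈ MM κ p x y (u - (p ^ ν : ℕ)) (v + s * (p ^ ν : ℕ)) := by
  rw [y_pow p x y hxy, add_mul, Finset.sum_mul]
  have h1 : ∀ t, t < ν + 1 → (p ^ t : ℕ) ≤ p ^ ν := fun t ht =>
    Nat.pow_le_pow_right hp.out.pos (by omega)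
  have h2 : 1 ≤ p ^ ν := Nat.one_le_pow _ _ hp.out.pos
  refine add_mem ?_ (sum_mem ?_)
  · refine MM_mono p x y ?_ ?_ (MM_ymon p x y hxy hz)
    · have : (1 : ℤ) ≤ (p ^ ν : ℕ) := by exact_mod_cast h2
      omega
    · have : (1 : ℤ) ≤ (p ^ ν : ℕ) := by exact_mod_cast h2
      nlinarith
  · intro t ht
    rw [Finset.mem_range] at ht
    have h3 : ((p ^ t : ℕ) : ℤ) ≤ (p ^ ν : ℕ) := by exact_mod_cast h1 t ht
    rw [lau_pow]
    refine MM_mono p x y ?_ ?_ (MM_fmul p x y s (p ^ t) _ hz)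
    · omega
    · nlinarith

theorem MM_yqj {s : ℕ} {c : ℤ → κ} (hxy : y ^ p = y + lau x s c) {u v : ℤ} {z : R} (ν j : ℕ)
    (hz : z ∈ MM κ p x y u v) : (y ^ p ^ (ν + 1)) ^ j * z
      ∈ MM κ p x y (u - j * (p ^ ν : ℕ)) (v + s * (j * (p ^ ν : ℕ))) := by
  induction j with
  | zero => simpa using hz
  | succ n ih =>
    have := MM_yq p x y hxy ν ih
    rw [pow_succ', mul_assoc]
    refine MM_mono p x y (le_of_eq ?_) (le_of_eq ?_) this
    · push_cast; ring
    · push_cast; ring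

theorem MM_key {s : ℕ} {c : ℤ → κ} (hxy : y ^ p = y + lau x s c) (ν : ℕ) (i k j j' l m : ℕ)
    (hj : j < p) (hj' : j' < p) (hi : i < l) (hk : k < m) :
    mon x y i j * (mon x y k j') ^ p ^ (ν + 1) ∈ MM κ p x y (-(p ^ (ν + 1) : ℕ))
      (l + s * (p ^ (ν + 1) : ℕ) + (p ^ (ν + 1) : ℕ) * (m - 1)) := by
  have h0 := mon_mem (κ := κ) (u := i) (v := i + 1) p x y le_rfl (by omega) hj
  have h1 := MM_yqj p x y hxy ν j' h0
  have h2 := MM_xmul p x y (k * (p ^ (ν + 1) : ℕ)) h1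
  have h3 : ((x ^ ((k : ℤ) * (p ^ (ν + 1) : ℕ)) : Rˣ) : R) * ((y ^ p ^ (ν + 1)) ^ j' * mon x y i j)
      = mon x y i j * (mon x y k j') ^ p ^ (ν + 1) := by
    unfold mon
    rw [zpow_mul, zpow_natCast, Units.val_pow_eq_pow_val]
    ring
  rw [h3] at h2
  have h4 : ((j' : ℤ) * (p ^ ν : ℕ)) ≤ (p ^ (ν + 1) : ℕ) := by
    have : j' * p ^ ν ≤ p ^ (ν + 1) := by
      rw [pow_succ']
      gcongr
    exact_mod_cast this
  have h5 : (0 : ℤ) ≤ k * (p ^ (ν + 1) : ℕ) := by positivity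
  have h6 : (k : ℤ) * (p ^ (ν + 1) : ℕ) ≤ (p ^ (ν + 1) : ℕ) * (m - 1) := by
    rw [mul_comm]
    have : (k : ℤ) ≤ m - 1 := by omega
    gcongr
  have h7 : (s : ℤ) * (j' * (p ^ ν : ℕ)) ≤ s * (p ^ (ν + 1) : ℕ) := by gcongr
  refine MM_mono p x y ?_ ?_ h2
  · omega
  · omega

end
end Kor

namespace Kor

section
variable {κ R : Type} [Field κ] [Fintype κ] [CommRing R] [Algebra κ R] (p : ℕ) (x : Rˣ) (y : R)
variable [hp : Fact p.Prime] [CharP R p]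

theorem exists_delta {s : ℕ} {c : ℤ → κ} (hxy : y ^ p = y + lau x s c) (ν l m : ℕ)
    (hl : 0 < l)
    (hlm : m + s * p ^ (ν + 1) + p ^ (ν + 1) * l < p * l * m) :
    ∃ a : Fin m × Fin p → Fin l × Fin p → κ, a ≠ 0 ∧
      ∑ u, (∑ t, a u t • (mon x y (t.1 : ℕ) t.2)) ^ p ^ (ν + 1) * mon x y (u.1 : ℕ) u.2 = 0 := by
  classical
  set q := p ^ (ν + 1) with hq
  let u0 : ℤ := -(q : ℕ)
  let v0 : ℤ := (m : ℤ) + s * (q : ℕ) + (q : ℕ) * (l - 1)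
  let δ : (Fin m × Fin p → Fin l × Fin p → κ) → R := fun a =>
    ∑ u, (∑ t, a u t • (mon x y (t.1 : ℕ) t.2)) ^ q * mon x y (u.1 : ℕ) u.2
  have hδ : ∀ a, δ a ∈ MM κ p x y u0 v0 := by
    intro a
    refine sum_mem fun u _ => ?_
    rw [hq, sum_pow_char_pow, Finset.sum_mul]
    refine sum_mem fun t _ => ?_
    rw [smul_pow, smul_mul_assoc]
    refine Submodule.smul_mem _ _ ?_
    rw [mul_comm]
    exact MM_key p x y hxy ν u.1 t.1 u.2 t.2 m l u.2.2 t.2.2 u.1.2 t.1.2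
  have hrep : ∀ a, ∃ g : (Finset.Ico u0 v0) × Fin p → κ, ∑ t, g t • mon x y t.1 t.2 = δ a := by
    intro a
    have := hδ a
    unfold MM at this
    exact (Submodule.mem_span_range_iff_exists_fun κ).1 this
  choose g hg using hrep
  have hcard : Fintype.card ((Finset.Ico u0 v0) × Fin p → κ)
      < Fintype.card (Fin m × Fin p → Fin l × Fin p → κ) := by
    have h1 : (v0 - u0).toNat = m + s * q + q * l := by
      have : v0 - u0 = ((m + s * q + q * l : ℕ) : ℤ) := by
        simp only [u0, v0]; push_cast; ring
      rw [this, Int.toNat_natCast]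
    simp only [Fintype.card_fun, Fintype.card_prod, Fintype.card_coe, Int.card_Ico, Fintype.card_fin,
      h1]
    rw [← pow_mul]
    apply Nat.pow_lt_pow_right Fintype.one_lt_card
    calc (m + s * q + q * l) * p < (p * l * m) * p := by
          exact Nat.mul_lt_mul_of_pos_right hlm hp.out.pos
      _ = l * p * (m * p) := by ring
  obtain ⟨a, a', hne, heq⟩ := Fintype.exists_ne_map_eq_of_card_lt g hcard
  refine ⟨a - a', sub_ne_zero.2 hne, ?_⟩
  have h1 : δ a = δ a' := by rw [← hg a, ← hg a', heq]
  have h2 : δ (a - a') = δ a - δ a' := by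
    simp only [δ]
    rw [← Finset.sum_sub_distrib]
    refine Finset.sum_congr rfl fun u _ => ?_
    rw [← sub_mul]
    congr 1
    rw [hq, ← sub_pow_char_pow, ← Finset.sum_sub_distrib]
    congr 1
    refine Finset.sum_congr rfl fun t _ => ?_
    simp [sub_smul]
  change δ (a - a') = 0
  rw [h2, h1, sub_self]

theorem E_mem {s : ℕ} {c : ℤ → κ} (hxy : y ^ p = y + lau x s c) (ν l m : ℕ)
    (a : Fin m × Fin p → Fin l × Fin p → κ) :
    ∑ u, (∑ t, a u t • (mon x y (t.1 : ℕ) t.2)) * (mon x y (u.1 : ℕ) u.2) ^ p ^ (ν + 1) ∈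
      MM κ p x y (-(p ^ (ν + 1) : ℕ))
      (l + s * (p ^ (ν + 1) : ℕ) + (p ^ (ν + 1) : ℕ) * (m - 1)) := by
  refine sum_mem fun u _ => ?_
  rw [Finset.sum_mul]
  refine sum_mem fun t _ => ?_
  rw [smul_mul_assoc]
  refine Submodule.smul_mem _ _ ?_
  exact MM_key p x y hxy ν t.1 u.1 t.2 u.2 l m t.2.2 u.2.2 t.1.2 u.1.2

end

theorem stepanov_AS {κ : Type} [Field κ] [Fintype κ] [DecidableEq κ] (p : ℕ) [hp : Fact p.Prime]
    [CharP κ p] (ν s : ℕ) (hcard : Fintype.card κ = (p ^ (ν + 1)) ^ 2) (hs0 : 0 < s) (hsp : s < p)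
    (hbig : (s + 3) * (1 + p * s) < p ^ (ν + 1)) (hbig2 : s < p ^ ν)
    (c : ℤ → κ) (hcs : c s ≠ 0) (X0 : Finset κ)
    (hX0 : ∀ x ∈ X0, x ≠ 0 ∧ ∃ y : κ, y ^ p = y + ∑ i ∈ Finset.Icc (-1 : ℤ) s, c i * x ^ i) :
    X0.card ≤ p ^ (ν + 1) * p ^ ν + p ^ (ν + 1) * (2 * s + 5) := by
  classical
  obtain ⟨K, _, _, _, V, xK, hxK, hcK⟩ := exists_valued_ext κ
  have hxK0 : xK ≠ 0 := by
    rintro rfl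
    simp at hxK
  -- the point `y` in `K`
  obtain ⟨yK, hyK⟩ : ∃ y : K, y ^ p = y + ∑ i ∈ Finset.Icc (-1 : ℤ) s, c i • xK ^ i := by
    let F : Polynomial K := Polynomial.X ^ p - Polynomial.X
      - Polynomial.C (∑ i ∈ Finset.Icc (-1 : ℤ) s, c i • xK ^ i)
    have hdeg : F.degree ≠ 0 := by
      have : F = Polynomial.X ^ p - (Polynomial.X
        + Polynomial.C (∑ i ∈ Finset.Icc (-1 : ℤ) s, c i • xK ^ i)) := by simp only [F]; ring
      rw [this, Polynomial.degree_sub_eq_left_of_degree_lt]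
      · rw [Polynomial.degree_X_pow]
        exact_mod_cast hp.out.ne_zero
      · rw [Polynomial.degree_X_pow, Polynomial.degree_X_add_C]
        exact_mod_cast hp.out.one_lt
    obtain ⟨y, hy⟩ := IsAlgClosed.exists_root F hdeg
    refine ⟨y, ?_⟩
    simp only [F, Polynomial.IsRoot.def, Polynomial.eval_sub, Polynomial.eval_pow,
      Polynomial.eval_X, Polynomial.eval_C] at hy
    linear_combination hy
  have hvy := val_y V.valuation p s xK yK hp.out hs0 hxK hcK c hcs hyK
  -- the ring
  let Pts := {t : κ × κ // t.1 ≠ 0 ∧ t.2 ^ p = t.2 + ∑ i ∈ Finset.Icc (-1 : ℤ) s, c i * t.1 ^ i}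
  let R := K × (Pts → κ)
  let xR : R := (xK, fun t => t.1.1)
  let xR' : R := (xK⁻¹, fun t => (t.1.1)⁻¹)
  let x : Rˣ := ⟨xR, xR', Prod.ext (mul_inv_cancel₀ hxK0) (funext fun t => mul_inv_cancel₀ t.2.1),
    Prod.ext (inv_mul_cancel₀ hxK0) (funext fun t => inv_mul_cancel₀ t.2.1)⟩
  let y : R := (yK, fun t => t.1.2)
  have : CharP R p := charP_of_injective_algebraMap (FaithfulSMul.algebraMap_injective κ R) p
  let fK : R →+* K := RingHom.fst K (Pts → κ)
  let fP : Pts → (R →+* κ) := fun t => (Pi.evalRingHom (fun _ => κ) t).comp (RingHom.snd K (Pts → κ))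
  have hfKs : ∀ (a : κ) (z : R), fK (a • z) = a • fK z := fun a z => rfl
  have hfPs : ∀ t (a : κ) (z : R), fP t (a • z) = a * fP t z := fun t a z => rfl
  have hfKx : ∀ i : ℤ, fK ((x ^ i : Rˣ) : R) = xK ^ i := by
    intro i
    have : fK ((x ^ i : Rˣ) : R) = ((Units.map fK.toMonoidHom (x ^ i) : Kˣ) : K) := rfl
    rw [this, map_zpow, Units.val_zpow_eq_zpow_val]
    rfl
  have hfPx : ∀ t, ∀ i : ℤ, fP t ((x ^ i : Rˣ) : R) = t.1.1 ^ i := by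
    intro t i
    have : fP t ((x ^ i : Rˣ) : R) = ((Units.map (fP t).toMonoidHom (x ^ i) : κˣ) : κ) := rfl
    rw [this, map_zpow, Units.val_zpow_eq_zpow_val]
    rfl
  have hfKy : fK y = yK := rfl
  have hfPy : ∀ t, fP t y = t.1.2 := fun t => rfl
  have hxy : y ^ p = y + lau x s c := by
    apply Prod.ext
    · change fK (y ^ p) = fK (y + lau x s c)
      rw [map_add, map_pow, hfKy, hyK]
      unfold lau
      rw [map_sum]
      congr 1
      refine Finset.sum_congr rfl fun i _ => ?_
      rw [hfKs, hfKx]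
    · funext t
      change fP t (y ^ p) = fP t (y + lau x s c)
      rw [map_add, map_pow, hfPy, t.2.2]
      unfold lau
      rw [map_sum]
      congr 1
      refine Finset.sum_congr rfl fun i _ => ?_
      rw [hfPs, hfPx]
  set q := p ^ (ν + 1) with hq
  have hqq : q = p * p ^ ν := by rw [hq, pow_succ']
  set q' := p ^ ν with hq'
  have hp2 := hp.out.two_le
  obtain ⟨l, hl⟩ : ∃ l, q' = s + l := ⟨q' - s, by omega⟩
  have hl0 : 0 < l := by omega
  have hlm : (q' + s + 3) + s * q + q * l < p * l * (q' + s + 3) := by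
    have e1 : p * l * (q' + s + 3) + p * s * (s + 3) = q * l + q * (s + 3) := by
      rw [hqq, hl]; ring
    have e2 : 2 * q' ≤ q := by rw [hqq]; gcongr
    nlinarith
  obtain ⟨a, ha, hδ⟩ := exists_delta p x y hxy ν l (q' + s + 3) hl0 hlm
  have hE := E_mem p x y hxy ν l (q' + s + 3) a
  set E := ∑ u, (∑ t, a u t • (mon x y (t.1 : ℕ) t.2)) * (mon x y (u.1 : ℕ) u.2) ^ p ^ (ν + 1)
    with hEdef
  -- `E` is nonzero in `K`
  have hfKmon : ∀ i j : ℕ, fK (mon x y i j) = xK ^ i * yK ^ j := by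
    intro i j
    unfold mon
    rw [map_mul, hfKx, map_pow, hfKy, zpow_natCast]
  have hEK : fK E ≠ 0 := by
    have h1 : p * (l - 1) + s * (p - 1) < q := by
      obtain ⟨l', rfl⟩ : ∃ l', l = l' + 1 := ⟨l - 1, by omega⟩
      obtain ⟨p', hp'⟩ : ∃ p', p = p' + 1 := ⟨p - 1, by omega⟩
      rw [hqq, hl, hp']
      simp only [Nat.add_sub_cancel]
      nlinarith
    have h2 := val_level2 V.valuation p s xK yK hp.out hs0 hsp hxK hvy hcK l (q' + s + 3) q h1 a ha
    convert h2 using 1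
    rw [hEdef, map_sum]
    refine Finset.sum_congr rfl fun u _ => ?_
    rw [map_mul, map_sum, map_pow, hfKmon]
    congr 1
  -- `E` vanishes at the points
  have hfix : ∀ z : κ, z ^ (q * q) = z := by
    intro z
    rw [← sq, ← hcard]
    exact FiniteField.pow_card z
  have hfPmon : ∀ t, ∀ (i : ℤ) (j : ℕ), fP t (mon x y i j) = t.1.1 ^ i * t.1.2 ^ j := by
    intro t i j
    unfold mon
    rw [map_mul, hfPx, map_pow, hfPy]
  have hEP : ∀ t, fP t E = 0 := by
    intro t
    have h1 := congrArg (fP t) hδ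
    rw [map_zero, map_sum] at h1
    have h2 : (fP t E) ^ q = 0 := by
      rw [← h1, hEdef, map_sum, hq, sum_pow_char_pow]
      refine Finset.sum_congr rfl fun u _ => ?_
      rw [map_mul, mul_pow, map_mul, map_pow, map_pow]
      congr 1
      rw [← pow_mul]
      exact hfix _
    exact pow_eq_zero_iff (by rw [hq]; exact pow_ne_zero _ hp.out.ne_zero) |>.1 h2
  -- conclusion
  set vv : ℤ := (l : ℤ) + s * (q : ℕ) + (q : ℕ) * (((q' + s + 3 : ℕ) : ℤ) - 1) with hvv
  unfold MM at hE
  obtain ⟨e, he⟩ := (Submodule.mem_span_range_iff_exists_fun κ).1 hE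
  obtain ⟨⟨i0, j0⟩, hij0⟩ : ∃ t, e t ≠ 0 := by
    by_contra hcon
    push Not at hcon
    apply hEK
    rw [← he]
    simp [hcon]
  let g : Polynomial κ := ∑ i : Finset.Ico (-(q : ℕ) : ℤ) vv,
    Polynomial.monomial ((i : ℤ) + q).toNat (e (i, j0))
  have hgc : g.coeff ((i0 : ℤ) + q).toNat = e (i0, j0) := by
    simp only [g, Polynomial.finsetSum_coeff, Polynomial.coeff_monomial]
    rw [Finset.sum_eq_single i0]
    · simp
    · intro i _ hi
      rw [if_neg]
      intro h
      apply hi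
      apply Subtype.ext
      have h1 := Finset.mem_Ico.1 i.2
      have h2 := Finset.mem_Ico.1 i0.2
      omega
    · simp
  have hg0 : g ≠ 0 := by
    intro h
    rw [h, Polynomial.coeff_zero] at hgc
    exact hij0 hgc.symm
  have hgdeg : g.natDegree ≤ (vv + q).toNat := by
    refine Polynomial.natDegree_sum_le_of_forall_le _ _ ?_
    intro i _
    refine (Polynomial.natDegree_monomial_le _).trans ?_
    have h1 := Finset.mem_Ico.1 i.2
    omega
  have hroot : ∀ x0 ∈ X0, g.eval x0 = 0 := by
    intro x0 hx0
    obtain ⟨hx00, y0, hy0⟩ := hX0 x0 hx0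
    let H : Polynomial κ := ∑ j : Fin p, Polynomial.monomial (j : ℕ)
      (∑ i : Finset.Ico (-(q : ℕ) : ℤ) vv, e (i, j) * x0 ^ (i : ℤ))
    have hH : H = 0 := by
      refine Polynomial.eq_zero_of_natDegree_lt_card_of_eval_eq_zero H
        (f := fun r : ZMod p => y0 + ZMod.castHom (dvd_refl p) κ r) ?_ ?_ ?_
      · intro r r' h
        have : ZMod.castHom (dvd_refl p) κ r = ZMod.castHom (dvd_refl p) κ r' := by
          simpa using h
        exact RingHom.injective _ this
      · intro r
        have hpt : (y0 + ZMod.castHom (dvd_refl p) κ r) ^ p = (y0 + ZMod.castHom (dvd_refl p) κ r)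
            + ∑ i ∈ Finset.Icc (-1 : ℤ) s, c i * x0 ^ i := by
          rw [add_pow_char, hy0, ← map_pow, ZMod.pow_card]; ring
        have h1 := hEP ⟨(x0, y0 + ZMod.castHom (dvd_refl p) κ r), hx00, hpt⟩
        rw [← he, map_sum] at h1
        rw [← h1]
        simp only [H, Polynomial.eval_finsetSum, Polynomial.eval_monomial]
        rw [Fintype.sum_prod_type_right]
        refine Finset.sum_congr rfl fun j _ => ?_
        rw [Finset.sum_mul]
        refine Finset.sum_congr rfl fun i _ => ?_
        rw [hfPs, hfPmon]
        ring
      · rw [ZMod.card]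
        have : H.natDegree ≤ p - 1 := by
          refine Polynomial.natDegree_sum_le_of_forall_le _ _ ?_
          intro j _
          refine (Polynomial.natDegree_monomial_le _).trans ?_
          have := j.2
          omega
        omega
    have h2 : ∑ i : Finset.Ico (-(q : ℕ) : ℤ) vv, e (i, j0) * x0 ^ (i : ℤ) = 0 := by
      have := congrArg (fun P => Polynomial.coeff P (j0 : ℕ)) hH
      simp only [H, Polynomial.finsetSum_coeff, Polynomial.coeff_monomial, Polynomial.coeff_zero]
        at this
      rw [Finset.sum_eq_single j0] at this
      · simpa using this
      · intro j _ hj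
        rw [if_neg]
        intro h
        exact hj (Fin.ext h)
      · simp
    simp only [g, Polynomial.eval_finsetSum, Polynomial.eval_monomial]
    have h3 : ∑ i : Finset.Ico (-(q : ℕ) : ℤ) vv, e (i, j0) * x0 ^ ((i : ℤ) + q).toNat
        = (∑ i : Finset.Ico (-(q : ℕ) : ℤ) vv, e (i, j0) * x0 ^ (i : ℤ)) * x0 ^ q := by
      rw [Finset.sum_mul]
      refine Finset.sum_congr rfl fun i _ => ?_
      rw [mul_assoc]
      congr 1
      have h1 := Finset.mem_Ico.1 i.2
      rw [← zpow_natCast, ← zpow_natCast x0 q, ← zpow_add₀ hx00]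
      congr 1
      omega
    rw [h3, h2, zero_mul]
  have hfin : X0.card ≤ g.natDegree := Polynomial.card_le_degree_of_subset_roots (by
    intro x0 hx0
    rw [Polynomial.mem_roots hg0]
    exact hroot x0 hx0)
  refine (hfin.trans hgdeg).trans ?_
  have hlq : l ≤ q := by rw [hqq]; nlinarith
  have : (vv + q).toNat = l + s * q + q * (q' + s + 3) := by
    have : vv + q = ((l + s * q + q * (q' + s + 3) : ℕ) : ℤ) := by
      rw [hvv]; push_cast; ring
    rw [this, Int.toNat_natCast]
  rw [this]
  nlinarith

end Kor

namespace Kor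

/-- additive Hilbert 90 for finite fields, by counting -/
theorem hilbert90 {κ : Type} [Field κ] [Fintype κ] [DecidableEq κ] (p : ℕ) [hp : Fact p.Prime]
    [CharP κ p] (N : ℕ) (hcard : Fintype.card κ = p ^ (N + 1)) (z : κ)
    (hz : ∑ t ∈ range (N + 1), z ^ p ^ t = 0) : ∃ y : κ, y ^ p = y + z := by
  classical
  let φ : κ →+ κ := (frobenius κ p).toAddMonoidHom - AddMonoidHom.id κ
  have hφ : ∀ y, φ y = y ^ p - y := fun y => rfl
  let I : Finset κ := univ.image φ
  let T : Polynomial κ := ∑ t ∈ range (N + 1), Polynomial.X ^ p ^ t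
  have hp1 := hp.out.one_lt
  have hTd : T.natDegree ≤ p ^ N := by
    refine Polynomial.natDegree_sum_le_of_forall_le _ _ fun t ht => ?_
    rw [Polynomial.natDegree_X_pow]
    exact Nat.pow_le_pow_right hp.out.pos (by simp at ht; omega)
  have hT0 : T ≠ 0 := by
    intro h
    have : T.coeff (p ^ N) = 1 := by
      simp only [T, Polynomial.finsetSum_coeff, Polynomial.coeff_X_pow]
      rw [Finset.sum_eq_single N]
      · simp
      · intro t _ ht
        rw [if_neg]
        intro h
        exact ht (Nat.pow_right_injective hp.out.two_le h).symm
      · simp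
    rw [h] at this
    simp at this
  have hI : I ⊆ T.roots.toFinset := by
    intro w hw
    obtain ⟨y, -, rfl⟩ := Finset.mem_image.1 hw
    rw [Multiset.mem_toFinset, Polynomial.mem_roots hT0, Polynomial.IsRoot.def]
    simp only [T, Polynomial.eval_finsetSum, Polynomial.eval_pow, Polynomial.eval_X]
    have : ∀ t ∈ range (N + 1), (φ y) ^ p ^ t = y ^ p ^ (t + 1) - y ^ p ^ t := by
      intro t _
      rw [hφ, sub_pow_char_pow, ← pow_mul, pow_succ']
    rw [Finset.sum_congr rfl this, Finset.sum_range_sub (fun t => y ^ p ^ t), ← hcard,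
      FiniteField.pow_card]
    simp
  have hcI : p ^ N ≤ I.card := by
    have h1 : (univ : Finset κ).card ≤ p * I.card := by
      refine Finset.card_le_mul_card_image _ _ ?_
      intro w hw
      obtain ⟨y0, -, rfl⟩ := Finset.mem_image.1 hw
      let P : Polynomial κ := Polynomial.X ^ p - (Polynomial.X + Polynomial.C (φ y0))
      have hPd : P.natDegree = p := by
        have hlt : (Polynomial.X + Polynomial.C (φ y0)).natDegree < (Polynomial.X ^ p : Polynomial κ).natDegree := by
          rw [Polynomial.natDegree_X_add_C, Polynomial.natDegree_X_pow]; exact hp1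
        rw [Polynomial.natDegree_sub_eq_left_of_natDegree_lt hlt, Polynomial.natDegree_X_pow]
      have hP0 : P ≠ 0 := by
        intro h; rw [h] at hPd; simp at hPd; exact hp.out.ne_zero hPd.symm
      calc _ ≤ P.roots.toFinset.card := by
            refine Finset.card_le_card fun y hy => ?_
            rw [Multiset.mem_toFinset, Polynomial.mem_roots hP0, Polynomial.IsRoot.def]
            have := (Finset.mem_filter.1 hy).2
            rw [hφ y] at this
            simp only [P, Polynomial.eval_sub, Polynomial.eval_add, Polynomial.eval_pow,
              Polynomial.eval_X, Polynomial.eval_C]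
            linear_combination this
        _ ≤ _ := Multiset.toFinset_card_le _
        _ ≤ _ := Polynomial.card_roots' _
        _ = p := hPd
    rw [Finset.card_univ, hcard, pow_succ'] at h1
    exact Nat.le_of_mul_le_mul_left h1 hp.out.pos
  have hEq : I = T.roots.toFinset := by
    refine Finset.eq_of_subset_of_card_le hI ?_
    exact ((Multiset.toFinset_card_le _).trans (Polynomial.card_roots' _)).trans (hTd.trans hcI)
  have hzI : z ∈ I := by
    rw [hEq, Multiset.mem_toFinset, Polynomial.mem_roots hT0, Polynomial.IsRoot.def]
    simpa only [T, Polynomial.eval_finsetSum, Polynomial.eval_pow, Polynomial.eval_X] using hz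
  obtain ⟨y, -, hy⟩ := Finset.mem_image.1 hzI
  exact ⟨y, by rw [← hy, hφ]; ring⟩

theorem count_trace {κ : Type} [Field κ] [Fintype κ] [DecidableEq κ] (p : ℕ) [hp : Fact p.Prime]
    [CharP κ p] (ν s : ℕ) (hcard : Fintype.card κ = (p ^ (ν + 1)) ^ 2) (hs0 : 0 < s) (hsp : s < p)
    (hbig : (s + 3) * (1 + p * s) < p ^ (ν + 1)) (hbig2 : s < p ^ ν)
    (c : ℤ → κ) (hcs : c s ≠ 0) (τ : κ) :
    (univ.filter fun x : κ => x ≠ 0 ∧ ∑ t ∈ range (2 * (ν + 1)),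
      (∑ i ∈ Finset.Icc (-1 : ℤ) s, c i * x ^ i) ^ p ^ t = τ).card
      ≤ p ^ (ν + 1) * p ^ ν + p ^ (ν + 1) * (2 * s + 5) := by
  by_cases hβ : ∃ β : κ, ∑ t ∈ range (2 * (ν + 1)), β ^ p ^ t = τ
  · obtain ⟨β, hβ⟩ := hβ
    refine stepanov_AS p ν s hcard hs0 hsp hbig hbig2 (fun i => c i - if i = 0 then β else 0) ?_ _ ?_
    · simpa [hs0.ne'] using hcs
    · intro x hx
      obtain ⟨hx0, hx⟩ := (Finset.mem_filter.1 hx).2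
      refine ⟨hx0, ?_⟩
      refine hilbert90 p (2 * ν + 1) ?_ _ ?_
      · rw [hcard, ← pow_mul]; congr 1; ring
      · have e1 : ∑ i ∈ Finset.Icc (-1 : ℤ) s, (c i - if i = 0 then β else 0) * x ^ i
            = (∑ i ∈ Finset.Icc (-1 : ℤ) s, c i * x ^ i) - β := by
          simp only [sub_mul, Finset.sum_sub_distrib, ite_mul, zero_mul]
          rw [Finset.sum_ite_eq', if_pos (by simp)]
          simp
        rw [e1, show 2 * ν + 1 + 1 = 2 * (ν + 1) by ring]
        simp only [sub_pow_char_pow, Finset.sum_sub_distrib]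
        rw [hx, hβ, sub_self]
  · rw [Finset.filter_eq_empty_iff.2]
    · simp
    · intro x _ h
      exact hβ ⟨_, h.2⟩

section
variable (p : ℕ) [hp : Fact p.Prime] {Ω : Type} [Field Ω] [IsAlgClosed Ω] [Algebra (ZMod p) Ω]

/-- nonzero elements of the field with `p ^ n` elements -/
def ufix (Ω : Type) [Field Ω] (n : ℕ) : Finset Ω := by
  classical
  exact ((Polynomial.X ^ p ^ n - Polynomial.X : Polynomial Ω).roots.toFinset).erase 0

theorem mem_ufix {n : ℕ} (hn : n ≠ 0) (x : Ω) : x ∈ ufix p Ω n ↔ x ≠ 0 ∧ x ^ p ^ n = x := by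
  classical
  unfold ufix
  rw [Finset.mem_erase, Multiset.mem_toFinset,
    Polynomial.mem_roots (FiniteField.X_pow_card_pow_sub_X_ne_zero Ω hn hp.out.one_lt)]
  simp [sub_eq_zero]

/-- the rational function -/
def ff (c : ℤ → ZMod p) (s : ℕ) (x : Ω) : Ω :=
  ∑ i ∈ Finset.Icc (-1 : ℤ) s, algebraMap (ZMod p) Ω (c i) * x ^ i

/-- the exponential sums over extensions -/
def SS (Ψ : AddChar Ω ℂ) (c : ℤ → ZMod p) (s n : ℕ) : ℂ :=
  ∑ x ∈ ufix p Ω n, Ψ (∑ t ∈ range n, (ff p c s x) ^ p ^ t)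

theorem SS_even_bound (Ψ : AddChar Ω ℂ) (hΨ : ∃ a : ZMod p, Ψ (algebraMap (ZMod p) Ω a) ≠ 1)
    (c : ℤ → ZMod p) (s : ℕ) (hs0 : 0 < s) (hsp : s < p) (hcs : c s ≠ 0) (ν : ℕ)
    (hbig : (s + 3) * (1 + p * s) < p ^ (ν + 1)) (hbig2 : s < p ^ ν) :
    ‖SS p Ψ c s (2 * (ν + 1))‖ ≤ (p * (2 * s + 5) + 1) * (p : ℝ) ^ (ν + 1) := by
  classical
  have hN : 2 * (ν + 1) ≠ 0 := by omega
  let κ := GaloisField p (2 * (ν + 1))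
  letI : Fintype κ := Fintype.ofFinite κ
  have hcard : Fintype.card κ = p ^ (2 * (ν + 1)) := by
    rw [← Nat.card_eq_fintype_card]; exact GaloisField.card p _ hN
  have hcard2 : Fintype.card κ = (p ^ (ν + 1)) ^ 2 := by rw [hcard, ← pow_mul]; congr 1; ring
  let ι : κ →ₐ[ZMod p] Ω := IsAlgClosed.lift
  have hι : Function.Injective ι := ι.toRingHom.injective
  have himg : ufix p Ω (2 * (ν + 1)) = (univ.filter fun x : κ => x ≠ 0).image ι := by
    symm
    refine Finset.eq_of_subset_of_card_le ?_ ?_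
    · intro w hw
      obtain ⟨x, hx, rfl⟩ := Finset.mem_image.1 hw
      rw [mem_ufix p hN, ← map_pow, ← hcard, FiniteField.pow_card]
      simpa using hx
    · rw [Finset.card_image_of_injective _ hι]
      have h1 : (univ.filter fun x : κ => x ≠ 0).card + 1 = p ^ (2 * (ν + 1)) := by
        rw [Finset.filter_ne' univ (0 : κ), Finset.card_erase_add_one (mem_univ _), card_univ, hcard]
      have h2 : (ufix p Ω (2 * (ν + 1))).card + 1 ≤ p ^ (2 * (ν + 1)) := by
        unfold ufix
        rw [Finset.card_erase_add_one]
        · calc _ ≤ _ := Multiset.toFinset_card_le _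
            _ ≤ _ := Polynomial.card_roots' _
            _ = _ := FiniteField.X_pow_card_pow_sub_X_natDegree_eq Ω hN hp.out.one_lt
        · rw [Multiset.mem_toFinset, Polynomial.mem_roots (FiniteField.X_pow_card_pow_sub_X_ne_zero Ω hN hp.out.one_lt)]
          simp [hp.out.ne_zero]
      omega
  let c' : ℤ → κ := fun i => algebraMap (ZMod p) κ (c i)
  let tr : κ → κ := fun z => ∑ t ∈ range (2 * (ν + 1)), z ^ p ^ t
  let F : κ → κ := fun x => ∑ i ∈ Finset.Icc (-1 : ℤ) s, c' i * x ^ i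
  have htr : ∀ z : κ, ∃ a : ZMod p, algebraMap (ZMod p) κ a = tr z := by
    intro z
    have h1 := FiniteField.algebraMap_trace_eq_sum_pow (ZMod p) κ z
    rw [GaloisField.finrank p hN] at h1
    exact ⟨_, h1.trans (by simp [tr, ZMod.card])⟩
  choose g hg using htr
  let ψ : AddChar (ZMod p) ℂ := Ψ.compAddMonoidHom (algebraMap (ZMod p) Ω).toAddMonoidHom
  have hψ : ψ ≠ 1 := by
    obtain ⟨a, ha⟩ := hΨ
    intro h
    apply ha
    have : ψ a = 1 := by rw [h]; rfl
    exact this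
  have hS : SS p Ψ c s (2 * (ν + 1)) = ∑ x ∈ univ.filter (fun x : κ => x ≠ 0), ψ (g (F x)) := by
    unfold SS
    rw [himg, Finset.sum_image (fun a _ b _ h => hι h)]
    refine Finset.sum_congr rfl fun x _ => ?_
    have e1 : ff p c s (ι x) = ι (F x) := by
      simp only [ff, F, c', map_sum, map_mul, map_zpow₀, AlgHom.commutes]
    have e2 : ∑ t ∈ range (2 * (ν + 1)), (ff p c s (ι x)) ^ p ^ t = algebraMap (ZMod p) Ω (g (F x)) := by
      rw [e1, ← AlgHom.commutes ι, hg]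
      simp only [tr, map_sum, map_pow]
    rw [e2]; rfl
  let Nn : ZMod p → ℕ := fun a => ((univ.filter fun x : κ => x ≠ 0).filter fun x => g (F x) = a).card
  have hS2 : SS p Ψ c s (2 * (ν + 1)) = ∑ a, (Nn a : ℂ) * ψ a := by
    rw [hS, ← Finset.sum_fiberwise_of_maps_to (g := fun x => g (F x)) (t := univ) (fun _ _ => mem_univ _)]
    refine Finset.sum_congr rfl fun a _ => ?_
    rw [Finset.sum_congr rfl (g := fun _ => ψ a)]
    · simp [Nn]
    · intro x hx
      rw [(Finset.mem_filter.1 hx).2]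
  have hsumN : ∑ a, Nn a + 1 = p ^ (2 * (ν + 1)) := by
    have := Finset.card_eq_sum_card_fiberwise (f := fun x => g (F x))
      (s := univ.filter fun x : κ => x ≠ 0) (t := univ) (fun _ _ => mem_univ _)
    have h1 : (univ.filter fun x : κ => x ≠ 0).card + 1 = p ^ (2 * (ν + 1)) := by
      rw [Finset.filter_ne' univ (0 : κ), Finset.card_erase_add_one (mem_univ _), card_univ, hcard]
    rw [← h1, this]
  set B : ℕ := p ^ (ν + 1) * p ^ ν + p ^ (ν + 1) * (2 * s + 5) with hB
  have hNB : ∀ a, Nn a ≤ B := by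
    intro a
    have h := count_trace p ν s hcard2 hs0 hsp hbig hbig2 c' (by simpa [c'] using hcs)
      (algebraMap (ZMod p) κ a)
    refine le_trans (Finset.card_le_card ?_) h
    intro x hx
    simp only [Finset.mem_filter, mem_univ, true_and] at hx ⊢
    refine ⟨hx.1, ?_⟩
    rw [← hx.2, hg]
  have hψn : ∀ a, ‖ψ a‖ = 1 := fun a => by
    exact AddChar.norm_apply ψ a
  have hS3 : SS p Ψ c s (2 * (ν + 1)) = ∑ a, ((Nn a : ℂ) - B) * ψ a := by
    simp only [sub_mul, Finset.sum_sub_distrib]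
    rw [← Finset.mul_sum, AddChar.sum_eq_zero_of_ne_one hψ, mul_zero, sub_zero, hS2]
  rw [hS3]
  refine (norm_sum_le _ _).trans ?_
  have h4 : ∀ a ∈ (univ : Finset (ZMod p)), ‖((Nn a : ℂ) - B) * ψ a‖ = (B : ℝ) - Nn a := by
    intro a _
    rw [norm_mul, hψn, mul_one, norm_sub_rev]
    have : ((B : ℂ) - Nn a) = (((B : ℝ) - Nn a : ℝ) : ℂ) := by push_cast; rfl
    rw [this, Complex.norm_real, Real.norm_of_nonneg]
    have := hNB a
    rw [sub_nonneg]; exact_mod_cast this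
  rw [Finset.sum_congr rfl h4, Finset.sum_sub_distrib, Finset.sum_const, card_univ, ZMod.card]
  have h5 : (∑ a, (Nn a : ℝ)) + 1 = (p : ℝ) ^ (2 * (ν + 1)) := by exact_mod_cast hsumN
  have h6 : (p : ℝ) ^ (2 * (ν + 1)) = p ^ (ν + 1) * (p ^ ν * p) := by ring
  have h7 : (1 : ℝ) ≤ p ^ (ν + 1) := one_le_pow₀ (by exact_mod_cast hp.out.one_le)
  rw [hB, nsmul_eq_mul]
  push_cast
  nlinarith

end

end Kor

namespace Kor

section
variable {k : Type} [Field k]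
open Polynomial in
theorem rev_X_sub_C (a : k) : (X - C a : k[X]).reverse = 1 - C a * X := by
  ext i
  rw [coeff_reverse, natDegree_X_sub_C]
  rcases i with _ | _ | i
  · simp [revAt_le]
  · simp [revAt_le, coeff_one]
  · rw [revAt_eq_self_of_lt (by omega)]
    simp [coeff_X, coeff_one]

open Polynomial in
theorem rev_prod (r : Multiset k) :
    ((r.map fun a => X - C a).prod).reverse = (r.map fun a => (1 - C a * X : k[X])).prod := by
  induction r using Multiset.induction_on with
  | empty => simp [reverse]
  | cons a r ih =>
    rw [Multiset.map_cons, Multiset.prod_cons, Multiset.map_cons, Multiset.prod_cons,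
      reverse_mul_of_domain, ih, rev_X_sub_C]

/-- power sum generating series -/
def pw (r : Multiset k) : PowerSeries k :=
  PowerSeries.mk fun i => if i = 0 then 0 else (r.map fun a => a ^ i).sum

theorem pw_cons (a : k) (r : Multiset k) :
    pw (a ::ₘ r) = PowerSeries.mk (fun i => if i = 0 then 0 else a ^ i) + pw r := by
  ext i
  simp only [pw, PowerSeries.coeff_mk, map_add, Multiset.map_cons, Multiset.sum_cons]
  split_ifs <;> simp

theorem one_sub_mul_geo (a : k) :
    ((1 : PowerSeries k) - PowerSeries.C a * PowerSeries.X) *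
      PowerSeries.mk (fun i => if i = 0 then 0 else a ^ i) = PowerSeries.C a * PowerSeries.X := by
  ext i
  rw [sub_mul, one_mul, mul_assoc, map_sub, PowerSeries.coeff_C_mul, PowerSeries.coeff_C_mul]
  rcases i with _ | _ | i
  · simp
  · simp [PowerSeries.coeff_succ_X_mul]
  · simp only [PowerSeries.coeff_succ_X_mul, PowerSeries.coeff_mk, PowerSeries.coeff_X]
    simp
    ring

theorem logder (r : Multiset k) (R : Polynomial k)
    (hR : R = (r.map fun a => (1 - Polynomial.C a * Polynomial.X : Polynomial k)).prod) :
    -(PowerSeries.X * (R.derivative : PowerSeries k)) = (R : PowerSeries k) * pw r := by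
  subst hR
  induction r using Multiset.induction_on with
  | empty =>
    have : pw (0 : Multiset k) = 0 := by ext i; simp [pw]
    simp [this]
  | cons a r ih =>
    rw [Multiset.map_cons, Multiset.prod_cons, Polynomial.derivative_mul, pw_cons]
    set R := (r.map fun a => (1 - Polynomial.C a * Polynomial.X : Polynomial k)).prod
    simp only [Polynomial.derivative_sub, Polynomial.derivative_one, Polynomial.derivative_mul,
      Polynomial.derivative_C, Polynomial.derivative_X, zero_mul, mul_one, zero_add, zero_sub,
      Polynomial.coe_add, Polynomial.coe_mul, Polynomial.coe_neg, Polynomial.coe_C, Polynomial.coe_sub,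
      Polynomial.coe_one, Polynomial.coe_X]
    have h := one_sub_mul_geo a
    linear_combination (1 - PowerSeries.C a * PowerSeries.X) * ih - (R : PowerSeries k) * h

theorem pw_coeff (r : Multiset k) (i : ℕ) (hi : i ≠ 0) :
    PowerSeries.coeff i (pw r) = (r.map fun a => a ^ i).sum := by simp [pw, hi]

open Polynomial in
/-- changing one coefficient: effect on power sums -/
theorem pw_shift (r r' : Multiset k) (t : k) (s : ℕ) (hs : 0 < s)
    (h : (r'.map fun a => (1 - C a * X : k[X])).prod = (r.map fun a => (1 - C a * X : k[X])).prod + C t * X ^ s)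
    (i : ℕ) (hi : i ≤ s) :
    PowerSeries.coeff i (pw r') = PowerSeries.coeff i (pw r) - if i = s then s * t else 0 := by
  have h1 := logder r _ rfl
  have h2 := logder r' _ rfl
  rw [h] at h2
  set R := (r.map fun a => (1 - C a * X : k[X])).prod with hR
  have hR0 : PowerSeries.constantCoeff (R : PowerSeries k) = 1 := by
    rw [← PowerSeries.coeff_zero_eq_constantCoeff_apply, Polynomial.coeff_coe, hR,
      Polynomial.coeff_zero_eq_eval_zero, Polynomial.eval_multiset_prod]
    simp
  have hsd : PowerSeries.X * ((derivative (C t * X ^ s : k[X]) : k[X]) : PowerSeries k) =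
      PowerSeries.X ^ s * PowerSeries.C (s * t) := by
    obtain ⟨s, rfl⟩ : ∃ s', s = s' + 1 := ⟨s - 1, by omega⟩
    rw [derivative_C_mul, derivative_X_pow]
    simp only [Polynomial.coe_mul, Polynomial.coe_C, Polynomial.coe_pow, Polynomial.coe_X, map_mul]
    simp
    ring
  have h3 : (R : PowerSeries k) * (pw r' - pw r) =
      PowerSeries.X ^ s * (-(PowerSeries.C (s * t)) - PowerSeries.C t * pw r') := by
    rw [Polynomial.derivative_add, Polynomial.coe_add, mul_add, hsd] at h2
    simp only [Polynomial.coe_add, Polynomial.coe_mul, Polynomial.coe_C, Polynomial.coe_pow,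
      Polynomial.coe_X] at h2
    linear_combination h1 - h2
  have hu : IsUnit (R : PowerSeries k) := by
    rw [PowerSeries.isUnit_iff_constantCoeff, hR0]; exact isUnit_one
  obtain ⟨u, hu⟩ := hu
  have h4 : pw r' - pw r = PowerSeries.X ^ s * ((↑u⁻¹ : PowerSeries k) * (-(PowerSeries.C (s * t)) - PowerSeries.C t * pw r')) := by
    rw [← hu] at h3
    rw [mul_left_comm, ← h3, Units.inv_mul_cancel_left]
  have hu0 : PowerSeries.constantCoeff (↑u⁻¹ : PowerSeries k) = 1 := by
    have := congrArg PowerSeries.constantCoeff (u.inv_mul)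
    rw [map_mul, hu, hR0, mul_one] at this
    simpa using this
  have h5 := congrArg (PowerSeries.coeff i) h4
  rw [PowerSeries.coeff_X_pow_mul', map_sub] at h5
  by_cases his : i = s
  · subst his
    have h0 : PowerSeries.constantCoeff (pw r') = 0 := by
      rw [← PowerSeries.coeff_zero_eq_constantCoeff_apply]; simp [pw]
    rw [if_pos le_rfl, Nat.sub_self, PowerSeries.coeff_zero_eq_constantCoeff_apply, map_mul, hu0,
      map_sub, map_neg] at h5
    simp [h0] at h5
    rw [if_pos rfl]
    linear_combination h5
  · rw [if_neg (by omega)] at h5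
    rw [if_neg his]
    linear_combination h5

theorem inv_sum (r : Multiset k) (h0 : ∀ a ∈ r, a ≠ 0) :
    ((r.map fun a => Polynomial.X - Polynomial.C a).prod).coeff 1 =
    -((r.map fun a => Polynomial.X - Polynomial.C a).prod).coeff 0 * (r.map fun a => a⁻¹).sum := by
  induction r using Multiset.induction_on with
  | empty => simp [Polynomial.coeff_one]
  | cons a r ih =>
    have ha := h0 a (by simp)
    have ih := ih fun b hb => h0 b (by simp [hb])
    rw [Multiset.map_cons, Multiset.prod_cons, Multiset.map_cons, Multiset.sum_cons]
    set F := (r.map fun a => Polynomial.X - Polynomial.C a).prod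
    rw [sub_mul, Polynomial.coeff_sub, Polynomial.coeff_sub, Polynomial.coeff_C_mul,
      Polynomial.coeff_C_mul, Polynomial.coeff_X_mul, ih, Polynomial.coeff_X_mul_zero]
    field_simp
    ring
end

end Kor

namespace Kor

section
variable (p : ℕ) [hp : Fact p.Prime] {Ω : Type} [Field Ω] [IsAlgClosed Ω] [Algebra (ZMod p) Ω]

open Polynomial

theorem Mon_finite (n : ℕ) :
    {F : (ZMod p)[X] | F.Monic ∧ F.natDegree = n ∧ F.coeff 0 ≠ 0}.Finite := by
  refine Set.Finite.of_injOn (f := fun F : (ZMod p)[X] => fun i : Fin n => F.coeff i)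
    (t := Set.univ) (fun _ _ => Set.mem_univ _) ?_ (Set.finite_univ)
  intro F hF G hG h
  ext i
  rcases lt_trichotomy i n with hi | hi | hi
  · exact congrFun h ⟨i, hi⟩
  · subst hi
    have h1 := hF.1.coeff_natDegree
    have h2 := hG.1.coeff_natDegree
    rw [hF.2.1] at h1
    rw [hG.2.1] at h2
    rw [h1, h2]
  · rw [coeff_eq_zero_of_natDegree_lt (by rw [hF.2.1]; exact hi),
      coeff_eq_zero_of_natDegree_lt (by rw [hG.2.1]; exact hi)]

/-- monic polynomials of degree `n` with nonzero constant term -/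
def Mon (n : ℕ) : Finset (ZMod p)[X] := (Mon_finite p n).toFinset

theorem mem_Mon {n : ℕ} {F : (ZMod p)[X]} :
    F ∈ Mon p n ↔ F.Monic ∧ F.natDegree = n ∧ F.coeff 0 ≠ 0 := by
  simp [Mon]

/-- roots in `Ω` -/
def rt (Ω : Type) [Field Ω] [Algebra (ZMod p) Ω] (F : (ZMod p)[X]) : Multiset Ω :=
  (F.map (algebraMap (ZMod p) Ω)).roots

theorem rt_mul {F G : (ZMod p)[X]} (hF : F ≠ 0) (hG : G ≠ 0) :
    rt p Ω (F * G) = rt p Ω F + rt p Ω G := by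
  unfold rt
  rw [Polynomial.map_mul, Polynomial.roots_mul]
  exact mul_ne_zero ((Polynomial.map_ne_zero_iff (algebraMap (ZMod p) Ω).injective).2 hF)
    ((Polynomial.map_ne_zero_iff (algebraMap (ZMod p) Ω).injective).2 hG)

theorem rt_prod {F : (ZMod p)[X]} (hF : F.Monic) :
    ((rt p Ω F).map fun a => X - C a).prod = F.map (algebraMap (ZMod p) Ω) := by
  unfold rt
  rw [← (IsAlgClosed.splits (F.map (algebraMap (ZMod p) Ω))).eq_prod_roots_of_monic (hF.map _)]

theorem rt_card {F : (ZMod p)[X]} (hF : F.Monic) : Multiset.card (rt p Ω F) = F.natDegree := by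
  unfold rt
  rw [← (IsAlgClosed.splits (F.map (algebraMap (ZMod p) Ω))).natDegree_eq_card_roots,
    hF.natDegree_map]

theorem rt_ne_zero {n : ℕ} {F : (ZMod p)[X]} (hF : F ∈ Mon p n) : ∀ a ∈ rt p Ω F, a ≠ 0 := by
  rintro a ha rfl
  rw [mem_Mon] at hF
  have := (Polynomial.mem_roots (hF.1.map _).ne_zero).1 ha
  rw [Polynomial.IsRoot.def, ← Polynomial.coeff_zero_eq_eval_zero, Polynomial.coeff_map] at this
  exact hF.2.2 (by simpa using this)

/-- the multiplicative character on monic polynomials -/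
def chi (Ψ : AddChar Ω ℂ) (c : ℤ → ZMod p) (s : ℕ) (F : (ZMod p)[X]) : ℂ :=
  Ψ (((rt p Ω F).map (ff p c s)).sum)

theorem chi_mul (Ψ : AddChar Ω ℂ) (c : ℤ → ZMod p) (s : ℕ) {F G : (ZMod p)[X]} (hF : F ≠ 0)
    (hG : G ≠ 0) : chi p Ψ c s (F * G) = chi p Ψ c s F * chi p Ψ c s G := by
  unfold chi
  rw [rt_mul p hF hG, Multiset.map_add, Multiset.sum_add, AddChar.map_add_eq_mul]

theorem ff_sum (c : ℤ → ZMod p) (s : ℕ) (r : Multiset Ω) :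
    (r.map (ff p c s)).sum = ∑ i ∈ Finset.Icc (-1 : ℤ) s, algebraMap (ZMod p) Ω (c i) *
      (r.map fun a => a ^ i).sum := by
  induction r using Multiset.induction_on with
  | empty => simp
  | cons a r ih =>
    simp only [Multiset.map_cons, Multiset.sum_cons, ih, mul_add, Finset.sum_add_distrib]
    rfl

theorem shift_mem {n s : ℕ} (hs : 0 < s) (hn : s + 2 ≤ n) (t : ZMod p) {F : (ZMod p)[X]}
    (hF : F ∈ Mon p n) : F + C t * X ^ (n - s) ∈ Mon p n := by
  rw [mem_Mon] at hF ⊢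
  have hd : (C t * X ^ (n - s)).degree < F.degree := by
    refine (degree_C_mul_X_pow_le _ _).trans_lt ?_
    rw [degree_eq_natDegree hF.1.ne_zero, hF.2.1]
    exact_mod_cast (by omega)
  refine ⟨hF.1.add_of_left hd, ?_, ?_⟩
  · rw [natDegree_add_eq_left_of_degree_lt hd, hF.2.1]
  · rw [coeff_add, coeff_C_mul, coeff_X_pow, if_neg (by omega)]
    simpa using hF.2.2

theorem chi_shift (Ψ : AddChar Ω ℂ) (c : ℤ → ZMod p) {n s : ℕ} (hs : 0 < s) (hn : s + 2 ≤ n)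
    (t : ZMod p) {F : (ZMod p)[X]} (hF : F ∈ Mon p n) :
    chi p Ψ c s (F + C t * X ^ (n - s)) =
      chi p Ψ c s F * Ψ (algebraMap (ZMod p) Ω (-(c s * s) * t)) := by
  have hG := shift_mem p hs hn t hF
  set G := F + C t * X ^ (n - s) with hGdef
  have hF' := (mem_Mon p).1 hF
  have hG' := (mem_Mon p).1 hG
  unfold chi
  rw [← AddChar.map_add_eq_mul, ff_sum, ff_sum]
  congr 1
  have hrev : (((rt p Ω G).map fun a => (1 - C a * X : Polynomial Ω)).prod) =
      ((rt p Ω F).map fun a => (1 - C a * X : Polynomial Ω)).prod + C (algebraMap (ZMod p) Ω t) * X ^ s := by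
    rw [← rev_prod, ← rev_prod, rt_prod p hG'.1, rt_prod p hF'.1]
    ext i
    rw [coeff_add, coeff_reverse, coeff_reverse, hG'.1.natDegree_map, hF'.1.natDegree_map, hG'.2.1,
      hF'.2.1, hGdef, Polynomial.map_add, coeff_add, coeff_map, coeff_map]
    congr 1
    rw [coeff_C_mul, coeff_C_mul, coeff_X_pow, coeff_X_pow]
    have : revAt n i = n - s ↔ i = s := by
      by_cases hi : i ≤ n
      · rw [revAt_le hi]; omega
      · rw [revAt_eq_self_of_lt (by omega)]; omega
    simp only [this]
    split_ifs <;> simp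
  have hsh := pw_shift _ _ _ s hs hrev
  have hpos : ∀ i ∈ Finset.Icc (-1 : ℤ) s, ((rt p Ω G).map fun a => a ^ i).sum =
      ((rt p Ω F).map fun a => a ^ i).sum - if i = s then s * (algebraMap (ZMod p) Ω t) else 0 := by
    intro i hi
    rw [Finset.mem_Icc] at hi
    rcases lt_trichotomy i 0 with h | h | h
    · have : i = -1 := by omega
      subst this
      rw [if_neg (by omega), sub_zero]
      have h1 := inv_sum _ (rt_ne_zero (Ω := Ω) p hF)
      have h2 := inv_sum _ (rt_ne_zero (Ω := Ω) p hG)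
      rw [rt_prod p hF'.1, coeff_map, coeff_map] at h1
      rw [rt_prod p hG'.1, coeff_map, coeff_map] at h2
      have e0 : G.coeff 0 = F.coeff 0 := by
        rw [hGdef, coeff_add, coeff_C_mul, coeff_X_pow, if_neg (by omega)]; simp
      have e1 : G.coeff 1 = F.coeff 1 := by
        rw [hGdef, coeff_add, coeff_C_mul, coeff_X_pow, if_neg (by omega)]; simp
      rw [e0, e1, h1] at h2
      have hne : -(algebraMap (ZMod p) Ω) (F.coeff 0) ≠ 0 := by
        rw [neg_ne_zero]; simpa using hF'.2.2
      simpa using (mul_left_cancel₀ hne h2).symm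
    · subst h
      rw [if_neg (by omega), sub_zero]
      simp only [zpow_zero, Multiset.map_const', Multiset.sum_replicate]
      rw [rt_card p hF'.1, rt_card p hG'.1, hF'.2.1, hG'.2.1]
    · obtain ⟨j, rfl⟩ := Int.eq_ofNat_of_zero_le h.le
      have h1 := hsh j (by exact_mod_cast hi.2)
      rw [pw_coeff _ _ (by omega), pw_coeff _ _ (by omega)] at h1
      simpa using h1
  rw [Finset.sum_congr rfl (fun i hi => by rw [hpos i hi])]
  simp only [mul_sub, Finset.sum_sub_distrib, mul_ite, mul_zero]
  rw [Finset.sum_ite_eq', if_pos (by simp)]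
  simp only [map_mul, map_neg, map_natCast]
  ring

/-- coefficients of the L-function -/
def AA (Ψ : AddChar Ω ℂ) (c : ℤ → ZMod p) (s n : ℕ) : ℂ := ∑ F ∈ Mon p n, chi p Ψ c s F

theorem AA_zero (Ψ : AddChar Ω ℂ) (c : ℤ → ZMod p) (s : ℕ) : AA p Ψ c s 0 = 1 := by
  have : Mon p 0 = {1} := by
    ext F
    rw [mem_Mon, Finset.mem_singleton]
    constructor
    · rintro ⟨h1, h2, -⟩
      exact h1.natDegree_eq_zero.1 h2
    · rintro rfl
      simp [monic_one]
  unfold AA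
  rw [this, Finset.sum_singleton]
  simp [chi, rt]

theorem AA_vanish (Ψ : AddChar Ω ℂ) (hΨ : ∃ a : ZMod p, Ψ (algebraMap (ZMod p) Ω a) ≠ 1)
    (c : ℤ → ZMod p) {n s : ℕ} (hs : 0 < s) (hsp : s < p) (hcs : c s ≠ 0) (hn : s + 2 ≤ n) :
    AA p Ψ c s n = 0 := by
  obtain ⟨a, ha⟩ := hΨ
  have hu : -(c s * s) ≠ 0 := by
    rw [neg_ne_zero]
    refine mul_ne_zero hcs ?_
    intro h
    rw [ZMod.natCast_eq_zero_iff] at h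
    exact absurd (Nat.le_of_dvd hs h) (by omega)
  set t := a / (-(c s * s)) with ht
  have key : AA p Ψ c s n = AA p Ψ c s n * Ψ (algebraMap (ZMod p) Ω a) := by
    conv_lhs => unfold AA
    rw [← Finset.sum_bij (i := fun F (_ : F ∈ Mon p n) => F + C t * X ^ (n - s))
      (f := fun F => chi p Ψ c s (F + C t * X ^ (n - s)))
      (fun F hF => shift_mem p hs hn t hF) (fun F _ G _ h => add_right_cancel h)
      (fun G hG => ⟨G + C (-t) * X ^ (n - s), shift_mem p hs hn (-t) hG, by simp⟩)
      (fun F _ => rfl)]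
    unfold AA
    rw [Finset.sum_mul]
    refine Finset.sum_congr rfl fun F hF => ?_
    rw [chi_shift p Ψ c hs hn t hF, ht, mul_div_cancel₀ _ hu]
  have : AA p Ψ c s n * (Ψ (algebraMap (ZMod p) Ω a) - 1) = 0 := by
    linear_combination -key
  exact (mul_eq_zero.1 this).resolve_right (sub_ne_zero.2 ha)

end

end Kor

namespace Kor

section
variable (p : ℕ) [hp : Fact p.Prime] {Ω : Type} [Field Ω] [IsAlgClosed Ω] [Algebra (ZMod p) Ω]

open Polynomial

/-- product over the Frobenius orbit -/
def NN (i : ℕ) (x : Ω) : Polynomial Ω := ∏ t ∈ range i, (X - C (x ^ p ^ t))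

theorem NN_monic (i : ℕ) (x : Ω) : (NN p i x).Monic := monic_prod_of_monic _ _ fun _ _ => monic_X_sub_C _

theorem NN_natDegree (i : ℕ) (x : Ω) : (NN p i x).natDegree = i := by
  unfold NN
  rw [natDegree_prod_of_monic _ _ fun _ _ => monic_X_sub_C _]
  simp only [natDegree_X_sub_C]
  simp

theorem NN_mul (d k : ℕ) (x : Ω) (hx : x ^ p ^ d = x) : NN p (d * k) x = NN p d x ^ k := by
  induction k with
  | zero => simp [NN]
  | succ k ih =>
    have hk : ∀ k, x ^ p ^ (d * k) = x := by
      intro k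
      induction k with
      | zero => simp
      | succ k ih => rw [Nat.mul_succ, pow_add, pow_mul, ih, hx]
    rw [pow_succ, ← ih]
    unfold NN
    rw [Nat.mul_succ, Finset.prod_range_add]
    congr 1
    refine Finset.prod_congr rfl fun t _ => ?_
    rw [pow_add, pow_mul, hk]

theorem charP_Ω : CharP Ω p := charP_of_injective_algebraMap (algebraMap (ZMod p) Ω).injective p

theorem mem_range_of_frob (a : Ω) (ha : a ^ p = a) : a ∈ Set.range (algebraMap (ZMod p) Ω) := by
  classical
  have hne : (X ^ p - X : Polynomial Ω) ≠ 0 := FiniteField.X_pow_card_sub_X_ne_zero Ω hp.out.one_lt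
  have h1 : (univ : Finset (ZMod p)).image (algebraMap (ZMod p) Ω) = (X ^ p - X : Polynomial Ω).roots.toFinset := by
    refine Finset.eq_of_subset_of_card_le ?_ ?_
    · intro w hw
      obtain ⟨b, -, rfl⟩ := Finset.mem_image.1 hw
      rw [Multiset.mem_toFinset, mem_roots hne]
      simp [← map_pow, ZMod.pow_card]
    · rw [Finset.card_image_of_injective _ (algebraMap (ZMod p) Ω).injective, card_univ, ZMod.card]
      calc _ ≤ _ := Multiset.toFinset_card_le _
        _ ≤ _ := Polynomial.card_roots' _
        _ = p := FiniteField.X_pow_card_sub_X_natDegree_eq Ω hp.out.one_lt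
  have h2 : a ∈ (X ^ p - X : Polynomial Ω).roots.toFinset := by
    rw [Multiset.mem_toFinset, mem_roots hne]
    simp [ha]
  rw [← h1] at h2
  obtain ⟨b, -, hb⟩ := Finset.mem_image.1 h2
  exact ⟨b, hb⟩

theorem exists_lift (i : ℕ) (x : Ω) (hx : x ^ p ^ i = x) :
    ∃ G : (ZMod p)[X], G.map (algebraMap (ZMod p) Ω) = NN p i x := by
  have := charP_Ω p (Ω := Ω)
  rw [← mem_lifts, lifts_iff_coeff_lifts]
  have h : (NN p i x).map (frobenius Ω p) = NN p i x := by
    unfold NN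
    rw [Polynomial.map_prod]
    have e : ∀ t ∈ range i, (X - C (x ^ p ^ t)).map (frobenius Ω p) = X - C (x ^ p ^ (t + 1)) := by
      intro t _
      simp [frobenius_def, ← pow_mul, pow_succ, mul_comm]
    rw [Finset.prod_congr rfl e]
    have h1 := Finset.prod_range_succ (fun t => (X - C (x ^ p ^ t) : Polynomial Ω)) i
    have h2 := Finset.prod_range_succ' (fun t => (X - C (x ^ p ^ t) : Polynomial Ω)) i
    rw [h2, hx] at h1
    have h3 : (X - C (x ^ p ^ 0) : Polynomial Ω) = X - C x := by simp
    rw [h3] at h1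
    exact mul_right_cancel₀ (X_sub_C_ne_zero x) h1
  intro n
  apply mem_range_of_frob
  have := congrArg (fun P => P.coeff n) h
  simpa [frobenius_def] using this

theorem ff_frob (c : ℤ → ZMod p) (s : ℕ) (x : Ω) (t : ℕ) :
    ff p c s (x ^ p ^ t) = (ff p c s x) ^ p ^ t := by
  have := charP_Ω p (Ω := Ω)
  unfold ff
  rw [sum_pow_char_pow]
  refine Finset.sum_congr rfl fun i _ => ?_
  rw [mul_pow, ← map_pow, ZMod.pow_card_pow]
  congr 1
  rw [← zpow_natCast, ← zpow_natCast, ← zpow_mul, ← zpow_mul, mul_comm]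

theorem chi_NN (Ψ : AddChar Ω ℂ) (c : ℤ → ZMod p) (s i : ℕ) (x : Ω) (G : (ZMod p)[X])
    (hG : G.map (algebraMap (ZMod p) Ω) = NN p i x) :
    chi p Ψ c s G = Ψ (∑ t ∈ range i, (ff p c s x) ^ p ^ t) := by
  unfold chi rt
  rw [hG]
  congr 1
  have : NN p i x = ((((range i).val.map fun t => x ^ p ^ t)).map fun a => X - C a).prod := by
    rw [Multiset.map_map]; rfl
  rw [this, roots_multiset_prod_X_sub_C, Multiset.map_map]
  refine Finset.sum_congr rfl fun t _ => ?_
  exact ff_frob p c s x t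

theorem frob_dvd (F : (ZMod p)[X]) (x : Ω) (k t : ℕ)
    (h : (X - C x) ^ k ∣ F.map (algebraMap (ZMod p) Ω)) :
    (X - C (x ^ p ^ t)) ^ k ∣ F.map (algebraMap (ZMod p) Ω) := by
  have := charP_Ω p (Ω := Ω)
  induction t with
  | zero => simpa using h
  | succ t ih =>
    have h1 := Polynomial.map_dvd (frobenius Ω p) ih
    rw [Polynomial.map_map, Subsingleton.elim ((frobenius Ω p).comp (algebraMap (ZMod p) Ω))
      (algebraMap (ZMod p) Ω)] at h1
    convert h1 using 1
    simp [frobenius_def, ← pow_mul, pow_succ, mul_comm]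

theorem root_periodic (n : ℕ) (F : (ZMod p)[X]) (hF : F ∈ Mon p n) (x : Ω) (hx : x ∈ rt p Ω F) :
    ∃ i, 0 < i ∧ x ^ p ^ i = x := by
  classical
  have := charP_Ω p (Ω := Ω)
  have hF0 : F.map (algebraMap (ZMod p) Ω) ≠ 0 := (((mem_Mon p).1 hF).1.map _).ne_zero
  have hmem : ∀ t, x ^ p ^ t ∈ (rt p Ω F).toFinset := by
    intro t
    rw [Multiset.mem_toFinset]
    unfold rt at hx ⊢
    rw [mem_roots hF0, ← dvd_iff_isRoot] at hx ⊢
    simpa using frob_dvd p F x 1 t (by simpa using hx)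
  have hninj : ¬ Function.Injective (fun t : ℕ => (⟨x ^ p ^ t, hmem t⟩ : (rt p Ω F).toFinset)) :=
    not_injective_infinite_finite _
  have key : ∀ a b : ℕ, a < b → x ^ p ^ a = x ^ p ^ b → ∃ i, 0 < i ∧ x ^ p ^ i = x := by
    intro a b hab h
    refine ⟨b - a, by omega, ?_⟩
    apply iterateFrobenius_inj Ω p a
    rw [iterateFrobenius_def, iterateFrobenius_def, ← pow_mul, ← pow_add, h]
    congr 2; omega
  rw [Function.Injective] at hninj
  push Not at hninj
  obtain ⟨a, b, h, hab⟩ := hninj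
  have h : x ^ p ^ a = x ^ p ^ b := congrArg Subtype.val h
  rcases lt_or_gt_of_ne hab with h1 | h1
  · exact key a b h1 h
  · exact key b a h1 h.symm

theorem count_one (n : ℕ) (F : (ZMod p)[X]) (hF : F ∈ Mon p n) (x : Ω) (hx : x ∈ rt p Ω F) [DecidableEq Ω]
    [DecidablePred fun i => x ^ p ^ i = x ∧ NN p i x ∣ F.map (algebraMap (ZMod p) Ω)] :
    ((Icc 1 n).filter fun i => x ^ p ^ i = x ∧ NN p i x ∣ F.map (algebraMap (ZMod p) Ω)).card
      = (rt p Ω F).count x := by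
  obtain ⟨i0, hi0, hxi0⟩ := root_periodic p n F hF x hx
  have hit : ∀ i, (fun z : Ω => z ^ p)^[i] x = x ^ p ^ i := by
    intro i; rw [pow_iterate]
  set d := Function.minimalPeriod (fun z : Ω => z ^ p) x with hd
  have hper : ∀ i, x ^ p ^ i = x ↔ d ∣ i := by
    intro i
    rw [← hit, hd, ← Function.isPeriodicPt_iff_minimalPeriod_dvd]
    rfl
  have hd0 : 0 < d := Nat.pos_of_dvd_of_pos ((hper i0).1 hxi0) hi0
  have hxd : x ^ p ^ d = x := (hper d).2 dvd_rfl
  have hF0 : F.map (algebraMap (ZMod p) Ω) ≠ 0 := (((mem_Mon p).1 hF).1.map _).ne_zero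
  have hset : ((Icc 1 n).filter fun i => x ^ p ^ i = x ∧ NN p i x ∣ F.map (algebraMap (ZMod p) Ω))
      = (Icc 1 ((rt p Ω F).count x)).image (fun k => d * k) := by
    ext i
    simp only [Finset.mem_filter, Finset.mem_Icc, Finset.mem_image]
    constructor
    · rintro ⟨⟨h1, h2⟩, h3, h4⟩
      obtain ⟨k, rfl⟩ := (hper i).1 h3
      refine ⟨k, ⟨Nat.pos_of_mul_pos_left h1, ?_⟩, rfl⟩
      rw [NN_mul p d k x hxd] at h4
      unfold rt
      rw [count_roots, le_rootMultiplicity_iff hF0]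
      refine dvd_trans (pow_dvd_pow_of_dvd ?_ k) h4
      unfold NN
      have := Finset.dvd_prod_of_mem (fun t => (X - C (x ^ p ^ t) : Polynomial Ω)) (Finset.mem_range.2 hd0)
      simpa using this
    · rintro ⟨k, ⟨h1, h2⟩, rfl⟩
      have hdv : NN p (d * k) x ∣ F.map (algebraMap (ZMod p) Ω) := by
        rw [NN_mul p d k x hxd]
        unfold NN
        rw [← Finset.prod_pow]
        unfold rt at h2
        rw [count_roots, le_rootMultiplicity_iff hF0] at h2
        refine Finset.prod_dvd_of_coprime ?_ ?_
        · intro a ha b hb hab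
          refine IsCoprime.pow ?_
          refine isCoprime_X_sub_C_of_isUnit_sub ?_
          rw [isUnit_iff_ne_zero, sub_ne_zero, ← hit, ← hit]
          intro h
          exact hab (Function.iterate_injOn_Iio_minimalPeriod (by simpa [hd] using ha) (by simpa [hd] using hb) h)
        · intro t _
          exact frob_dvd p F x k t h2
      refine ⟨⟨Nat.mul_pos hd0 h1, ?_⟩, (hper _).2 (dvd_mul_right _ _), hdv⟩
      have := natDegree_le_of_dvd hdv hF0
      rwa [NN_natDegree, ((mem_Mon p).1 hF).1.natDegree_map, ((mem_Mon p).1 hF).2.1] at this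
  rw [hset, Finset.card_image_of_injective _ (fun a b h => Nat.eq_of_mul_eq_mul_left hd0 h)]
  simp

theorem count_all (n : ℕ) (F : (ZMod p)[X]) (hF : F ∈ Mon p n)
    [∀ i, DecidablePred fun x : Ω => NN p i x ∣ F.map (algebraMap (ZMod p) Ω)] :
    ∑ i ∈ Icc 1 n, ((ufix p Ω i).filter fun x => NN p i x ∣ F.map (algebraMap (ZMod p) Ω)).card = n := by
  classical
  have hF' := (mem_Mon p).1 hF
  have hF0 : F.map (algebraMap (ZMod p) Ω) ≠ 0 := (hF'.1.map _).ne_zero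
  have h1 : ∀ i ∈ Icc 1 n, ((ufix p Ω i).filter fun x => NN p i x ∣ F.map (algebraMap (ZMod p) Ω)).card
      = ∑ x ∈ (rt p Ω F).toFinset, if x ^ p ^ i = x ∧ NN p i x ∣ F.map (algebraMap (ZMod p) Ω) then 1 else 0 := by
    intro i hi
    rw [← Finset.card_filter]
    congr 1
    ext x
    have hi0 : i ≠ 0 := by simp at hi; omega
    rw [Finset.mem_filter, Finset.mem_filter, mem_ufix p hi0, Multiset.mem_toFinset]
    constructor
    · rintro ⟨⟨h1, h2⟩, h3⟩
      refine ⟨?_, h2, h3⟩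
      unfold rt
      rw [mem_roots hF0, ← dvd_iff_isRoot]
      refine dvd_trans ?_ h3
      unfold NN
      have := Finset.dvd_prod_of_mem (fun t => (X - C (x ^ p ^ t) : Polynomial Ω))
        (Finset.mem_range.2 (Nat.pos_of_ne_zero hi0))
      simpa using this
    · rintro ⟨h1, h2, h3⟩
      exact ⟨⟨rt_ne_zero p hF x h1, h2⟩, h3⟩
  rw [Finset.sum_congr rfl h1, Finset.sum_comm]
  have h2 : ∀ x ∈ (rt p Ω F).toFinset, (∑ i ∈ Icc 1 n,
      if x ^ p ^ i = x ∧ NN p i x ∣ F.map (algebraMap (ZMod p) Ω) then 1 else 0) = (rt p Ω F).count x := by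
    intro x hx
    rw [← Finset.card_filter]
    exact count_one p n F hF x (Multiset.mem_toFinset.1 hx)
  rw [Finset.sum_congr rfl h2, Multiset.toFinset_sum_count_eq, rt_card p hF'.1, hF'.2.1]

theorem AA_rec (Ψ : AddChar Ω ℂ) (c : ℤ → ZMod p) (s n : ℕ) :
    (n : ℂ) * AA p Ψ c s n = ∑ i ∈ Icc 1 n, SS p Ψ c s i * AA p Ψ c s (n - i) := by
  classical
  have h1 : ∀ i ∈ Icc 1 n, SS p Ψ c s i * AA p Ψ c s (n - i) =
      ∑ F ∈ Mon p n, (((ufix p Ω i).filter fun x => NN p i x ∣ F.map (algebraMap (ZMod p) Ω)).card : ℂ)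
        * chi p Ψ c s F := by
    intro i hi
    rw [Finset.mem_Icc] at hi
    have hi0 : i ≠ 0 := by omega
    have e1 : ∀ F ∈ Mon p n, (((ufix p Ω i).filter fun x => NN p i x ∣ F.map (algebraMap (ZMod p) Ω)).card : ℂ)
        * chi p Ψ c s F = ∑ x ∈ ufix p Ω i, if NN p i x ∣ F.map (algebraMap (ZMod p) Ω) then chi p Ψ c s F else 0 := by
      intro F _
      rw [← Finset.sum_filter, Finset.sum_const, nsmul_eq_mul]
    rw [Finset.sum_congr rfl e1, Finset.sum_comm]
    unfold SS
    rw [Finset.sum_mul]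
    refine Finset.sum_congr rfl fun x hx => ?_
    rw [mem_ufix p hi0] at hx
    obtain ⟨G, hG⟩ := exists_lift p i x hx.2
    have hGm : G.Monic := by
      have := NN_monic p i x
      rw [← hG] at this
      exact Polynomial.monic_of_injective (algebraMap (ZMod p) Ω).injective this
    have hGd : G.natDegree = i := by
      rw [← hGm.natDegree_map (algebraMap (ZMod p) Ω), hG, NN_natDegree]
    have hG0 : G.coeff 0 ≠ 0 := by
      intro h
      have h2 : (NN p i x).coeff 0 = 0 := by rw [← hG, coeff_map, h, map_zero]
      rw [coeff_zero_eq_eval_zero] at h2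
      unfold NN at h2
      rw [eval_prod, Finset.prod_eq_zero_iff] at h2
      obtain ⟨t, -, ht⟩ := h2
      simp at ht
      exact hx.1 ht.1
    rw [← chi_NN p Ψ c s i x G hG, ← Finset.sum_filter]
    unfold AA
    rw [Finset.mul_sum]
    refine Finset.sum_bij (fun H _ => G * H) ?_ ?_ ?_ ?_
    · intro H hH
      rw [mem_Mon] at hH
      rw [Finset.mem_filter, mem_Mon, ← hG, map_dvd_map']
      refine ⟨⟨hGm.mul hH.1, ?_, ?_⟩, dvd_mul_right _ _⟩
      · rw [hGm.natDegree_mul hH.1, hGd, hH.2.1]; omega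
      · rw [mul_coeff_zero]; exact mul_ne_zero hG0 hH.2.2
    · intro H _ H' _ h
      exact mul_left_cancel₀ hGm.ne_zero h
    · intro F hF
      rw [Finset.mem_filter, mem_Mon, ← hG, map_dvd_map'] at hF
      obtain ⟨⟨h1, h2, h3⟩, H, rfl⟩ := hF
      have hHm := hGm.of_mul_monic_left h1
      refine ⟨H, ?_, rfl⟩
      rw [mem_Mon]
      rw [hGm.natDegree_mul hHm, hGd] at h2
      rw [mul_coeff_zero] at h3
      exact ⟨hHm, by omega, right_ne_zero_of_mul h3⟩
    · intro H hH
      rw [chi_mul p Ψ c s hGm.ne_zero ((mem_Mon p).1 hH).1.ne_zero]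
  rw [Finset.sum_congr rfl h1, Finset.sum_comm]
  unfold AA
  rw [Finset.mul_sum]
  refine Finset.sum_congr rfl fun F hF => ?_
  rw [← Finset.sum_mul]
  congr 1
  have := count_all (Ω := Ω) p n F hF
  exact_mod_cast this.symm

end

end Kor

namespace Kor

theorem isolate (r : Multiset ℂ) (K B : ℝ) (hB : 0 < B) (n0 : ℕ)
    (h : ∀ n ≥ n0, ‖(r.map fun z => z ^ n).sum‖ ≤ K * B ^ n) : ∀ z ∈ r, ‖z‖ ≤ B := by
  classical
  intro z0 hz0
  let Q : Polynomial ℂ := ∏ z ∈ r.toFinset.erase z0, (Polynomial.X - Polynomial.C z)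
  have hQ : ∀ z ∈ r.toFinset, z ≠ z0 → Q.eval z = 0 := by
    intro z hz hne
    simp only [Q, Polynomial.eval_prod]
    refine Finset.prod_eq_zero (Finset.mem_erase.2 ⟨hne, hz⟩) (by simp)
  have hQ0 : Q.eval z0 ≠ 0 := by
    simp only [Q, Polynomial.eval_prod]
    rw [Finset.prod_ne_zero_iff]
    intro z hz
    simp only [Polynomial.eval_sub, Polynomial.eval_X, Polynomial.eval_C]
    exact sub_ne_zero.2 (Finset.mem_erase.1 hz).1.symm
  have key : ∀ n, ∑ j ∈ range (Q.natDegree + 1), Q.coeff j * (r.map fun z => z ^ (n + j)).sum =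
      r.count z0 * (z0 ^ n * Q.eval z0) := by
    intro n
    have e1 : ∑ j ∈ range (Q.natDegree + 1), Q.coeff j * (r.map fun z => z ^ (n + j)).sum =
        (r.map fun z => z ^ n * Q.eval z).sum := by
      simp only [Finset.sum_multiset_map_count, Finset.mul_sum]
      rw [Finset.sum_comm]
      refine Finset.sum_congr rfl fun z _ => ?_
      rw [Polynomial.eval_eq_sum_range, Finset.mul_sum, Finset.smul_sum]
      refine Finset.sum_congr rfl fun j _ => ?_
      simp only [nsmul_eq_mul, pow_add]
      ring
    rw [e1, Finset.sum_multiset_map_count, Finset.sum_eq_single z0]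
    · simp
    · intro z hz hne
      rw [hQ z hz hne]; simp
    · intro hn; exact absurd (Multiset.mem_toFinset.2 hz0) hn
  by_contra hcon
  push Not at hcon
  set D := ∑ j ∈ range (Q.natDegree + 1), ‖Q.coeff j‖ * (K * B ^ j) with hD
  have hbd : ∀ n ≥ n0, ‖z0‖ ^ n * ‖Q.eval z0‖ ≤ D * B ^ n := by
    intro n hn
    have h1 : ‖∑ j ∈ range (Q.natDegree + 1), Q.coeff j * (r.map fun z => z ^ (n + j)).sum‖ ≤ D * B ^ n := by
      rw [hD, Finset.sum_mul]
      refine norm_sum_le_of_le _ fun j _ => ?_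
      rw [norm_mul, mul_assoc]
      refine mul_le_mul_of_nonneg_left ?_ (norm_nonneg _)
      refine (h (n + j) (by omega)).trans (le_of_eq ?_)
      rw [pow_add]; ring
    rw [key n, norm_mul, norm_mul, norm_pow] at h1
    refine le_trans ?_ h1
    have hc : (1 : ℝ) ≤ ‖(r.count z0 : ℂ)‖ := by
      rw [Complex.norm_natCast]
      exact_mod_cast Multiset.one_le_count_iff_mem.2 hz0
    exact le_mul_of_one_le_left (by positivity) hc
  have hratio : 1 < ‖z0‖ / B := (one_lt_div hB).2 hcon
  have ht := tendsto_pow_atTop_atTop_of_one_lt hratio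
  have hQn : 0 < ‖Q.eval z0‖ := norm_pos_iff.2 hQ0
  obtain ⟨n, hn1, hn2⟩ := ((ht.eventually_gt_atTop (D / ‖Q.eval z0‖)).and
    (Filter.eventually_ge_atTop n0)).exists
  have h3 := hbd n hn2
  rw [div_pow, div_lt_div_iff₀ hQn (by positivity)] at hn1
  linarith

section
variable (p : ℕ) [hp : Fact p.Prime] {Ω : Type} [Field Ω] [IsAlgClosed Ω] [Algebra (ZMod p) Ω]

theorem SS_roots (Ψ : AddChar Ω ℂ) (hΨ : ∃ a : ZMod p, Ψ (algebraMap (ZMod p) Ω a) ≠ 1)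
    (c : ℤ → ZMod p) {s : ℕ} (hs : 0 < s) (hsp : s < p) (hcs : c s ≠ 0) :
    ∃ r : Multiset ℂ, Multiset.card r = s + 1 ∧ ∀ n, 0 < n → SS p Ψ c s n = -(r.map fun z => z ^ n).sum := by
  let R : Polynomial ℂ := ∑ i ∈ range (s + 2), Polynomial.monomial i (AA p Ψ c s i)
  have hRc : ∀ i, R.coeff i = AA p Ψ c s i := by
    intro i
    simp only [R, Polynomial.finsetSum_coeff, Polynomial.coeff_monomial]
    rw [Finset.sum_ite_eq']
    split_ifs with h
    · rfl
    · exact (AA_vanish p Ψ hΨ c hs hsp hcs (by simp at h; omega)).symm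
  let B := Polynomial.reflect (s + 1) R
  have hBc : ∀ i, B.coeff i = R.coeff (Polynomial.revAt (s + 1) i) := fun i => Polynomial.coeff_reflect _ _ _
  have hBd : B.natDegree ≤ s + 1 := by
    rw [Polynomial.natDegree_le_iff_coeff_eq_zero]
    intro i hi
    rw [hBc, Polynomial.revAt_eq_self_of_lt hi, hRc]
    exact AA_vanish p Ψ hΨ c hs hsp hcs (by omega)
  have hB1 : B.coeff (s + 1) = 1 := by
    rw [hBc, Polynomial.revAt_le le_rfl, Nat.sub_self, hRc, AA_zero]
  have hBm : B.Monic := Polynomial.monic_of_natDegree_le_of_coeff_eq_one _ hBd hB1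
  have hBd' : B.natDegree = s + 1 := le_antisymm hBd (Polynomial.le_natDegree_of_ne_zero (by rw [hB1]; simp))
  have hBr : B.reverse = R := by
    ext i
    rw [Polynomial.coeff_reverse, hBd', hBc, Polynomial.revAt_invol]
  have hsplit := (IsAlgClosed.splits B)
  refine ⟨B.roots, by rw [← hsplit.natDegree_eq_card_roots, hBd'], ?_⟩
  have hprod := hsplit.eq_prod_roots_of_monic hBm
  have hRp : R = (B.roots.map fun a => (1 - Polynomial.C a * Polynomial.X : Polynomial ℂ)).prod := by
    rw [← rev_prod, ← hprod, hBr]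
  have h1 := logder _ R hRp
  let Sser : PowerSeries ℂ := PowerSeries.mk fun i => if i = 0 then 0 else SS p Ψ c s i
  have h2 : PowerSeries.X * ((Polynomial.derivative R : Polynomial ℂ) : PowerSeries ℂ) = (R : PowerSeries ℂ) * Sser := by
    ext n
    have e1 : PowerSeries.coeff n (PowerSeries.X * ((Polynomial.derivative R : Polynomial ℂ) : PowerSeries ℂ))
        = n * AA p Ψ c s n := by
      rcases n with _ | n
      · simp
      · rw [PowerSeries.coeff_succ_X_mul, Polynomial.coeff_coe, Polynomial.coeff_derivative, hRc]
        push_cast; ring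
    rw [e1, AA_rec, mul_comm, PowerSeries.coeff_mul,
      Finset.Nat.sum_antidiagonal_eq_sum_range_succ (fun i j => PowerSeries.coeff i Sser * PowerSeries.coeff j (R : PowerSeries ℂ)),
      Finset.sum_range_succ']
    simp only [Sser, PowerSeries.coeff_mk, Polynomial.coeff_coe, hRc]
    rw [if_pos trivial, zero_mul, add_zero]
    rw [Finset.range_eq_Ico, Finset.sum_Ico_add' (fun i => (if i = 0 then 0 else SS p Ψ c s i) * AA p Ψ c s (n - i)) 0 n 1]
    refine Finset.sum_congr (by ext; simp) fun i hi => ?_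
    rw [if_neg (by simp at hi; omega)]
  have hR0 : (R : PowerSeries ℂ) ≠ 0 := by
    intro h
    have := congrArg (PowerSeries.coeff 0) h
    rw [Polynomial.coeff_coe, hRc, AA_zero] at this
    simp at this
  have h3 : pw B.roots = -Sser := by
    apply mul_left_cancel₀ hR0
    rw [mul_neg, ← h2, h1]
  intro n hn
  have h4 := congrArg (PowerSeries.coeff n) h3
  rw [pw_coeff _ _ hn.ne'] at h4
  rw [h4]
  simp [Sser, hn.ne']

theorem SS_bound (Ψ : AddChar Ω ℂ) (hΨ : ∃ a : ZMod p, Ψ (algebraMap (ZMod p) Ω a) ≠ 1)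
    (c : ℤ → ZMod p) {s : ℕ} (hs : 0 < s) (hsp : s < p) (hcs : c s ≠ 0) :
    ‖SS p Ψ c s 1‖ ≤ (s + 1) * Real.sqrt p := by
  obtain ⟨r, hr, hS⟩ := SS_roots p Ψ hΨ c hs hsp hcs
  have hp0 : (0 : ℝ) < p := by exact_mod_cast hp.out.pos
  have hiso := isolate (r.map fun z => z ^ 2) (p * (2 * s + 5) + 1) p hp0 ((s + 3) * (1 + p * s) + 1) (by
    intro n hn
    obtain ⟨ν, rfl⟩ : ∃ ν, n = ν + 1 := ⟨n - 1, by omega⟩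
    have hlt : ν < p ^ ν := Nat.lt_pow_self hp.out.one_lt
    have hν : (s + 3) * (1 + p * s) ≤ ν := by omega
    have hb1 : (s + 3) * (1 + p * s) < p ^ (ν + 1) := by
      have : p ^ ν ≤ p ^ (ν + 1) := Nat.pow_le_pow_right hp.out.pos (by omega)
      omega
    have hb2 : s < p ^ ν := by
      have h1 : s + 3 ≤ (s + 3) * (1 + p * s) := Nat.le_mul_of_pos_right _ (by omega)
      omega
    have := SS_even_bound p Ψ hΨ c s hs hsp hcs ν hb1 hb2
    rw [hS _ (by omega), norm_neg] at this
    rw [Multiset.map_map]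
    simpa [Function.comp_def, ← pow_mul] using this)
  have hz : ∀ z ∈ r, ‖z‖ ≤ Real.sqrt p := by
    intro z hz
    have := hiso (z ^ 2) (Multiset.mem_map_of_mem _ hz)
    rw [norm_pow] at this
    exact Real.le_sqrt_of_sq_le this
  rw [hS 1 one_pos, norm_neg]
  have hgen : ∀ r : Multiset ℂ, (∀ z ∈ r, ‖z‖ ≤ Real.sqrt p) →
      ‖(r.map fun z => z ^ 1).sum‖ ≤ Multiset.card r * Real.sqrt p := by
    intro r
    induction r using Multiset.induction_on with
    | empty => simp
    | cons a r ih =>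
      intro h
      rw [Multiset.map_cons, Multiset.sum_cons, Multiset.card_cons]
      have h1 := ih fun z hz => h z (by simp [hz])
      have h2 := h a (by simp)
      refine (norm_add_le _ _).trans ?_
      push_cast
      rw [pow_one]
      linarith
  have := hgen r hz
  rw [hr] at this
  exact_mod_cast this

theorem weil (ψ : AddChar (ZMod p) ℂ) (hψ : ψ ≠ 1)
    (c : ℤ → ZMod p) {s : ℕ} (hs : 0 < s) (hsp : s < p) (hcs : c s ≠ 0) :
    ‖∑ x ∈ univ.filter (fun x : ZMod p => x ≠ 0), ψ (∑ i ∈ Finset.Icc (-1 : ℤ) s, c i * x ^ i)‖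
      ≤ (s + 1) * Real.sqrt p := by
  classical
  let Ω := AlgebraicClosure (ZMod p)
  obtain ⟨π, hπ⟩ := LinearMap.exists_leftInverse_of_injective (Algebra.linearMap (ZMod p) Ω)
    (LinearMap.ker_eq_bot.2 (algebraMap (ZMod p) Ω).injective)
  have hπ' : ∀ a : ZMod p, π (algebraMap (ZMod p) Ω a) = a := fun a => LinearMap.congr_fun hπ a
  let Ψ : AddChar Ω ℂ := ψ.compAddMonoidHom π.toAddMonoidHom
  have hΨa : ∀ a : ZMod p, Ψ (algebraMap (ZMod p) Ω a) = ψ a := fun a => congrArg ψ (hπ' a)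
  have hΨ : ∃ a : ZMod p, Ψ (algebraMap (ZMod p) Ω a) ≠ 1 := by
    obtain ⟨a, ha⟩ := AddChar.ne_one_iff.1 hψ
    exact ⟨a, by rwa [hΨa]⟩
  have := SS_bound p Ψ hΨ c hs hsp hcs
  convert this using 2
  unfold SS
  have himg : ufix p Ω 1 = (univ.filter fun x : ZMod p => x ≠ 0).image (algebraMap (ZMod p) Ω) := by
    ext x
    rw [mem_ufix p one_ne_zero, Finset.mem_image]
    constructor
    · rintro ⟨h1, h2⟩
      rw [pow_one] at h2
      obtain ⟨a, rfl⟩ := mem_range_of_frob p x h2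
      exact ⟨a, by simpa using h1, rfl⟩
    · rintro ⟨a, ha, rfl⟩
      rw [pow_one, ← map_pow, ZMod.pow_card]
      exact ⟨by simpa using ha, rfl⟩
  rw [himg, Finset.sum_image (fun a _ b _ h => (algebraMap (ZMod p) Ω).injective h)]
  refine Finset.sum_congr rfl fun x _ => ?_
  rw [← hΨa]
  congr 1
  simp only [ff, Finset.sum_range_one, pow_zero, pow_one, map_sum, map_mul, map_zpow₀]

end

end Kor

namespace Kor

section
variable (p : ℕ) [hp : Fact p.Prime]
open Polynomial

theorem stair (l : (ZMod p)[X]) (hl : (1 + X) * derivative l = (1 + X) ^ p - (1 + X) * X ^ (p - 1))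
    (A Bm : ℕ) (hA : A ≤ p) (hBm : Bm ≤ p) : ∀ (S : ℕ) (h : ℕ → ℕ) (φ : ℕ → ℕ → ZMod p) (K : ℕ),
    (∑ i ∈ range A, h i = S) → S ≤ K → K ≤ p → (∀ i < A, h i ≤ Bm) → (∀ i < A, ∀ b, h i ≤ b → φ i b = 0) →
    X ^ K ∣ ∑ i ∈ range A, ∑ b ∈ range Bm, C (φ i b) * ((1 + X) ^ i * l ^ b) →
    ∀ i < A, ∀ b, φ i b = 0 := by
  have hp1 := hp.out.one_lt
  intro S
  induction S with
  | zero =>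
    intro h φ K hS _ _ _ hφ _ i hi b
    refine hφ i hi b ?_
    have := (Finset.sum_eq_zero_iff.1 hS) i (Finset.mem_range.2 hi)
    omega
  | succ S ih =>
    intro h φ K hS hSK hKp hhB hφ hdvd
    obtain ⟨i0, hi0, hpos⟩ : ∃ i0 < A, 0 < h i0 := by
      by_contra hcon
      push Not at hcon
      have : ∑ i ∈ range A, h i = 0 := Finset.sum_eq_zero fun i hi => by
        have := hcon i (Finset.mem_range.1 hi); omega
      omega
    set G := ∑ i ∈ range A, ∑ b ∈ range Bm, C (φ i b) * ((1 + X) ^ i * l ^ b) with hG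
    let φ' : ℕ → ℕ → ZMod p := fun i b => ((i : ZMod p) - i0) * φ i b + ((b : ZMod p) + 1) * φ i (b + 1)
    let h' : ℕ → ℕ := fun i => if i = i0 then h i - 1 else h i
    have hS' : ∑ i ∈ range A, h' i = S := by
      have h1 : ∑ i ∈ range A, h i = ∑ i ∈ range A, (h' i + if i = i0 then 1 else 0) := by
        refine Finset.sum_congr rfl fun i _ => ?_
        simp only [h']
        split_ifs with hh
        · subst hh; omega
        · rfl
      rw [Finset.sum_add_distrib, Finset.sum_ite_eq', if_pos (Finset.mem_range.2 hi0)] at h1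
      omega
    have hδ : (1 + X) * derivative G - C (i0 : ZMod p) * G =
        (∑ i ∈ range A, ∑ b ∈ range Bm, C (φ' i b) * ((1 + X) ^ i * l ^ b))
        + ((1 + X) * derivative l - 1) * ∑ i ∈ range A, ∑ b ∈ range Bm, C (((b : ZMod p) + 1) * φ i (b + 1)) * ((1 + X) ^ i * l ^ b) := by
      rw [hG, derivative_sum, Finset.mul_sum, Finset.mul_sum, Finset.mul_sum, ← Finset.sum_sub_distrib, ← Finset.sum_add_distrib]
      refine Finset.sum_congr rfl fun i hi => ?_
      have hiA := Finset.mem_range.1 hi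
      have hre : ∑ b ∈ range Bm, C ((b : ZMod p) * φ i b) * ((1 + X) ^ i * l ^ (b - 1)) =
          ∑ b ∈ range Bm, C (((b : ZMod p) + 1) * φ i (b + 1)) * ((1 + X) ^ i * l ^ b) := by
        have e1 := Finset.sum_range_succ (fun b : ℕ => C ((b : ZMod p) * φ i b) * ((1 + X) ^ i * l ^ (b - 1))) Bm
        have e2 := Finset.sum_range_succ' (fun b : ℕ => C ((b : ZMod p) * φ i b) * ((1 + X) ^ i * l ^ (b - 1))) Bm
        rw [e1, hφ i hiA Bm (hhB i hiA)] at e2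
        simpa using e2
      have hd : ∀ b, (1 + X) * derivative (C (φ i b) * ((1 + X) ^ i * l ^ b)) =
          C ((i : ZMod p) * φ i b) * ((1 + X) ^ i * l ^ b) +
          ((1 + X) * derivative l) * (C ((b : ZMod p) * φ i b) * ((1 + X) ^ i * l ^ (b - 1))) := by
        intro b
        rw [derivative_C_mul, derivative_mul, derivative_pow, derivative_pow]
        have : (1 + X : (ZMod p)[X]) * (C (i : ZMod p) * (1 + X) ^ (i - 1)) = C (i : ZMod p) * (1 + X) ^ i := by
          rcases i with _ | i
          · simp
          · rw [Nat.add_sub_cancel, pow_succ]; ring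
        simp only [derivative_add, derivative_one, derivative_X, zero_add, mul_one, map_mul]
        linear_combination (C (φ i b) * l ^ b) * this
      rw [derivative_sum, Finset.mul_sum, Finset.sum_congr rfl (fun b _ => hd b), Finset.sum_add_distrib, ← Finset.mul_sum, hre]
      have e3 : ∑ b ∈ range Bm, C (φ' i b) * ((1 + X) ^ i * l ^ b) =
          (∑ b ∈ range Bm, C ((i : ZMod p) * φ i b) * ((1 + X) ^ i * l ^ b))
          - C (i0 : ZMod p) * (∑ b ∈ range Bm, (C (φ i b) * ((1 + X) ^ i * l ^ b)))
          + ∑ b ∈ range Bm, C (((b : ZMod p) + 1) * φ i (b + 1)) * ((1 + X) ^ i * l ^ b) := by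
        rw [Finset.mul_sum, ← Finset.sum_sub_distrib, ← Finset.sum_add_distrib]
        refine Finset.sum_congr rfl fun b _ => ?_
        simp only [φ', map_add, map_mul, map_sub]
        ring
      rw [e3]
      ring
    have hdvd1 : X ^ (K - 1) ∣ (1 + X) * derivative G - C (i0 : ZMod p) * G := by
      refine dvd_sub (Dvd.dvd.mul_left ?_ _) (Dvd.dvd.mul_left ((pow_dvd_pow _ (Nat.sub_le _ _)).trans hdvd) _)
      exact pow_sub_one_dvd_derivative_of_pow_dvd hdvd
    have hdvd2 : X ^ (K - 1) ∣ ((1 + X) * derivative l - 1) := by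
      refine (pow_dvd_pow _ (show K - 1 ≤ p - 1 by omega)).trans ?_
      rw [hl, add_pow_char, one_pow]
      have : (X : (ZMod p)[X]) ^ p = X ^ (p - 1) * X := by rw [← pow_succ]; congr 1; omega
      rw [this]
      exact ⟨X - (1 + X), by ring⟩
    have hdvd3 : X ^ (K - 1) ∣ ∑ i ∈ range A, ∑ b ∈ range Bm, C (φ' i b) * ((1 + X) ^ i * l ^ b) := by
      rw [hδ] at hdvd1
      exact (dvd_add_left (Dvd.dvd.mul_right hdvd2 _)).1 hdvd1
    have hφ'0 : ∀ i < A, ∀ b, φ' i b = 0 := by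
      refine ih h' φ' (K - 1) hS' (by omega) (by omega) ?_ ?_ hdvd3
      · intro i hi
        have := hhB i hi
        simp only [h']; split_ifs <;> omega
      · intro i hi b hb
        simp only [φ']
        by_cases hh : i = i0
        · subst hh
          simp only [h', if_true] at hb
          rw [sub_self, zero_mul, zero_add, hφ i hi (b + 1) (by omega), mul_zero]
        · simp only [h', if_neg hh] at hb
          rw [hφ i hi b hb, hφ i hi (b + 1) (by omega)]; simp
    have hne : ∀ i < A, i ≠ i0 → ∀ b, φ i b = 0 := by
      intro i hi hii
      have hunit : (i : ZMod p) - i0 ≠ 0 := by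
        rw [sub_ne_zero]
        intro he
        rw [ZMod.natCast_eq_natCast_iff] at he
        exact hii (Nat.ModEq.eq_of_lt_of_lt he (by omega) (by omega))
      have : ∀ j b, h i ≤ b + j → φ i b = 0 := by
        intro j
        induction j with
        | zero => intro b hb; exact hφ i hi b hb
        | succ j ihj =>
          intro b hb
          have h1 := hφ'0 i hi b
          simp only [φ'] at h1
          rw [ihj (b + 1) (by omega), mul_zero, add_zero] at h1
          exact (mul_eq_zero.1 h1).resolve_left hunit
      intro b
      exact this (h i) b (by omega)
    have hi0b : ∀ b, 0 < b → φ i0 b = 0 := by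
      intro b hb
      by_cases hbh : h i0 ≤ b
      · exact hφ i0 hi0 b hbh
      obtain ⟨b, rfl⟩ : ∃ b', b = b' + 1 := ⟨b - 1, by omega⟩
      have h1 := hφ'0 i0 hi0 b
      simp only [φ', sub_self, zero_mul, zero_add] at h1
      refine (mul_eq_zero.1 h1).resolve_left ?_
      have h2 := hhB i0 hi0
      intro h3
      have h4 : ((b + 1 : ℕ) : ZMod p) = 0 := by push_cast; exact h3
      rw [ZMod.natCast_eq_zero_iff] at h4
      have := Nat.le_of_dvd (by omega) h4
      omega
    have hi00 : φ i0 0 = 0 := by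
      have hG2 : G = C (φ i0 0) * (1 + X) ^ i0 := by
        rw [hG, Finset.sum_eq_single i0, Finset.sum_eq_single 0]
        · simp
        · intro b _ hb; rw [hi0b b (by omega)]; simp
        · intro hn; simp at hn; have := hhB i0 hi0; omega
        · intro i hi hii
          refine Finset.sum_eq_zero fun b _ => ?_
          rw [hne i (Finset.mem_range.1 hi) hii b]; simp
        · intro hn; exact absurd (Finset.mem_range.2 hi0) hn
      have h1 : X ∣ G := (dvd_pow_self X (by omega)).trans hdvd
      rw [hG2, X_dvd_iff, coeff_zero_eq_eval_zero] at h1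
      simpa using h1
    intro i hi b
    by_cases hii : i = i0
    · subst hii
      rcases Nat.eq_zero_or_pos b with rfl | hb
      · exact hi00
      · exact hi0b b hb
    · exact hne i hi hii b

/-- the operator `X (X+1) d/dX` -/
def DD (P : (ZMod p)[X]) : (ZMod p)[X] := X * (X + 1) * derivative P

theorem DD_add (P Q : (ZMod p)[X]) : DD p (P + Q) = DD p P + DD p Q := by simp [DD, mul_add]
theorem DD_C_mul (a : ZMod p) (P : (ZMod p)[X]) : DD p (C a * P) = C a * DD p P := by
  simp [DD]; ring

/-- as a linear map -/
def DL : (ZMod p)[X] →ₗ[ZMod p] (ZMod p)[X] where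
  toFun := DD p
  map_add' := DD_add p
  map_smul' a P := by simp only [smul_eq_C_mul, DD_C_mul, RingHom.id_apply]

theorem DL_pow_ne (x : ZMod p) (hx : x * (x + 1) ≠ 0) : ∀ μ < p, ∀ Q : (ZMod p)[X], Q.eval x ≠ 0 →
    (((DL p) ^ μ) ((X - C x) ^ μ * Q)).eval x ≠ 0 := by
  intro μ
  induction μ with
  | zero => intro _ Q hQ; simpa using hQ
  | succ μ ih =>
    intro hμ Q hQ
    rw [pow_succ, Module.End.mul_apply]
    have : (DL p) ((X - C x) ^ (μ + 1) * Q) = (X - C x) ^ μ *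
        (C ((μ + 1 : ℕ) : ZMod p) * (X * (X + 1)) * Q + (X - C x) * (X * (X + 1) * derivative Q)) := by
      change DD p _ = _
      unfold DD
      rw [derivative_mul, derivative_X_sub_C_pow]
      simp only [Nat.add_sub_cancel, map_natCast]
      ring
    rw [this]
    refine ih (by omega) _ ?_
    simp only [eval_add, eval_mul, eval_C, eval_X, eval_one, eval_sub, sub_self, zero_mul, add_zero]
    refine mul_ne_zero (mul_ne_zero ?_ hx) hQ
    intro h
    rw [ZMod.natCast_eq_zero_iff] at h
    have := Nat.le_of_dvd (by omega) h
    omega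

theorem DL_mult (x : ZMod p) (hx : x * (x + 1) ≠ 0) (M : ℕ) (hM : M ≤ p) (P : (ZMod p)[X])
    (h : ∀ n < M, (((DL p) ^ n) P).eval x = 0) : (X - C x) ^ M ∣ P := by
  by_cases hP : P = 0
  · simp [hP]
  rw [← le_rootMultiplicity_iff hP]
  by_contra hcon
  push Not at hcon
  obtain ⟨Q, hQ, hQx⟩ := exists_eq_pow_rootMultiplicity_mul_and_not_dvd P hP x
  rw [dvd_iff_isRoot] at hQx
  have := DL_pow_ne p x hx (rootMultiplicity x P) (by omega) Q hQx
  rw [← hQ] at this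
  exact this (h _ hcon)

theorem exists_E (l : (ZMod p)[X]) (hl : X * (X + 1) * derivative l = X - X ^ p) (lam : ZMod p) :
    ∀ n a b c : ℕ, ∃ E : (ZMod p)[X], E.natDegree ≤ a + c + n ∧ ∀ x : ZMod p, l.eval x = lam →
      (((DL p) ^ n) (X ^ a * l ^ b * X ^ (p * c))).eval x = E.eval x := by
  intro n
  induction n with
  | zero =>
    intro a b c
    refine ⟨C (lam ^ b) * X ^ (a + c), (natDegree_C_mul_X_pow_le _ _).trans (by omega), ?_⟩
    intro x hx
    simp only [pow_zero, Module.End.one_apply, eval_mul, eval_pow, eval_X, eval_C, hx, pow_mul, ZMod.pow_card]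
    ring
  | succ n ih =>
    intro a b c
    obtain ⟨E1, hd1, h1⟩ := ih a b c
    obtain ⟨E2, hd2, h2⟩ := ih (a + 1) b c
    obtain ⟨E3, hd3, h3⟩ := ih (a + 1) (b - 1) c
    obtain ⟨E4, hd4, h4⟩ := ih a (b - 1) (c + 1)
    refine ⟨C (a : ZMod p) * E1 + C (a : ZMod p) * E2 + C (b : ZMod p) * E3 - C (b : ZMod p) * E4, ?_, ?_⟩
    · have hC : ∀ (u : ZMod p) (E : (ZMod p)[X]), E.natDegree ≤ a + c + (n + 1) →
          (C u * E).natDegree ≤ a + c + (n + 1) := fun u E h => (natDegree_C_mul_le _ _).trans h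
      have g1 := hC (a : ZMod p) E1 (by omega)
      have g2 := hC (a : ZMod p) E2 (by omega)
      have g3 := hC (b : ZMod p) E3 (by omega)
      have g4 := hC (b : ZMod p) E4 (by omega)
      exact natDegree_sub_le_of_le (natDegree_add_le_of_degree_le (natDegree_add_le_of_degree_le g1 g2) g3) g4 |>.trans (by simp)
    · intro x hx
      rw [pow_succ, Module.End.mul_apply]
      have e : (DL p) (X ^ a * l ^ b * X ^ (p * c)) =
          (a : ZMod p) • (X ^ a * l ^ b * X ^ (p * c)) + (a : ZMod p) • (X ^ (a + 1) * l ^ b * X ^ (p * c))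
          + (b : ZMod p) • (X ^ (a + 1) * l ^ (b - 1) * X ^ (p * c))
          - (b : ZMod p) • (X ^ a * l ^ (b - 1) * X ^ (p * (c + 1))) := by
        change DD p _ = _
        unfold DD
        rw [derivative_mul, derivative_mul, derivative_X_pow, derivative_X_pow, derivative_pow]
        have ha : (X : (ZMod p)[X]) * (C (a : ZMod p) * X ^ (a - 1)) = C (a : ZMod p) * X ^ a := by
          rcases a with _ | a
          · simp
          · rw [Nat.add_sub_cancel, pow_succ]; ring
        have hpc : (((p * c : ℕ) : ZMod p)) = 0 := by simp
        rw [hpc]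
        simp only [smul_eq_C_mul, map_zero, zero_mul, mul_zero, add_zero]
        rw [Nat.mul_succ, pow_add X (p * c) p]
        linear_combination ((X + 1) * l ^ b * X ^ (p * c)) * ha +
          (X ^ a * X ^ (p * c) * C (b : ZMod p) * l ^ (b - 1)) * hl
      rw [e]
      simp only [map_add, map_sub, map_smul, eval_add, eval_sub, eval_smul, eval_mul, eval_C, smul_eq_mul,
        h1 x hx, h2 x hx, h3 x hx, h4 x hx]
end

end Kor

namespace Kor

section
variable (p : ℕ) [hp : Fact p.Prime]
open Polynomial

theorem indep (l : (ZMod p)[X]) (hl : (1 + X) * derivative l = (1 + X) ^ p - (1 + X) * X ^ (p - 1))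
    (A B : ℕ) (hA : 0 < A) (hB : 0 < B) (hAB : A * B ≤ p) (φ : ℕ → ℕ → ZMod p)
    (hd : X ^ p ∣ ∑ b ∈ range B, (∑ i ∈ range A, C (φ i b) * X ^ i) * l ^ b) :
    ∀ i < A, ∀ b < B, φ i b = 0 := by
  have hAp : A ≤ p := le_trans (Nat.le_mul_of_pos_right A hB) hAB
  have hBp : B ≤ p := le_trans (Nat.le_mul_of_pos_left B hA) hAB
  let P : ℕ → (ZMod p)[X] := fun b => ∑ i ∈ range A, C (φ i b) * X ^ i
  let Q : ℕ → (ZMod p)[X] := fun b => (P b).comp (X - C 1)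
  have hPd : ∀ b, (P b).natDegree ≤ A - 1 := by
    intro b
    refine natDegree_sum_le_of_forall_le _ _ fun i hi => (natDegree_C_mul_X_pow_le _ _).trans ?_
    have := Finset.mem_range.1 hi
    omega
  have hQd : ∀ b, (Q b).natDegree < A := by
    intro b
    simp only [Q, natDegree_comp, natDegree_X_sub_C, mul_one]
    have := hPd b
    omega
  have hQP : ∀ b, P b = ∑ i ∈ range A, C ((Q b).coeff i) * (1 + X) ^ i := by
    intro b
    have h1 : P b = (Q b).comp (X + C 1) := by
      simp only [Q, comp_assoc]; simp
    rw [h1]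
    conv_lhs => rw [(Q b).as_sum_range_C_mul_X_pow' (hQd b)]
    rw [Polynomial.sum_comp]
    refine Finset.sum_congr rfl fun i _ => ?_
    simp [add_comm]
  let ψ : ℕ → ℕ → ZMod p := fun i b => if b < B then (Q b).coeff i else 0
  have hψ := stair p l hl A B hAp hBp (A * B) (fun _ => B) ψ p (by simp) hAB le_rfl (fun _ _ => le_rfl)
    (fun i _ b hb => by simp only [ψ]; rw [if_neg (by omega)]) (by
      convert hd using 1
      rw [Finset.sum_comm]
      refine Finset.sum_congr rfl fun b hb => ?_
      change _ = P b * l ^ b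
      rw [hQP b, Finset.sum_mul]
      refine Finset.sum_congr rfl fun i _ => ?_
      simp only [ψ]; rw [if_pos (Finset.mem_range.1 hb)]; ring)
  intro i hi b hb
  have hP0 : P b = 0 := by
    rw [hQP b]
    refine Finset.sum_eq_zero fun i hi => ?_
    have := hψ i (Finset.mem_range.1 hi) b
    simp only [ψ, if_pos hb] at this
    rw [this]; simp
  have := congrArg (fun q => coeff q i) hP0
  simp only [P, finsetSum_coeff, coeff_C_mul_X_pow, coeff_zero] at this
  rw [Finset.sum_ite_eq, if_pos (Finset.mem_range.2 hi)] at this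
  exact this

theorem indep2 (l : (ZMod p)[X]) (hl : (1 + X) * derivative l = (1 + X) ^ p - (1 + X) * X ^ (p - 1))
    (A B : ℕ) (hA : 0 < A) (hB : 0 < B) (hAB : A * B ≤ p) (φ : ℕ → ℕ → ℕ → ZMod p) : ∀ (Cn : ℕ),
    (∑ c ∈ range Cn, (∑ b ∈ range B, (∑ i ∈ range A, C (φ i b c) * X ^ i) * l ^ b) * X ^ (p * c) = 0) →
    ∀ i < A, ∀ b < B, ∀ c < Cn, φ i b c = 0 := by
  intro Cn
  induction Cn generalizing φ with
  | zero => intro _ _ _ _ _ c hc; omega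
  | succ Cn ih =>
    intro h
    rw [Finset.sum_range_succ'] at h
    have h0 : ∀ i < A, ∀ b < B, φ i b 0 = 0 := by
      refine indep p l hl A B hA hB hAB (fun i b => φ i b 0) ?_
      rw [mul_zero, pow_zero, mul_one] at h
      rw [eq_neg_of_add_eq_zero_right h, dvd_neg]
      refine Finset.dvd_sum fun c _ => Dvd.dvd.mul_left (pow_dvd_pow _ ?_) _
      rw [Nat.mul_succ]; omega
    have h1 : (∑ b ∈ range B, (∑ i ∈ range A, C (φ i b 0) * X ^ i) * l ^ b) = 0 := by
      refine Finset.sum_eq_zero fun b hb => ?_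
      rw [Finset.sum_eq_zero, zero_mul]
      intro i hi
      rw [h0 i (Finset.mem_range.1 hi) b (Finset.mem_range.1 hb)]; simp
    rw [h1, zero_mul, add_zero] at h
    have h2 := ih (fun i b c => φ i b (c + 1)) (by
      have h3 : X ^ p * (∑ c ∈ range Cn, (∑ b ∈ range B, (∑ i ∈ range A, C (φ i b (c + 1)) * X ^ i) * l ^ b) * X ^ (p * c)) = 0 := by
        rw [← h, Finset.mul_sum]
        refine Finset.sum_congr rfl fun c _ => ?_
        rw [Nat.mul_succ, pow_add]; ring
      exact (mul_eq_zero.1 h3).resolve_left (pow_ne_zero _ X_ne_zero))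
    intro i hi b hb c hc
    rcases c with _ | c
    · exact h0 i hi b hb
    · exact h2 i hi b hb c (by omega)

theorem levelset (l : (ZMod p)[X]) (hl1 : X * (X + 1) * derivative l = X - X ^ p)
    (hl2 : (1 + X) * derivative l = (1 + X) ^ p - (1 + X) * X ^ (p - 1)) (hld : l.natDegree ≤ p)
    (B : ℕ) (hB : 3 ≤ B) (hBp : B ^ 3 ≤ p) (lam : ZMod p) (T : Finset (ZMod p))
    (hT : ∀ x ∈ T, x * (x + 1) ≠ 0 ∧ l.eval x = lam) :
    T.card * (B ^ 2 / 2) ≤ B ^ 2 + 2 * p * (B - 1) := by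
  classical
  set M := B ^ 2 / 2 with hM
  set W := B ^ 2 + B + M with hW
  have hM2 : 2 * M ≤ B ^ 2 := by omega
  have hMp : M ≤ p := by nlinarith
  choose E hEd hE using exists_E p l hl1 lam
  let ι := Fin (B ^ 2) × Fin B × Fin B
  let g : (ι → ZMod p) → (Fin M × Fin W → ZMod p) := fun a nw =>
    ∑ t : ι, a t * (E nw.1 t.1 t.2.1 t.2.2).coeff nw.2
  have hcard : Fintype.card (Fin M × Fin W → ZMod p) < Fintype.card (ι → ZMod p) := by
    simp only [ι, Fintype.card_fun, Fintype.card_prod, Fintype.card_fin]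
    refine Nat.pow_lt_pow_right Fintype.one_lt_card ?_
    have : 4 * (M * W) < 4 * (B ^ 2 * (B * B)) := by
      have e1 : 2 * M * (2 * W) ≤ B ^ 2 * (3 * B ^ 2 + 2 * B) :=
        Nat.mul_le_mul hM2 (by omega)
      have e2 : B ^ 2 * (3 * B ^ 2 + 2 * B) < B ^ 2 * (4 * B ^ 2) :=
        Nat.mul_lt_mul_of_pos_left (by nlinarith) (by positivity)
      nlinarith
    omega
  obtain ⟨a1, a2, hne, heq⟩ := Fintype.exists_ne_map_eq_of_card_lt g hcard
  set a : ι → ZMod p := a1 - a2 with ha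
  have ha0 : a ≠ 0 := sub_ne_zero.2 hne
  have hga : ∀ nw : Fin M × Fin W, ∑ t : ι, a t * (E nw.1 t.1 t.2.1 t.2.2).coeff nw.2 = 0 := by
    intro nw
    have := congrFun heq nw
    simp only [g] at this
    simp only [ha, Pi.sub_apply, sub_mul, Finset.sum_sub_distrib, this, sub_self]
  have hpoly : ∀ n < M, ∑ t : ι, C (a t) * E n t.1 t.2.1 t.2.2 = 0 := by
    intro n hn
    ext w
    rw [finsetSum_coeff, coeff_zero]
    simp only [coeff_C_mul]
    by_cases hw : w < W
    · exact hga (⟨n, hn⟩, ⟨w, hw⟩)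
    · refine Finset.sum_eq_zero fun t _ => ?_
      rw [coeff_eq_zero_of_natDegree_lt, mul_zero]
      refine (hEd _ _ _ _).trans_lt ?_
      have h1 := t.1.2
      have h2 := t.2.2.2
      omega
  set Ψ : (ZMod p)[X] := ∑ t : ι, C (a t) * (X ^ (t.1 : ℕ) * l ^ (t.2.1 : ℕ) * X ^ (p * (t.2.2 : ℕ))) with hΨ
  have hΨ0 : Ψ ≠ 0 := by
    intro h0
    apply ha0
    let φ : ℕ → ℕ → ℕ → ZMod p := fun i b c =>
      if h : i < B ^ 2 ∧ b < B ∧ c < B then a (⟨i, h.1⟩, ⟨b, h.2.1⟩, ⟨c, h.2.2⟩) else 0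
    have := indep2 p l hl2 (B ^ 2) B (by positivity) (by omega) (by rw [← pow_succ]; exact hBp) φ B (by
      rw [← h0, hΨ]
      simp only [ι, Fintype.sum_prod_type, ← Fin.sum_univ_eq_sum_range, Finset.sum_mul]
      rw [Finset.sum_comm]
      conv_rhs => rw [Finset.sum_comm]
      refine Finset.sum_congr rfl fun b _ => ?_
      rw [Finset.sum_comm]
      refine Finset.sum_congr rfl fun i _ => ?_
      refine Finset.sum_congr rfl fun c _ => ?_
      simp only [φ]
      rw [dif_pos ⟨i.2, b.2, c.2⟩]
      ring)
    ext ⟨i, b, c⟩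
    have h1 := this i i.2 b b.2 c c.2
    simp only [φ] at h1
    rw [dif_pos ⟨i.2, b.2, c.2⟩] at h1
    exact h1
  have hdvd : ∀ x ∈ T, (X - C x) ^ M ∣ Ψ := by
    intro x hx
    refine DL_mult p x (hT x hx).1 M hMp Ψ ?_
    intro n hn
    rw [hΨ, map_sum]
    have h1 := congrArg (eval x) (hpoly n hn)
    rw [eval_finsetSum, eval_zero] at h1
    rw [eval_finsetSum, ← h1]
    refine Finset.sum_congr rfl fun t _ => ?_
    rw [← smul_eq_C_mul, map_smul, eval_smul, eval_mul, eval_C, smul_eq_mul, hE n _ _ _ x (hT x hx).2]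
  have hprod : (∏ x ∈ T, (X - C x) ^ M) ∣ Ψ := by
    refine Finset.prod_dvd_of_coprime ?_ hdvd
    intro x _ y _ hxy
    exact (pairwise_coprime_X_sub_C Function.injective_id hxy).pow
  have hdeg := natDegree_le_of_dvd hprod hΨ0
  rw [natDegree_prod _ _ (fun x _ => pow_ne_zero _ (X_sub_C_ne_zero x))] at hdeg
  simp only [natDegree_pow, natDegree_X_sub_C, mul_one, Finset.sum_const, smul_eq_mul] at hdeg
  refine hdeg.trans ?_
  refine natDegree_sum_le_of_forall_le _ _ fun t _ => ?_
  refine (natDegree_C_mul_le _ _).trans ?_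
  refine natDegree_mul_le.trans ?_
  rw [natDegree_X_pow]
  have h1 : (X ^ (t.1 : ℕ) * l ^ (t.2.1 : ℕ)).natDegree ≤ (t.1 : ℕ) + (t.2.1 : ℕ) * p := by
    refine natDegree_mul_le.trans ?_
    rw [natDegree_X_pow]
    gcongr
    exact natDegree_pow_le.trans (Nat.mul_le_mul_left _ hld)
  have h2 : (t.2.1 : ℕ) * p ≤ (B - 1) * p := Nat.mul_le_mul_right _ (by have := t.2.1.2; omega)
  have h3 : p * (t.2.2 : ℕ) ≤ p * (B - 1) := Nat.mul_le_mul_left _ (by have := t.2.2.2; omega)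
  have h4 := t.1.2
  have : 2 * p * (B - 1) = (B - 1) * p + p * (B - 1) := by ring
  omega

end
end Kor

namespace Kor

theorem bilin {α β : Type*} (H : Finset α) (Y : Finset β) (u : α → ℂ) (hu : ∀ a, ‖u a‖ ≤ 1)
    (Φ : β → α → ℂ) :
    (∑ y ∈ Y, ‖∑ h ∈ H, u h * Φ y h‖) ^ 2 ≤
      (H.card : ℝ) * ∑ y ∈ Y, ∑ y' ∈ Y, ‖∑ h ∈ H, Φ y h * (starRingEnd ℂ) (Φ y' h)‖ := by
  have hv : ∀ z : ℂ, ∃ v : ℂ, ‖v‖ ≤ 1 ∧ v * z = (‖z‖ : ℂ) := by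
    intro z
    by_cases hz : z = 0
    · exact ⟨0, by simp, by simp [hz]⟩
    · refine ⟨(‖z‖ : ℂ) / z, ?_, ?_⟩
      · rw [norm_div, Complex.norm_real, norm_norm, div_self (norm_ne_zero_iff.2 hz)]
      · field_simp
  choose v hv1 hv2 using hv
  let w : β → ℂ := fun y => v (∑ h ∈ H, u h * Φ y h)
  have hw : ∀ y, ‖w y‖ ≤ 1 := fun y => hv1 _
  have h1 : ((∑ y ∈ Y, ‖∑ h ∈ H, u h * Φ y h‖ : ℝ) : ℂ) = ∑ h ∈ H, u h * ∑ y ∈ Y, w y * Φ y h := by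
    push_cast
    rw [Finset.sum_congr rfl (fun y _ => (hv2 (∑ h ∈ H, u h * Φ y h)).symm)]
    simp only [Finset.mul_sum]
    rw [Finset.sum_comm]
    refine Finset.sum_congr rfl fun h _ => Finset.sum_congr rfl fun y _ => ?_
    simp only [w]
    ring
  have h0 : 0 ≤ ∑ y ∈ Y, ‖∑ h ∈ H, u h * Φ y h‖ := Finset.sum_nonneg fun _ _ => norm_nonneg _
  have h2 : ∑ y ∈ Y, ‖∑ h ∈ H, u h * Φ y h‖ ≤ ∑ h ∈ H, ‖∑ y ∈ Y, w y * Φ y h‖ := by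
    rw [← abs_of_nonneg h0, ← Real.norm_eq_abs, ← Complex.norm_real, h1]
    refine (norm_sum_le _ _).trans (Finset.sum_le_sum fun h _ => ?_)
    rw [norm_mul]
    exact mul_le_of_le_one_left (norm_nonneg _) (hu h)
  have h3 : (∑ y ∈ Y, ‖∑ h ∈ H, u h * Φ y h‖) ^ 2 ≤ (H.card : ℝ) * ∑ h ∈ H, ‖∑ y ∈ Y, w y * Φ y h‖ ^ 2 :=
    (pow_le_pow_left₀ h0 h2 2).trans sq_sum_le_card_mul_sum_sq
  refine h3.trans (mul_le_mul_of_nonneg_left ?_ (Nat.cast_nonneg _))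
  have h4 : ((∑ h ∈ H, ‖∑ y ∈ Y, w y * Φ y h‖ ^ 2 : ℝ) : ℂ) =
      ∑ y ∈ Y, ∑ y' ∈ Y, (w y * (starRingEnd ℂ) (w y')) * ∑ h ∈ H, Φ y h * (starRingEnd ℂ) (Φ y' h) := by
    push_cast
    have : ∀ h ∈ H, ((‖∑ y ∈ Y, w y * Φ y h‖ : ℂ)) ^ 2 =
        ∑ y ∈ Y, ∑ y' ∈ Y, (w y * (starRingEnd ℂ) (w y')) * (Φ y h * (starRingEnd ℂ) (Φ y' h)) := by
      intro h _
      rw [← Complex.mul_conj', map_sum, Finset.sum_mul_sum]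
      refine Finset.sum_congr rfl fun y _ => Finset.sum_congr rfl fun y' _ => ?_
      rw [map_mul]; ring
    rw [Finset.sum_congr rfl this, Finset.sum_comm]
    refine Finset.sum_congr rfl fun y _ => ?_
    rw [Finset.sum_comm]
    refine Finset.sum_congr rfl fun y' _ => ?_
    rw [Finset.mul_sum]
  have h5 : 0 ≤ ∑ h ∈ H, ‖∑ y ∈ Y, w y * Φ y h‖ ^ 2 := Finset.sum_nonneg fun _ _ => by positivity
  rw [← abs_of_nonneg h5, ← Real.norm_eq_abs, ← Complex.norm_real, h4]
  refine (norm_sum_le _ _).trans (Finset.sum_le_sum fun y _ => (norm_sum_le _ _).trans (Finset.sum_le_sum fun y' _ => ?_))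
  rw [norm_mul, norm_mul, RCLike.norm_conj]
  exact mul_le_of_le_one_left (norm_nonneg _) (mul_le_one₀ (hw _) (norm_nonneg _) (hw _))

section
variable (p : ℕ) [hp : Fact p.Prime]
open Polynomial

theorem exists_l : ∃ Lz : ℤ[X], C (p : ℤ) * Lz = (X + 1) ^ p - X ^ p - 1 := by
  have h : C (p : ℤ) ∣ ((X + 1) ^ p - X ^ p - 1 : ℤ[X]) := by
    rw [C_dvd_iff_dvd_coeff]
    intro i
    have h1 : ((X + 1) ^ p - X ^ p - 1 : ℤ[X]).map (Int.castRingHom (ZMod p)) = 0 := by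
      simp [add_pow_char]
    have h2 := congrArg (fun q => coeff q i) h1
    simp only [coeff_map, coeff_zero] at h2
    exact (ZMod.intCast_zmod_eq_zero_iff_dvd _ p).1 (by simpa using h2)
  obtain ⟨L, hL⟩ := h
  exact ⟨L, hL.symm⟩

/-- the Fermat quotient polynomial over the integers -/
def Lz : ℤ[X] := (exists_l p).choose
theorem Lz_spec : C (p : ℤ) * Lz p = (X + 1) ^ p - X ^ p - 1 := (exists_l p).choose_spec
/-- its reduction -/
def ll : (ZMod p)[X] := (Lz p).map (Int.castRingHom (ZMod p))

theorem Lz_deriv : derivative (Lz p) = (X + 1) ^ (p - 1) - X ^ (p - 1) := by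
  have h := congrArg derivative (Lz_spec p)
  rw [derivative_C_mul] at h
  simp only [derivative_sub, derivative_pow, derivative_add, derivative_X, derivative_one, add_zero, mul_one, sub_zero] at h
  rw [← mul_sub] at h
  exact mul_left_cancel₀ (by rw [Ne, C_eq_zero]; exact_mod_cast hp.out.ne_zero) h

theorem ll_deriv : derivative (ll p) = (X + 1) ^ (p - 1) - X ^ (p - 1) := by
  rw [ll, derivative_map, Lz_deriv]; simp

theorem ll1 : X * (X + 1) * derivative (ll p) = X - X ^ p := by
  have h1 : (X : (ZMod p)[X]) ^ p = X ^ (p - 1) * X := (pow_sub_one_mul hp.out.ne_zero _).symm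
  have h2 : (X + 1 : (ZMod p)[X]) ^ p = (X + 1) ^ (p - 1) * (X + 1) := (pow_sub_one_mul hp.out.ne_zero _).symm
  have h3 : (X + 1 : (ZMod p)[X]) ^ p = X ^ p + 1 := by rw [add_pow_char, one_pow]
  rw [ll_deriv]
  linear_combination (X + 1) * h1 - X * h2 + X * h3

theorem ll2 : (1 + X) * derivative (ll p) = (1 + X) ^ p - (1 + X) * X ^ (p - 1) := by
  have h2 : (X + 1 : (ZMod p)[X]) ^ p = (X + 1) ^ (p - 1) * (X + 1) := (pow_sub_one_mul hp.out.ne_zero _).symm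
  rw [ll_deriv, add_comm 1 X]
  linear_combination -h2

theorem ll_deg : (ll p).natDegree ≤ p := by
  refine natDegree_map_le.trans ?_
  have h : (C (p : ℤ) * Lz p).natDegree = (Lz p).natDegree :=
    natDegree_C_mul (by exact_mod_cast hp.out.ne_zero)
  rw [← h, Lz_spec]
  refine (natDegree_sub_le_of_le (natDegree_sub_le_of_le (m := p) (n := p) ?_ ?_) (n := p) ?_).trans (by simp)
  · refine natDegree_pow_le.trans ?_
    rw [show (X + 1 : ℤ[X]) = X + C 1 by simp, natDegree_X_add_C]; omega
  · simp
  · simp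

/-- The summand. -/
def fS (κ : ℤ) (G : ZMod p → ZMod p) (x : ZMod p) : ℂ :=
  if x = 0 then 0 else
    (ZMod.stdAddChar (N := p ^ 2) ((κ * (x.val : ℤ) ^ p : ℤ) : ZMod (p ^ 2))) * ZMod.stdAddChar (G x)

theorem fS_norm (κ : ℤ) (G : ZMod p → ZMod p) (x : ZMod p) (hx : x ≠ 0) : ‖fS p κ G x‖ = 1 := by
  rw [fS, if_neg hx, norm_mul, AddChar.norm_apply, AddChar.norm_apply, one_mul]

theorem std_p_mul (n : ℤ) : ZMod.stdAddChar (N := p ^ 2) (((p : ℤ) * n : ℤ) : ZMod (p ^ 2)) =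
    ZMod.stdAddChar (n : ZMod p) := by
  rw [ZMod.stdAddChar_coe, ZMod.stdAddChar_coe]
  congr 1
  have : (p : ℂ) ≠ 0 := by exact_mod_cast hp.out.ne_zero
  push_cast
  field_simp

theorem pow_p_congr (a b : ℤ) (h : (a : ZMod p) = b) : ((p ^ 2 : ℕ) : ℤ) ∣ a ^ p - b ^ p := by
  have h1 : (p : ℤ) ∣ a - b := by
    rw [← ZMod.intCast_zmod_eq_zero_iff_dvd]; push_cast; rw [h, sub_self]
  have := dvd_sub_pow_of_dvd_sub h1 1
  simpa using this

theorem fS_pair (κ : ℤ) (G : ZMod p → ZMod p) (h y : ZMod p) (hh : h ≠ 0) (hy : y ≠ 0) (hy1 : y + 1 ≠ 0) :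
    fS p κ G (h * y + h) * (starRingEnd ℂ) (fS p κ G (h * y)) =
    ZMod.stdAddChar (N := p ^ 2) ((κ * (h.val : ℤ) ^ p : ℤ) : ZMod (p ^ 2)) *
      ZMod.stdAddChar ((κ : ZMod p) * h * (ll p).eval y + (G (h * (y + 1)) - G (h * y))) := by
  have e1 : h * y + h = h * (y + 1) := by ring
  rw [e1, fS, fS, if_neg (mul_ne_zero hh hy1), if_neg (mul_ne_zero hh hy), map_mul, ← AddChar.map_neg_eq_conj,
    ← AddChar.map_neg_eq_conj]
  have hL := congrArg (eval (y.val : ℤ)) (Lz_spec p)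
  simp only [eval_mul, eval_C, eval_sub, eval_pow, eval_add, eval_X, eval_one] at hL
  have hA := pow_p_congr p ((h * (y + 1)).val : ℤ) (h.val * (y.val + 1)) (by simp)
  have hB := pow_p_congr p ((h * y).val : ℤ) (h.val * y.val) (by simp)
  have hl : (ll p).eval y = (((Lz p).eval (y.val : ℤ) : ℤ) : ZMod p) := by
    rw [ll, eval_map, ← eq_intCast (Int.castRingHom (ZMod p)), ← eval₂_at_apply]; simp
  have h2 : ((κ * ((h * (y + 1)).val : ℤ) ^ p : ℤ) : ZMod (p ^ 2)) + -((κ * ((h * y).val : ℤ) ^ p : ℤ) : ZMod (p ^ 2)) =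
      ((κ * (h.val : ℤ) ^ p : ℤ) : ZMod (p ^ 2)) +
        (((p : ℤ) * (κ * (h.val : ℤ) ^ p * (Lz p).eval (y.val : ℤ)) : ℤ) : ZMod (p ^ 2)) := by
    rw [← sub_eq_add_neg, ← Int.cast_sub, ← Int.cast_add, ZMod.intCast_eq_intCast_iff_dvd_sub]
    have := dvd_sub (Dvd.dvd.mul_left hB κ) (Dvd.dvd.mul_left hA κ)
    refine this.trans (dvd_of_eq ?_)
    rw [mul_pow, mul_pow]
    linear_combination -(κ * (h.val : ℤ) ^ p) * hL
  have h3 : ZMod.stdAddChar (N := p ^ 2) ((κ * ((h * (y + 1)).val : ℤ) ^ p : ℤ) : ZMod (p ^ 2)) *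
      ZMod.stdAddChar (N := p ^ 2) (-((κ * ((h * y).val : ℤ) ^ p : ℤ) : ZMod (p ^ 2))) =
      ZMod.stdAddChar (N := p ^ 2) ((κ * (h.val : ℤ) ^ p : ℤ) : ZMod (p ^ 2)) *
        ZMod.stdAddChar ((κ : ZMod p) * h * (ll p).eval y) := by
    rw [← AddChar.map_add_eq_mul, h2, AddChar.map_add_eq_mul, std_p_mul, hl]
    congr 2
    push_cast
    rw [ZMod.natCast_zmod_val, ZMod.pow_card]
  rw [AddChar.map_add_eq_mul, sub_eq_add_neg, AddChar.map_add_eq_mul]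
  linear_combination (ZMod.stdAddChar (G (h * (y + 1))) * ZMod.stdAddChar (-G (h * y))) * h3

/-- the index set of `y` -/
def YY : Finset (ZMod p) := univ.filter (fun y => y ≠ 0 ∧ y + 1 ≠ 0)
/-- nonzero residues -/
def HH : Finset (ZMod p) := univ.filter (fun y => y ≠ 0)

theorem S_sq (κ : ℤ) (G : ZMod p → ZMod p) :
    ‖∑ x, fS p κ G x‖ ^ 2 ≤ p + ∑ y ∈ YY p, ‖∑ h ∈ HH p,
      ZMod.stdAddChar (N := p ^ 2) ((κ * (h.val : ℤ) ^ p : ℤ) : ZMod (p ^ 2)) *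
      ZMod.stdAddChar ((κ : ZMod p) * h * (ll p).eval y + (G (h * (y + 1)) - G (h * y)))‖ := by
  set F := fS p κ G with hF
  have h0 : F 0 = 0 := by simp [hF, fS]
  have h1 : ((‖∑ x, F x‖ : ℂ)) ^ 2 = ∑ x, F x * (starRingEnd ℂ) (F x) +
      ∑ y ∈ YY p, ∑ h ∈ HH p, F (h * y + h) * (starRingEnd ℂ) (F (h * y)) := by
    rw [← Complex.mul_conj', map_sum, Finset.sum_mul_sum, Finset.sum_comm]
    have e1 : ∀ x, ∑ x', F x' * (starRingEnd ℂ) (F x) = ∑ h, F (x + h) * (starRingEnd ℂ) (F x) := by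
      intro x
      exact (Equiv.sum_comp (Equiv.addLeft x) (fun x' => F x' * (starRingEnd ℂ) (F x))).symm
    rw [Finset.sum_congr rfl (fun x _ => e1 x), Finset.sum_comm,
      ← Finset.add_sum_erase univ _ (Finset.mem_univ (0 : ZMod p))]
    simp only [add_zero]
    congr 1
    rw [Finset.sum_comm (s := YY p)]
    have e2 : (univ.erase (0 : ZMod p)) = HH p := by ext; simp [HH]
    rw [e2]
    refine Finset.sum_congr rfl fun h hh => ?_
    have hh0 : h ≠ 0 := by simpa [HH] using hh
    rw [← Equiv.sum_comp (Equiv.mulLeft₀ h hh0) (fun x => F (x + h) * (starRingEnd ℂ) (F x))]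
    symm
    refine Finset.sum_subset (Finset.subset_univ _) ?_
    intro y _ hy
    change F (h * y + h) * (starRingEnd ℂ) (F (h * y)) = 0
    have : y = 0 ∨ y + 1 = 0 := by
      by_contra hc
      push Not at hc
      exact hy (by simp [YY, hc.1, hc.2])
    rcases this with rfl | h1
    · simp [h0]
    · have : h * y + h = 0 := by linear_combination h * h1
      rw [this, h0, zero_mul]
  have h2 : ‖∑ x, F x‖ ^ 2 = ‖((‖∑ x, F x‖ : ℂ)) ^ 2‖ := by simp
  rw [h2, h1]
  refine (norm_add_le _ _).trans (add_le_add ?_ ?_)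
  · refine (norm_sum_le _ _).trans ?_
    refine (Finset.sum_le_sum (g := fun _ => (1 : ℝ)) fun x _ => ?_).trans ?_
    · rw [norm_mul, RCLike.norm_conj]
      by_cases hx : x = 0
      · rw [hx, h0]; simp
      · rw [hF, fS_norm p κ G x hx]; norm_num
    · simp [ZMod.card]
  · refine (norm_sum_le _ _).trans (Finset.sum_le_sum fun y hy => le_of_eq ?_)
    congr 1
    refine Finset.sum_congr rfl fun h hh => ?_
    simp only [YY, HH, Finset.mem_filter, Finset.mem_univ, true_and] at hy hh
    exact fS_pair p κ G h y hh hy.1 hy.2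

theorem HH_card : ((HH p).card : ℝ) ≤ p := by
  have := (Finset.card_filter_le (univ : Finset (ZMod p)) (fun y => y ≠ 0))
  rw [Finset.card_univ, ZMod.card] at this
  exact_mod_cast this

theorem YY_card : ((YY p).card : ℝ) ≤ p := by
  have := (Finset.card_filter_le (univ : Finset (ZMod p)) (fun y => y ≠ 0 ∧ y + 1 ≠ 0))
  rw [Finset.card_univ, ZMod.card] at this
  exact_mod_cast this

theorem S_sq2 (κ : ℤ) (G : ZMod p → ZMod p) (R : ℝ) (hR : ∀ y ∈ YY p, ∑ y' ∈ YY p, ‖∑ h ∈ HH p,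
      ZMod.stdAddChar (((κ : ZMod p) * h * (ll p).eval y + (G (h * (y + 1)) - G (h * y))) -
       ((κ : ZMod p) * h * (ll p).eval y' + (G (h * (y' + 1)) - G (h * y'))))‖ ≤ R * p ) :
    ‖∑ x, fS p κ G x‖ ^ 2 ≤ p + p * Real.sqrt (R * p) := by
  refine (S_sq p κ G).trans ?_
  gcongr
  have hp0 : (0 : ℝ) ≤ p := Nat.cast_nonneg _
  rcases Finset.eq_empty_or_nonempty (YY p) with hY | ⟨y0, hy0⟩
  · rw [hY]; simp; positivity
  have hR0 : 0 ≤ R * p := (Finset.sum_nonneg fun _ _ => norm_nonneg _).trans (hR y0 hy0)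
  refine Real.le_sqrt_of_sq_le ?_ |>.trans (le_of_eq (?_ : Real.sqrt (p ^ 2 * (R * p)) = _))
  · refine (bilin (HH p) (YY p) _ (fun a => (AddChar.norm_apply _ _).le) _).trans ?_
    calc _ ≤ (p : ℝ) * (∑ y ∈ YY p, R * p) := by
          refine mul_le_mul (HH_card p) ?_ (Finset.sum_nonneg fun _ _ => Finset.sum_nonneg fun _ _ => norm_nonneg _) hp0
          refine Finset.sum_le_sum fun y hy => (le_of_eq ?_).trans (hR y hy)
          refine Finset.sum_congr rfl fun y' _ => ?_
          congr 1
          refine Finset.sum_congr rfl fun h _ => ?_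
          rw [← AddChar.map_neg_eq_conj, ← AddChar.map_add_eq_mul, ← sub_eq_add_neg]
      _ ≤ p * (p * (R * p)) := by
          rw [Finset.sum_const, nsmul_eq_mul]
          gcongr
          exact_mod_cast YY_card p
      _ = _ := by ring
  · rw [Real.sqrt_mul (by positivity), Real.sqrt_sq hp0]

end
end Kor

namespace Kor

section
variable (p : ℕ) [hp : Fact p.Prime]
open Polynomial

theorem std_ne_one : (ZMod.stdAddChar (N := p)) ≠ 1 := by
  intro h
  have h1 : ZMod.stdAddChar (N := p) (1 : ZMod p) = ZMod.stdAddChar (N := p) 0 := by rw [h]; simp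
  exact one_ne_zero (ZMod.injective_stdAddChar h1)

theorem lin_sum (a : ZMod p) (ha : a ≠ 0) : ‖∑ h ∈ HH p, ZMod.stdAddChar (N := p) (h * a)‖ ≤ 1 := by
  classical
  have h1 := AddChar.sum_mulShift (ψ := ZMod.stdAddChar (N := p)) a (ZMod.isPrimitive_stdAddChar p)
  rw [if_neg ha] at h1
  have e2 : HH p = (univ.erase (0 : ZMod p)) := by ext; simp [HH]
  rw [← Finset.add_sum_erase univ _ (Finset.mem_univ (0 : ZMod p)), ← e2] at h1
  have h2 : ∑ h ∈ HH p, ZMod.stdAddChar (N := p) (h * a) = -1 := by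
    simp only [zero_mul, AddChar.map_zero_eq_one, Nat.cast_zero] at h1
    linear_combination h1
  rw [h2]; simp

/-- the twist -/
def GG (r : ℕ) (b : ℕ → ZMod p) (x : ZMod p) : ZMod p := ∑ i ∈ range (r + 1), b i * (x⁻¹) ^ i

theorem triv_sum {α : Type*} (H : Finset α) (g : α → ZMod p) :
    ‖∑ h ∈ H, ZMod.stdAddChar (N := p) (g h)‖ ≤ H.card := by
  refine (norm_sum_le _ _).trans ?_
  simp [AddChar.norm_apply]

theorem caseA (κ : ℤ) (hκ : (κ : ZMod p) ≠ 0) (r : ℕ) (b : ℕ → ZMod p) (hb : ∀ i, 1 ≤ i → i ≤ r → b i = 0)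
    (B : ℕ) (hB : 3 ≤ B) (hBp : B ^ 3 ≤ p) :
    ‖∑ x, fS p κ (GG p r b) x‖ ^ 2 ≤ p + p * Real.sqrt ((5 * p / (B + 1)) * p) := by
  classical
  have hG : ∀ x, GG p r b x = b 0 := by
    intro x
    rw [GG, Finset.sum_eq_single 0]
    · simp
    · intro i hi h0
      rw [hb i (by omega) (by have := Finset.mem_range.1 hi; omega), zero_mul]
    · simp
  refine S_sq2 p κ _ _ ?_
  intro y hy
  simp only [hG]
  set N := ((YY p).filter (fun y' => (ll p).eval y' = (ll p).eval y)).card with hN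
  have hlev := levelset p (ll p) (ll1 p) (ll2 p) (ll_deg p) B hB hBp ((ll p).eval y)
    ((YY p).filter (fun y' => (ll p).eval y' = (ll p).eval y)) (by
      intro x hx
      simp only [YY, Finset.mem_filter, Finset.mem_univ, true_and] at hx
      exact ⟨mul_ne_zero hx.1.1 hx.1.2, hx.2⟩)
  rw [← hN] at hlev
  have hNR : (N : ℝ) + 1 ≤ 5 * p / (B + 1) := by
    have hB' : (3 : ℝ) ≤ B := by exact_mod_cast hB
    have h1 : (N : ℝ) * (((B : ℝ) ^ 2 - 1) / 2) ≤ (B : ℝ) ^ 2 + 2 * p * (B - 1) := by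
      have h2 : (N : ℝ) * ((B ^ 2 / 2 : ℕ) : ℝ) ≤ (B : ℝ) ^ 2 + 2 * p * (B - 1) := by
        have : ((B - 1 : ℕ) : ℝ) = (B : ℝ) - 1 := by rw [Nat.cast_sub (by omega)]; simp
        rw [← this]
        exact_mod_cast hlev
      refine le_trans (mul_le_mul_of_nonneg_left ?_ (Nat.cast_nonneg _)) h2
      have h3 : B ^ 2 ≤ 2 * (B ^ 2 / 2) + 1 := by omega
      have h4 : (B : ℝ) ^ 2 ≤ 2 * ((B ^ 2 / 2 : ℕ) : ℝ) + 1 := by exact_mod_cast h3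
      linarith
    have hp3 : (B : ℝ) ^ 3 ≤ p := by exact_mod_cast hBp
    rw [le_div_iff₀ (by positivity)]
    have h5 : ((N : ℝ) * (B + 1)) * (B - 1) ≤ 2 * (B : ℝ) ^ 2 + 4 * p * (B - 1) := by nlinarith
    have h6 : ((N : ℝ) * (B + 1)) ≤ 3 * B + 4 * p := by
      by_contra hcon
      push Not at hcon
      have : (3 * B + 4 * p) * ((B : ℝ) - 1) < ((N : ℝ) * (B + 1)) * (B - 1) :=
        mul_lt_mul_of_pos_right hcon (by linarith)
      nlinarith
    have h7 : 3 * (B : ℝ) + (B + 1) ≤ p := by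
      refine le_trans ?_ hp3
      nlinarith [mul_nonneg (by linarith : (0:ℝ) ≤ B) (mul_nonneg (by linarith : (0:ℝ) ≤ B - 3) (by linarith : (0:ℝ) ≤ (B:ℝ) + 3))]
    linarith
  calc _ ≤ ∑ y' ∈ YY p, ((if (ll p).eval y' = (ll p).eval y then (p : ℝ) else 0) + 1) := by
        refine Finset.sum_le_sum fun y' _ => ?_
        split_ifs with hh
        · refine (triv_sum p _ _).trans ((HH_card p).trans (by linarith))
        · rw [zero_add]
          refine (le_of_eq ?_).trans (lin_sum p ((κ : ZMod p) * ((ll p).eval y - (ll p).eval y')) (mul_ne_zero hκ (sub_ne_zero.2 (Ne.symm hh))))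
          congr 1
          refine Finset.sum_congr rfl fun h _ => ?_
          congr 1
          ring
    _ = N * p + (YY p).card := by
        rw [Finset.sum_add_distrib, ← Finset.sum_filter, Finset.sum_const, Finset.sum_const, hN]
        simp
    _ ≤ (N + 1) * p := by have := YY_card p; linarith
    _ ≤ _ := by gcongr

theorem root_count (j : ℕ) (hj : 1 ≤ j) (v : ZMod p) :
    ((YY p).filter (fun y => ((y + 1)⁻¹) ^ j - (y⁻¹) ^ j = v)).card ≤ 2 * j := by
  classical
  set P : (ZMod p)[X] := X ^ j - (X + 1) ^ j - C v * (X ^ j * (X + 1) ^ j) with hP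
  have hP0 : P ≠ 0 := by
    intro h
    have := congrArg (eval 0) h
    simp [hP, show j ≠ 0 by omega] at this
  have hX1 : (X + 1 : (ZMod p)[X]).natDegree ≤ 1 := by
    rw [show (X + 1 : (ZMod p)[X]) = X + C 1 by simp, natDegree_X_add_C]
  have hX2 : ((X + 1 : (ZMod p)[X]) ^ j).natDegree ≤ j := natDegree_pow_le.trans (by nlinarith)
  have hdeg : P.natDegree ≤ 2 * j := by
    refine (natDegree_sub_le_of_le (natDegree_sub_le_of_le (m := j) (n := j) (by simp) hX2) (n := 2 * j) ?_).trans (by simp; omega)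
    refine (natDegree_C_mul_le _ _).trans (natDegree_mul_le.trans ?_)
    rw [natDegree_X_pow]; omega
  refine (Finset.card_le_card ?_).trans ((Multiset.toFinset_card_le P.roots).trans ((card_roots' P).trans hdeg))
  intro y hy
  simp only [YY, Finset.mem_filter, Finset.mem_univ, true_and] at hy
  rw [Multiset.mem_toFinset, mem_roots hP0, IsRoot.def, hP]
  simp only [eval_sub, eval_pow, eval_X, eval_add, eval_one, eval_mul, eval_C]
  obtain ⟨⟨h0, h1⟩, h2⟩ := hy
  rw [← h2, inv_pow, inv_pow]
  field_simp
  ring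

theorem caseB (κ : ℤ) (r : ℕ) (hr : r < p) (b : ℕ → ZMod p) (j : ℕ) (hj : 1 ≤ j) (hjr : j ≤ r) (hb : b j ≠ 0) :
    ‖∑ x, fS p κ (GG p r b) x‖ ^ 2 ≤ p + p * Real.sqrt ((2 * r + (r + 1) * Real.sqrt p) * p) := by
  classical
  refine S_sq2 p κ _ _ ?_
  intro y hy
  let cc : ℕ → ZMod p → ZMod p := fun i y => ((y + 1)⁻¹) ^ i - (y⁻¹) ^ i
  have hdiff : ∀ h y, GG p r b (h * (y + 1)) - GG p r b (h * y) = ∑ i ∈ range (r + 1), b i * cc i y * (h⁻¹) ^ i := by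
    intro h y
    simp only [GG, cc]
    rw [← Finset.sum_sub_distrib]
    refine Finset.sum_congr rfl fun i _ => ?_
    rw [mul_inv, mul_inv, mul_pow, mul_pow]; ring
  have hgen : ∀ y', cc j y' ≠ cc j y → ‖∑ h ∈ HH p,
      ZMod.stdAddChar (((κ : ZMod p) * h * (ll p).eval y + (GG p r b (h * (y + 1)) - GG p r b (h * y))) -
       ((κ : ZMod p) * h * (ll p).eval y' + (GG p r b (h * (y' + 1)) - GG p r b (h * y'))))‖ ≤ (r + 1) * Real.sqrt p := by
    intro y' hne
    let dd : ℕ → ZMod p := fun i => b i * (cc i y - cc i y')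
    let J := (range (r + 1)).filter (fun i => dd i ≠ 0)
    have hjJ : j ∈ J := by
      simp only [J, Finset.mem_filter, Finset.mem_range]
      exact ⟨by omega, mul_ne_zero hb (sub_ne_zero.2 (Ne.symm hne))⟩
    let s := J.max' ⟨j, hjJ⟩
    have hsJ : s ∈ J := Finset.max'_mem _ _
    have hjs : j ≤ s := Finset.le_max' _ _ hjJ
    have hsr : s ≤ r := by
      have := (Finset.mem_filter.1 hsJ).1
      have := Finset.mem_range.1 this
      omega
    let c : ℤ → ZMod p := fun i => if i < 0 then (κ : ZMod p) * ((ll p).eval y - (ll p).eval y') else dd i.toNat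
    have hW := weil p (ZMod.stdAddChar (N := p)) (std_ne_one p) c (s := s) (by omega) (by omega) (by
      simp only [c]; rw [if_neg (by omega)]; simpa using (Finset.mem_filter.1 hsJ).2)
    refine le_trans (le_of_eq ?_) (hW.trans ?_)
    · congr 1
      change _ = ∑ x ∈ HH p, _
      refine Finset.sum_nbij' (fun x => x⁻¹) (fun x => x⁻¹) ?_ ?_ ?_ ?_ ?_
      · intro x hx; simpa [HH] using hx
      · intro x hx; simpa [HH] using hx
      · intro x _; simp
      · intro x _; simp
      · intro h hh
        congr 1
        rw [hdiff, hdiff]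
        have e1 : ∑ i ∈ Finset.Icc (-1 : ℤ) s, c i * (h⁻¹) ^ i =
            (κ : ZMod p) * ((ll p).eval y - (ll p).eval y') * h + ∑ i ∈ range (s + 1), dd i * (h⁻¹) ^ i := by
          have e2 : Finset.Icc (-1 : ℤ) s = insert (-1) ((range (s + 1)).image (fun i : ℕ => (i : ℤ))) := by
            ext z
            simp only [Finset.mem_Icc, Finset.mem_insert, Finset.mem_image, Finset.mem_range]
            constructor
            · rintro ⟨h1, h2⟩
              by_cases hz : z = -1
              · exact Or.inl hz
              · exact Or.inr ⟨z.toNat, by omega, by omega⟩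
            · rintro (rfl | ⟨a, ha, rfl⟩) <;> omega
          rw [e2, Finset.sum_insert, Finset.sum_image]
          · congr 1
            · simp [c]
            · refine Finset.sum_congr rfl fun i _ => ?_
              simp only [c]
              rw [if_neg (by omega), zpow_natCast, Int.toNat_natCast]
          · intro a _ b _ hab; simpa using hab
          · simp only [Finset.mem_image, not_exists]; intro a ha; omega
        rw [e1]
        have e3 : ∑ i ∈ range (s + 1), dd i * (h⁻¹) ^ i = ∑ i ∈ range (r + 1), dd i * (h⁻¹) ^ i := by
          refine Finset.sum_subset (Finset.range_mono (by omega)) ?_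
          intro i hi hi2
          by_cases h0 : dd i = 0
          · rw [h0, zero_mul]
          · exfalso
            have := Finset.le_max' J i (Finset.mem_filter.2 ⟨hi, h0⟩)
            simp only [Finset.mem_range] at hi2
            change i ≤ s at this
            omega
        rw [e3]
        have e4 : ∑ i ∈ range (r + 1), dd i * (h⁻¹) ^ i = ∑ i ∈ range (r + 1), b i * cc i y * (h⁻¹) ^ i
            - ∑ i ∈ range (r + 1), b i * cc i y' * (h⁻¹) ^ i := by
          rw [← Finset.sum_sub_distrib]
          refine Finset.sum_congr rfl fun i _ => ?_
          simp only [dd]; ring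
        rw [e4]; ring
    · have : (s : ℝ) ≤ r := by exact_mod_cast hsr
      gcongr
  have hN := root_count p j hj (cc j y)
  calc _ ≤ ∑ y' ∈ YY p, ((if cc j y' = cc j y then (p : ℝ) else 0) + (r + 1) * Real.sqrt p) := by
        refine Finset.sum_le_sum fun y' _ => ?_
        split_ifs with hh
        · refine (triv_sum p _ _).trans ((HH_card p).trans ?_)
          have : 0 ≤ (r + 1) * Real.sqrt p := by positivity
          linarith
        · rw [zero_add]
          exact hgen y' hh
    _ = ((YY p).filter (fun y' => cc j y' = cc j y)).card * p + (YY p).card * ((r + 1) * Real.sqrt p) := by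
        rw [Finset.sum_add_distrib, ← Finset.sum_filter, Finset.sum_const, Finset.sum_const]
        simp
    _ ≤ ((2 * r : ℕ) : ℝ) * p + p * ((r + 1) * Real.sqrt p) := by
        have h1 : ((YY p).filter (fun y' => cc j y' = cc j y)).card ≤ 2 * r := hN.trans (by omega)
        have h2 : (((YY p).filter (fun y' => cc j y' = cc j y)).card : ℝ) ≤ ((2 * r : ℕ) : ℝ) := by exact_mod_cast h1
        have h3 := YY_card p
        gcongr
    _ = _ := by push_cast; ring

end
end Kor

namespace Kor

theorem exp1_lb : (2.7 : ℝ) < Real.exp 1 := by have := Real.exp_one_gt_d9; linarith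

theorem log_le_div (x : ℝ) (hx : 0 < x) : Real.log x ≤ x / 2.7 := by
  have h := Real.add_one_le_exp (Real.log x - 1)
  rw [Real.exp_sub, Real.exp_log hx] at h
  have h1 : x / Real.exp 1 ≤ x / 2.7 := by
    have := exp1_lb
    gcongr
  linarith

theorem log_two_le : Real.log 2 ≤ 0.7 := by have := Real.log_two_lt_d9; linarith

/-- `p ≥ 4000` -/
theorem p_large (p v : ℝ) (hp : 0 < p) (hv : 9 ≤ v) (hvp : v ≤ Real.log (2 * p)) : 3600 ≤ p := by
  have h1 : Real.exp 9 ≤ 2 * p := by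
    rw [← Real.exp_log (show 0 < 2 * p by positivity)]
    exact Real.exp_le_exp.2 (hv.trans hvp)
  have h2 : Real.exp 9 = Real.exp 1 ^ 9 := by rw [← Real.exp_nat_mul]; norm_num
  have h3 : (2.7 : ℝ) ^ 9 ≤ Real.exp 1 ^ 9 := pow_le_pow_left₀ (by norm_num) exp1_lb.le 9
  rw [← h2] at h3
  norm_num at h3
  linarith

/-- small part -/
theorem small_part (p v : ℝ) (hp : 0 < p) (hv : 9 ≤ v) (hvp : v ≤ Real.log (2 * p)) :
    (1 / p + 1 / Real.sqrt p) * v ≤ 0.85 := by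
  have hpl := p_large p v hp hv hvp
  set u := Real.sqrt p with hu
  have hu2 : u ^ 2 = p := Real.sq_sqrt hp.le
  have hu60 : 60 ≤ u := Real.le_sqrt_of_sq_le (by norm_num; exact hpl)
  have hu0 : 0 < u := by linarith
  have h1 : Real.log (2 * p) ≤ 0.7 + 2 * (u / 2.7) := by
    rw [← hu2, Real.log_mul (by norm_num) (by positivity), Real.log_pow]
    have := log_le_div u hu0
    have := log_two_le
    push_cast
    linarith
  have h2 : 1 / p + 1 / u ≤ (61 / 60) / u := by
    rw [← hu2, div_add_div _ _ (by positivity) hu0.ne', div_le_div_iff₀ (by positivity) hu0]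
    nlinarith [mul_pos hu0 hu0]
  have h3 : 0 ≤ v := by linarith
  calc _ ≤ (61 / 60) / u * (0.7 + 2 * (u / 2.7)) := by
        have := hvp.trans h1
        gcongr
    _ = 61 / 60 * (0.7 / u + 2 / 2.7) := by field_simp
    _ ≤ 61 / 60 * (0.7 / 60 + 2 / 2.7) := by gcongr
    _ ≤ _ := by norm_num

/-- from a bound of `X^2` to the conclusion -/
theorem from_sq (p v X q : ℝ) (hp : 0 < p) (hv : 9 ≤ v) (hvp : v ≤ Real.log (2 * p)) (hq : 0 ≤ q)
    (hX : X ^ 2 ≤ p + p ^ 2 * q ^ 2) (hqv : q * v ≤ 8) : (1 + X) * v ≤ 9 * p := by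
  have hs : Real.sqrt p ^ 2 = p := Real.sq_sqrt hp.le
  have hs0 : 0 < Real.sqrt p := Real.sqrt_pos.2 hp
  have h1 : X ≤ Real.sqrt p + p * q := by
    by_contra hcon
    push Not at hcon
    have h0 : 0 ≤ p * q := by positivity
    have h2 : (Real.sqrt p + p * q) ^ 2 < X ^ 2 := pow_lt_pow_left₀ hcon (by positivity) (by norm_num)
    nlinarith [mul_nonneg hs0.le h0]
  have h2 := small_part p v hp hv hvp
  have h3 : (1 / p + 1 / Real.sqrt p) * v * p ≤ 0.85 * p := by gcongr
  have h4 : (1 / p + 1 / Real.sqrt p) * v * p = v + Real.sqrt p * v := by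
    have : 1 / Real.sqrt p * p = Real.sqrt p := by
      rw [div_mul_eq_mul_div, one_mul, Real.div_sqrt]
    have h5 : 1 / p * p = 1 := by field_simp
    linear_combination v * this + v * h5
  have h5 : p * (q * v) ≤ p * 8 := by gcongr
  have h6 : X * v ≤ (Real.sqrt p + p * q) * v := by
    have : 0 ≤ v := by linarith
    gcongr
  linarith

section
variable (p : ℕ) [hp : Fact p.Prime]

theorem heilA (κ : ℤ) (hκ : (κ : ZMod p) ≠ 0) (r : ℕ) (b : ℕ → ZMod p) (hb : ∀ i, 1 ≤ i → i ≤ r → b i = 0)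
    (v : ℝ) (hv : 9 ≤ v) (hvp : v ≤ Real.log (2 * p)) :
    (1 + ‖∑ x, fS p κ (GG p r b) x‖) * v ≤ 9 * p := by
  have hp0 : (0 : ℝ) < p := by exact_mod_cast hp.out.pos
  have hpl := p_large p v hp0 hv hvp
  have hpl' : 3600 ≤ p := by exact_mod_cast hpl
  set B := Nat.findGreatest (fun B => B ^ 3 ≤ p) p with hB
  have hB1 : B ^ 3 ≤ p := Nat.findGreatest_spec (P := fun B => B ^ 3 ≤ p) (m := 3) (by omega) (by norm_num; omega)
  have hB3 : 3 ≤ B := Nat.le_findGreatest (by omega) (by norm_num; omega)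
  have hB2 : p < (B + 1) ^ 3 := by
    by_contra hcon
    push Not at hcon
    have : B + 1 ≤ p := le_trans (Nat.le_self_pow (by norm_num) _) hcon
    have := Nat.le_findGreatest (P := fun B => B ^ 3 ≤ p) this hcon
    omega
  have hA := caseA p κ hκ r b hb B hB3 hB1
  set t : ℝ := (B : ℝ) + 1 with ht
  have ht1 : 1 ≤ t := by rw [ht]; have : (0 : ℝ) ≤ B := Nat.cast_nonneg _; linarith
  have ht0 : 0 < t := by linarith
  have hpt : (p : ℝ) ≤ t ^ 3 := by rw [ht]; exact_mod_cast hB2.le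
  set s := Real.sqrt (Real.sqrt t) with hs
  have hs2 : s ^ 2 = Real.sqrt t := Real.sq_sqrt (Real.sqrt_nonneg _)
  have hs4 : s ^ 4 = t := by
    rw [show s ^ 4 = (s ^ 2) ^ 2 by ring, hs2, Real.sq_sqrt ht0.le]
  have hs1 : 1 ≤ s := Real.one_le_sqrt.2 (Real.one_le_sqrt.2 ht1)
  have hs0 : 0 < s := by linarith
  refine from_sq p v _ (1.5 / s) hp0 hv hvp (by positivity) (hA.trans ?_) ?_
  · have : Real.sqrt (5 * p / t * p) ≤ p * (1.5 / s) ^ 2 := by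
      apply Real.sqrt_le_iff.2 ⟨by positivity, ?_⟩
      rw [mul_pow, ← pow_mul, div_pow, hs4]
      rw [show 5 * (p : ℝ) / t * p = p ^ 2 * (5 / t) by ring]
      gcongr
      norm_num
    nlinarith
  · have h1 : Real.log (2 * p) ≤ 0.7 + 12 * (s / 2.7) := by
      have h2 : Real.log (2 * p) ≤ Real.log (2 * s ^ 12) := by
        apply Real.log_le_log (by positivity)
        rw [show s ^ 12 = (s ^ 4) ^ 3 by ring, hs4]
        gcongr
      rw [Real.log_mul (x := 2) (y := s ^ 12) (by norm_num) (by positivity), Real.log_pow] at h2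
      have := log_le_div s hs0
      have := log_two_le
      push_cast at h2
      linarith
    calc 1.5 / s * v ≤ 1.5 / s * (0.7 + 12 * (s / 2.7)) := by
          have := hvp.trans h1
          gcongr
      _ = 1.5 * (0.7 / s + 12 / 2.7) := by field_simp
      _ ≤ 1.5 * (0.7 / 1 + 12 / 2.7) := by gcongr
      _ ≤ 8 := by norm_num

theorem heilB (κ : ℤ) (r : ℕ) (hr : r < p) (b : ℕ → ZMod p) (j : ℕ) (hj : 1 ≤ j) (hjr : j ≤ r) (hb : b j ≠ 0)
    (v : ℝ) (hv : 9 * ((r : ℝ) + 2) ≤ v) (hvp : v ≤ Real.log (2 * p)) :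
    (1 + ‖∑ x, fS p κ (GG p r b) x‖) * v ≤ 9 * p := by
  have hp0 : (0 : ℝ) < p := by exact_mod_cast hp.out.pos
  have hr0 : (0 : ℝ) ≤ r := Nat.cast_nonneg _
  have hv9 : 9 ≤ v := by linarith
  have hpl := p_large p v hp0 hv9 hvp
  have hA := caseB p κ r hr b j hj hjr hb
  set u := Real.sqrt p with hu
  have hu2 : u ^ 2 = p := Real.sq_sqrt hp0.le
  have hu60 : 60 ≤ u := Real.le_sqrt_of_sq_le (by norm_num; exact_mod_cast hpl)
  have hu0 : 0 < u := by linarith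
  have hv0 : 0 < v := by linarith
  set q := Real.sqrt (Real.sqrt (v / (3 * u))) with hq
  have hq2 : q ^ 2 = Real.sqrt (v / (3 * u)) := Real.sq_sqrt (Real.sqrt_nonneg _)
  have hq4 : q ^ 4 = v / (3 * u) := by
    rw [show q ^ 4 = (q ^ 2) ^ 2 by ring, hq2, Real.sq_sqrt (by positivity)]
  have hq0 : 0 ≤ q := Real.sqrt_nonneg _
  refine from_sq p v _ q hp0 hv9 hvp hq0 (hA.trans ?_) ?_
  · have : Real.sqrt ((2 * r + (r + 1) * u) * p) ≤ p * q ^ 2 := by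
      apply Real.sqrt_le_iff.2 ⟨by positivity, ?_⟩
      rw [mul_pow, ← pow_mul, hq4]
      have h1 : 2 * (r : ℝ) + (r + 1) * u ≤ v / 3 * u := by nlinarith
      calc _ ≤ (v / 3 * u) * p := by gcongr
        _ = _ := by rw [← hu2]; field_simp
    nlinarith
  · have h1 : v ^ 5 ≤ 12288 * u := by
      have h2 : Real.exp v ≤ 2 * p := by
        rw [← Real.exp_log (show (0 : ℝ) < 2 * p by positivity)]
        exact Real.exp_le_exp.2 hvp
      have h3 : (0.27 * v) ≤ Real.exp (v / 10) := by
        have := log_le_div (v / 10) (by positivity)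
        have h5 := Real.add_one_le_exp (v / 10 - 1)
        rw [Real.exp_sub, le_div_iff₀ (Real.exp_pos 1)] at h5
        have := exp1_lb
        nlinarith
      have h4 : (0.27 * v) ^ 10 ≤ 2 * p := by
        refine le_trans (pow_le_pow_left₀ (by positivity) h3 10) (le_trans (le_of_eq ?_) h2)
        rw [← Real.exp_nat_mul]; congr 1; push_cast; ring
      have h5 : ((0.27 * v) ^ 5) ≤ 1.5 * u := by
        refine le_of_sq_le_sq ?_ (by positivity)
        have h7 : ((0.27 * v) ^ 5) ^ 2 = (0.27 * v) ^ 10 := by ring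
        rw [h7, mul_pow 1.5 u 2, hu2]
        refine h4.trans ?_
        norm_num
        linarith
      have h6 : (0.27 * v) ^ 5 = 0.27 ^ 5 * v ^ 5 := by ring
      rw [h6] at h5
      norm_num at h5
      linarith
    refine le_of_pow_le_pow_left₀ (n := 4) (by norm_num) (by norm_num) ?_
    rw [mul_pow, hq4, div_mul_eq_mul_div, div_le_iff₀ (by positivity)]
    nlinarith
end
end Kor

namespace Kor

section
variable (q : ℕ) [hq : Fact q.Prime]
open Polynomial

/-- the phase polynomial -/
def FF (d : ℕ) (kk : ℕ → ℤ) : ℤ[X] := ∑ j ∈ range d, C (kk j) * X ^ (j + 1)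

/-- the exponential sum -/
def SqN (d : ℕ) (kk : ℕ → ℤ) : ℂ :=
  ∑ h ∈ range (q ^ 2), ZMod.stdAddChar (N := q ^ 2) (((FF d kk).eval (h : ℤ) : ℤ) : ZMod (q ^ 2))

theorem SqN_triv (d : ℕ) (kk : ℕ → ℤ) : ‖SqN q d kk‖ ≤ (q : ℝ) ^ 2 := by
  refine (norm_sum_le _ _).trans ?_
  simp [AddChar.norm_apply]

theorem inner_sum (c : ℤ) : ∑ b ∈ range q, ZMod.stdAddChar (N := q) ((b * c : ℤ) : ZMod q) =
    if (q : ℤ) ∣ c then (q : ℂ) else 0 := by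
  classical
  have h1 := AddChar.sum_mulShift (ψ := ZMod.stdAddChar (N := q)) (c : ZMod q) (ZMod.isPrimitive_stdAddChar q)
  have h2 : ∑ b ∈ range q, ZMod.stdAddChar (N := q) ((b * c : ℤ) : ZMod q) = ∑ x : ZMod q, ZMod.stdAddChar (N := q) (x * c) := by
    refine Finset.sum_nbij' (fun b : ℕ => (b : ZMod q)) (fun x => x.val) ?_ ?_ ?_ ?_ ?_
    · simp
    · intro x _; exact Finset.mem_range.2 (ZMod.val_lt x)
    · intro b hb; exact ZMod.val_cast_of_lt (Finset.mem_range.1 hb)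
    · intro x _; simp
    · intro b _; push_cast; rfl
  rw [h2, h1]
  by_cases hc : (q : ℤ) ∣ c
  · rw [if_pos hc, if_pos ((ZMod.intCast_zmod_eq_zero_iff_dvd c q).2 hc), ZMod.card]
  · rw [if_neg hc, if_neg (fun h => hc ((ZMod.intCast_zmod_eq_zero_iff_dvd c q).1 h)), Nat.cast_zero]

theorem SqN_formula (d : ℕ) (kk : ℕ → ℤ) : SqN q d kk =
    q * ∑ a ∈ (range q).filter (fun a : ℕ => (q : ℤ) ∣ (derivative (FF d kk)).eval (a : ℤ)),
      ZMod.stdAddChar (N := q ^ 2) (((FF d kk).eval (a : ℤ) : ℤ) : ZMod (q ^ 2)) := by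
  classical
  have hq0 := hq.out.pos
  set F := FF d kk with hF
  have h1 : SqN q d kk = ∑ a ∈ range q, ∑ b ∈ range q,
      ZMod.stdAddChar (N := q ^ 2) ((F.eval ((a + q * b : ℕ) : ℤ) : ℤ) : ZMod (q ^ 2)) := by
    rw [SqN, ← Finset.sum_product']
    refine Finset.sum_nbij' (fun h => (h % q, h / q)) (fun ab => ab.1 + q * ab.2) ?_ ?_ ?_ ?_ ?_
    · intro h hh
      rw [Finset.mem_range, sq] at hh
      simp only [Finset.mem_product, Finset.mem_range]
      exact ⟨Nat.mod_lt _ hq0, Nat.div_lt_of_lt_mul hh⟩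
    · rintro ⟨a, b⟩ hab
      simp only [Finset.mem_product, Finset.mem_range] at hab ⊢
      nlinarith
    · intro h _; exact Nat.mod_add_div h q
    · rintro ⟨a, b⟩ hab
      simp only [Finset.mem_product, Finset.mem_range] at hab
      simp only [Nat.add_mul_mod_self_left, Nat.mod_eq_of_lt hab.1, Nat.add_mul_div_left _ _ hq0,
        Nat.div_eq_of_lt hab.1, zero_add]
    · intro h _
      simp only [Nat.mod_add_div, hF]
  rw [h1, Finset.mul_sum, Finset.sum_filter]
  refine Finset.sum_congr rfl fun a _ => ?_
  have h2 : ∀ b : ℕ, ZMod.stdAddChar (N := q ^ 2) ((F.eval ((a + q * b : ℕ) : ℤ) : ℤ) : ZMod (q ^ 2)) =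
      ZMod.stdAddChar (N := q ^ 2) ((F.eval (a : ℤ) : ℤ) : ZMod (q ^ 2)) *
        ZMod.stdAddChar (N := q) (((b : ℤ) * (derivative F).eval (a : ℤ) : ℤ) : ZMod q) := by
    intro b
    rw [← std_p_mul q, ← AddChar.map_add_eq_mul]
    congr 1
    obtain ⟨k, hk⟩ := F.binomExpansion (a : ℤ) ((q : ℤ) * b)
    rw [← Int.cast_add, ZMod.intCast_eq_intCast_iff_dvd_sub]
    push_cast
    rw [hk]
    exact ⟨-(k * b ^ 2), by ring⟩
  rw [Finset.sum_congr rfl (fun b _ => h2 b), ← Finset.mul_sum, inner_sum]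
  split_ifs <;> ring

theorem deriv_FF (d : ℕ) (kk : ℕ → ℤ) : derivative (FF d kk) = ∑ j ∈ range d, C ((j + 1 : ℤ) * kk j) * X ^ j := by
  rw [FF, derivative_sum]
  refine Finset.sum_congr rfl fun j _ => ?_
  rw [derivative_C_mul, derivative_X_pow]
  simp only [Nat.add_sub_cancel, map_mul, map_add, map_one]
  push_cast
  simp
  ring

theorem SqN_good (d : ℕ) (kk : ℕ → ℤ) (lo w : ℕ) (hw : 1 ≤ w)
    (hsupp : ∀ j < d, kk j ≠ 0 → lo ≤ j ∧ j < lo + w)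
    (hgood : ∃ j < d, ¬ (q : ℤ) ∣ (j + 1 : ℤ) * kk j) : ‖SqN q d kk‖ ≤ w * q := by
  classical
  obtain ⟨j0, hj0, hnd⟩ := hgood
  have hj0' : lo ≤ j0 ∧ j0 < lo + w := by
    apply hsupp j0 hj0
    intro h; rw [h] at hnd; simp at hnd
  set P : (ZMod q)[X] := ∑ j ∈ range d, C ((((j + 1 : ℤ) * kk j : ℤ)) : ZMod q) * X ^ (j - lo) with hP
  -- only indices `j ≥ lo` matter
  have hP0 : P ≠ 0 := by
    intro h
    have h1 := congrArg (fun f => coeff f (j0 - lo)) h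
    simp only [hP, finsetSum_coeff, coeff_C_mul_X_pow, coeff_zero] at h1
    rw [Finset.sum_eq_single j0] at h1
    · rw [if_pos rfl] at h1
      exact hnd ((ZMod.intCast_zmod_eq_zero_iff_dvd _ q).1 h1)
    · intro j hj hne
      by_cases hk : kk j = 0
      · simp [hk]
      · have := hsupp j (Finset.mem_range.1 hj) hk
        rw [if_neg (by omega)]
    · intro hn; exact absurd (Finset.mem_range.2 hj0) hn
  have hPd : P.natDegree ≤ w - 1 := by
    refine natDegree_sum_le_of_forall_le _ _ fun j hj => ?_
    by_cases hk : kk j = 0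
    · simp [hk]
    · have := hsupp j (Finset.mem_range.1 hj) hk
      exact (natDegree_C_mul_X_pow_le _ _).trans (by omega)
  have heval : ∀ a : ℕ, (((derivative (FF d kk)).eval (a : ℤ) : ℤ) : ZMod q) = (a : ZMod q) ^ lo * P.eval (a : ZMod q) := by
    intro a
    rw [deriv_FF, hP, eval_finsetSum, eval_finsetSum, Finset.mul_sum]
    push_cast
    refine Finset.sum_congr rfl fun j hj => ?_
    simp only [eval_mul, eval_C, eval_pow, eval_X]
    by_cases hk : kk j = 0
    · simp [hk]
    · have := hsupp j (Finset.mem_range.1 hj) hk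
      push_cast
      rw [mul_left_comm, ← pow_add, show lo + (j - lo) = j by omega]
  have hcard : ((range q).filter (fun a : ℕ => (q : ℤ) ∣ (derivative (FF d kk)).eval (a : ℤ))).card ≤ w := by
    have h1 : ((range q).filter (fun a : ℕ => (q : ℤ) ∣ (derivative (FF d kk)).eval (a : ℤ))).card ≤
        (insert (0 : ZMod q) P.roots.toFinset).card := by
      refine Finset.card_le_card_of_injOn (fun a : ℕ => (a : ZMod q)) ?_ ?_
      · intro a ha
        simp only [Finset.coe_filter, Set.mem_ofPred_eq] at ha
        have h2 := (ZMod.intCast_zmod_eq_zero_iff_dvd _ q).2 ha.2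
        rw [heval] at h2
        rcases mul_eq_zero.1 h2 with h3 | h3
        · have h4 : (a : ZMod q) = 0 := by
            by_contra hne
            exact pow_ne_zero _ hne h3
          simp [h4]
        · simp [hP0, h3]
      · intro a ha b hb hab
        simp only [Finset.coe_filter, Set.mem_ofPred_eq, Finset.mem_range] at ha hb
        have h2 := (ZMod.natCast_eq_natCast_iff a b q).1 hab
        exact Nat.ModEq.eq_of_lt_of_lt h2 ha.1 hb.1
    refine h1.trans ((Finset.card_insert_le _ _).trans ?_)
    have := (Multiset.toFinset_card_le P.roots).trans ((card_roots' P).trans hPd)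
    omega
  rw [SqN_formula, norm_mul, Complex.norm_natCast, mul_comm]
  gcongr
  refine (norm_sum_le _ _).trans ?_
  simp only [AddChar.norm_apply, Finset.sum_const, nsmul_eq_mul, mul_one]
  exact_mod_cast hcard

theorem SqN_bad (kk : ℕ → ℤ) (lo w : ℕ) (hw : 1 ≤ w) (hlow : lo + w = q)
    (hsupp : ∀ j < q, kk j ≠ 0 → lo ≤ j)
    (hlast : ¬ (q : ℤ) ∣ kk (q - 1)) (hdvd : ∀ j < q - 1, (q : ℤ) ∣ kk j)
    (v : ℝ) (hv : 9 * (w : ℝ) ≤ v) (hvq : v ≤ Real.log (2 * q)) : ‖SqN q q kk‖ * v ≤ 9 * (q : ℝ) ^ 2 := by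
  classical
  have hq2 := hq.out.two_le
  have hq0 : (q : ℤ) ≠ 0 := by exact_mod_cast hq.out.ne_zero
  obtain ⟨n, hn⟩ : ∃ n, q = n + 1 := ⟨q - 1, by omega⟩
  have hnq : q - 1 = n := by omega
  rw [hnq] at hlast hdvd
  set κ := kk n with hκ
  let b : ℕ → ZMod q := fun i => if i + 1 ≤ n then ((kk (n - 1 - i) / q : ℤ) : ZMod q) else 0
  have hw1 : (1 : ℝ) ≤ w := by exact_mod_cast hw
  have hall : ∀ a : ℕ, (q : ℤ) ∣ (derivative (FF q kk)).eval (a : ℤ) := by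
    intro a
    rw [deriv_FF, eval_finsetSum]
    refine Finset.dvd_sum fun j hj => ?_
    simp only [eval_mul, eval_C, eval_pow, eval_X]
    refine Dvd.dvd.mul_right ?_ _
    by_cases hjn : j < n
    · exact Dvd.dvd.mul_left (hdvd j hjn) _
    · have : j = n := by have := Finset.mem_range.1 hj; omega
      rw [this]
      exact ⟨kk n, by rw [hn]; push_cast; ring⟩
  have hS : SqN q q kk = q * (1 + ∑ x, fS q κ (GG q (w - 2) b) x) := by
    rw [SqN_formula, Finset.filter_true_of_mem (fun a _ => hall a)]
    congr 1
    have e1 : ∑ a ∈ range q, ZMod.stdAddChar (N := q ^ 2) (((FF q kk).eval (a : ℤ) : ℤ) : ZMod (q ^ 2)) =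
        ∑ x : ZMod q, ZMod.stdAddChar (N := q ^ 2) (((FF q kk).eval (x.val : ℤ) : ℤ) : ZMod (q ^ 2)) := by
      refine Finset.sum_nbij' (fun b : ℕ => (b : ZMod q)) (fun x => x.val) ?_ ?_ ?_ ?_ ?_
      · simp
      · intro x _; exact Finset.mem_range.2 (ZMod.val_lt x)
      · intro b hb; exact ZMod.val_cast_of_lt (Finset.mem_range.1 hb)
      · intro x _; simp
      · intro b hb; rw [ZMod.val_cast_of_lt (Finset.mem_range.1 hb)]
    rw [e1, ← Finset.add_sum_erase univ _ (Finset.mem_univ (0 : ZMod q)),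
      ← Finset.add_sum_erase univ (fun x => fS q κ (GG q (w - 2) b) x) (Finset.mem_univ (0 : ZMod q))]
    have e2 : fS q κ (GG q (w - 2) b) 0 = 0 := by simp [fS]
    rw [e2, zero_add]
    congr 1
    · have : (FF q kk).eval (((0 : ZMod q).val : ℕ) : ℤ) = 0 := by
        rw [ZMod.val_zero, FF, eval_finsetSum]
        refine Finset.sum_eq_zero fun j _ => by simp
      rw [this]; simp
    · refine Finset.sum_congr rfl fun x hx => ?_
      have hx0 : x ≠ 0 := by simpa using hx
      rw [fS, if_neg hx0]
      have e3 : (FF q kk).eval (x.val : ℤ) = κ * (x.val : ℤ) ^ q + (q : ℤ) * ∑ j ∈ range n, (kk j / q) * (x.val : ℤ) ^ (j + 1) := by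
        rw [FF, eval_finsetSum]
        rw [show range q = range (n + 1) from congrArg range hn]
        rw [Finset.sum_range_succ, add_comm]
        congr 1
        · simp only [eval_mul, eval_C, eval_pow, eval_X, hκ]
          congr 2
          exact hn.symm
        · rw [Finset.mul_sum]
          refine Finset.sum_congr rfl fun j hj => ?_
          simp only [eval_mul, eval_C, eval_pow, eval_X]
          rw [← mul_assoc, Int.mul_ediv_cancel' (hdvd j (Finset.mem_range.1 hj))]
      rw [e3, Int.cast_add, AddChar.map_add_eq_mul, std_p_mul]
      congr 2
      push_cast
      simp only [ZMod.natCast_zmod_val]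
      rw [← Finset.sum_range_reflect, GG]
      have e4 : ∀ i ∈ range n, (((kk (n - 1 - i) / q : ℤ)) : ZMod q) * x ^ (n - 1 - i + 1) = b i * (x⁻¹) ^ i := by
        intro i hi
        have hi := Finset.mem_range.1 hi
        simp only [b]
        rw [if_pos (by omega)]
        congr 1
        have h5 : x ^ (q - 1) = 1 := ZMod.pow_card_sub_one_eq_one hx0
        have h6 : x ^ (n - 1 - i + 1) * x ^ i = 1 := by
          rw [← pow_add, ← h5]; congr 1; omega
        rw [inv_pow]
        exact eq_inv_of_mul_eq_one_left h6
      rw [Finset.sum_congr rfl e4]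
      symm
      refine Finset.sum_subset (Finset.range_mono (by omega)) ?_
      intro i hi hi2
      have hi := Finset.mem_range.1 hi
      simp only [Finset.mem_range] at hi2
      have : kk (n - 1 - i) = 0 := by
        by_contra hne
        have := hsupp (n - 1 - i) (by omega) hne
        omega
      simp only [b, this]
      simp
  have hbound : (1 + ‖∑ x, fS q κ (GG q (w - 2) b) x‖) * v ≤ 9 * q := by
    have hκ' : (κ : ZMod q) ≠ 0 := by
      rw [Ne, ZMod.intCast_zmod_eq_zero_iff_dvd]; exact hlast
    by_cases hb : ∀ i, 1 ≤ i → i ≤ w - 2 → b i = 0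
    · exact heilA q κ hκ' (w - 2) b hb v (by linarith) hvq
    · push Not at hb
      obtain ⟨i, hi1, hi2, hi3⟩ := hb
      refine heilB q κ (w - 2) (by omega) b i hi1 hi2 hi3 v ?_ hvq
      rw [Nat.cast_sub (by omega)]
      push_cast
      linarith
  have hv0 : 0 ≤ v := by linarith
  rw [hS, norm_mul, Complex.norm_natCast]
  calc (q : ℝ) * ‖1 + ∑ x, fS q κ (GG q (w - 2) b) x‖ * v ≤ q * (1 + ‖∑ x, fS q κ (GG q (w - 2) b) x‖) * v := by
        gcongr
        exact (norm_add_le _ _).trans (by simp)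
    _ = q * ((1 + ‖∑ x, fS q κ (GG q (w - 2) b) x‖) * v) := by ring
    _ ≤ q * (9 * q) := by gcongr
    _ = _ := by ring

end
end Kor

namespace Kor

theorem e2pi_sub_int (z : ℂ) (n : ℤ) : e2pi (z - n) = e2pi z := by
  unfold e2pi
  rw [mul_sub, show 2 * (Real.pi : ℂ) * Complex.I * z - 2 * Real.pi * Complex.I * n =
    2 * (Real.pi : ℂ) * Complex.I * z - n * (2 * Real.pi * Complex.I) by ring]
  exact Complex.exp_periodic.sub_int_mul_eq n

/-- extension of a frequency vector by zero -/
def kext {d : ℕ} (k : Fin d → ℤ) (j : ℕ) : ℤ := if h : j < d then k ⟨j, h⟩ else 0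

theorem e2pi_pt {d : ℕ} (k : Fin d → ℤ) (q : ℕ) [hq : Fact q.Prime] (h : ℕ) :
    e2pi (∑ j, (k j : ℂ) * (korobovPt d q h j : ℂ)) =
      ZMod.stdAddChar (N := q ^ 2) (((FF d (kext k)).eval (h : ℤ) : ℤ) : ZMod (q ^ 2)) := by
  have hq0 : (q : ℂ) ≠ 0 := by exact_mod_cast hq.out.ne_zero
  have h1 : (∑ j, (k j : ℂ) * (korobovPt d q h j : ℂ)) =
      (((FF d (kext k)).eval (h : ℤ) : ℤ) : ℂ) / (q : ℂ) ^ 2 -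
        ((∑ j : Fin d, k j * ⌊(h : ℝ) ^ (j.val + 1) / (q : ℝ) ^ 2⌋ : ℤ) : ℂ) := by
    have h2 : (FF d (kext k)).eval (h : ℤ) = ∑ j : Fin d, k j * (h : ℤ) ^ (j.val + 1) := by
      rw [FF, Polynomial.eval_finsetSum, ← Fin.sum_univ_eq_sum_range (fun j => Polynomial.eval (h : ℤ) (Polynomial.C (kext k j) * Polynomial.X ^ (j + 1)))]
      refine Finset.sum_congr rfl fun j _ => ?_
      simp [kext]
    rw [h2]
    push_cast
    rw [Finset.sum_div, ← Finset.sum_sub_distrib]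
    refine Finset.sum_congr rfl fun j _ => ?_
    rw [korobovPt, ← Int.self_sub_floor]
    push_cast
    ring
  rw [h1, e2pi_sub_int, ZMod.stdAddChar_coe, e2pi]
  congr 1
  push_cast
  ring

theorem sum_eq_SqN {d : ℕ} (k : Fin d → ℤ) (q : ℕ) [hq : Fact q.Prime] :
    ∑ h ∈ range (q ^ 2), e2pi (∑ j, (k j : ℂ) * (korobovPt d q h j : ℂ)) = SqN q d (kext k) := by
  rw [SqN]
  exact Finset.sum_congr rfl fun h _ => e2pi_pt k q h

theorem supp_nonempty {d : ℕ} (k : Fin d → ℤ) (hk : k ≠ 0) : (supp k).Nonempty := by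
  obtain ⟨j, hj⟩ := Function.ne_iff.1 hk
  exact ⟨j, by simpa [supp] using hj⟩

theorem width_pos {d : ℕ} (k : Fin d → ℤ) : 1 ≤ width k := by
  unfold width; split_ifs <;> omega

/-- The bound for the exponential sum of one prime. -/
theorem one_prime {d : ℕ} (k : Fin d → ℤ) (hk : k ≠ 0) (q : ℕ) (hq : q.Prime) (hdq : d ≤ q)
    (v : ℝ) (hv : 0 < v) (hvq : v ≤ Real.log (2 * q)) :
    ‖∑ h ∈ range (q ^ 2), e2pi (∑ j, (k j : ℂ) * (korobovPt d q h j : ℂ))‖ ≤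
      (width k : ℝ) * q + (if ∀ j, (q : ℤ) ∣ k j then (q : ℝ) ^ 2 else 0) +
        (if q = d then (d : ℝ) ^ 2 * min 1 (9 * width k / v) else 0) := by
  have : Fact q.Prime := ⟨hq⟩
  have hne := supp_nonempty k hk
  rw [sum_eq_SqN]
  set w := width k with hw
  have hw1 : 1 ≤ w := width_pos k
  have hw1' : (1 : ℝ) ≤ w := by exact_mod_cast hw1
  set lo := ((supp k).min' hne).val with hlo
  have hwdef : w = ((supp k).max' hne).val - lo + 1 := by rw [hw, width, dif_pos hne]
  have hlohi : lo ≤ ((supp k).max' hne).val := (Finset.min'_le _ _ (Finset.max'_mem _ hne))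
  have hsupp : ∀ j < d, kext k j ≠ 0 → lo ≤ j ∧ j < lo + w := by
    intro j hj hkj
    rw [kext, dif_pos hj] at hkj
    have hmem : (⟨j, hj⟩ : Fin d) ∈ supp k := by simpa [supp] using hkj
    have h1 : (supp k).min' hne ≤ ⟨j, hj⟩ := Finset.min'_le _ _ hmem
    have h2 : ⟨j, hj⟩ ≤ (supp k).max' hne := Finset.le_max' _ _ hmem
    have h1' : lo ≤ j := h1
    have h2' : j ≤ ((supp k).max' hne).val := h2
    omega
  have hd2 : 0 ≤ (if ∀ j, (q : ℤ) ∣ k j then (q : ℝ) ^ 2 else 0) := by split_ifs <;> positivity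
  have hb2 : 0 ≤ (if q = d then (d : ℝ) ^ 2 * min 1 (9 * w / v) else 0) := by
    split_ifs
    · have : (0 : ℝ) ≤ min 1 (9 * w / v) := le_min (by norm_num) (by positivity)
      positivity
    · exact le_rfl
  have hwq : (0 : ℝ) ≤ w * q := by positivity
  by_cases hgood : ∃ j < d, ¬ (q : ℤ) ∣ (j + 1 : ℤ) * kext k j
  · have := SqN_good q d (kext k) lo w hw1 hsupp hgood
    linarith
  push Not at hgood
  by_cases hall : ∀ j, (q : ℤ) ∣ k j
  · have := SqN_triv q d (kext k)
    rw [if_pos hall]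
    linarith
  push Not at hall
  obtain ⟨j0, hj0⟩ := hall
  have hprime : Prime (q : ℤ) := Nat.prime_iff_prime_int.1 hq
  have hsmall : ∀ j < d, j + 1 ≠ q → (q : ℤ) ∣ kext k j := by
    intro j hj hjq
    refine (hprime.dvd_or_dvd (hgood j hj)).resolve_left ?_
    intro h
    have h1 : q ∣ j + 1 := by exact_mod_cast h
    have := Nat.le_of_dvd (by omega) h1
    omega
  have hj0' : ¬ (q : ℤ) ∣ kext k j0 := by
    rw [kext, dif_pos j0.2]; exact hj0
  have hj0q : (j0 : ℕ) + 1 = q := by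
    by_contra hcon
    exact hj0' (hsmall j0 j0.2 hcon)
  have hqd : q = d := by have := j0.2; omega
  have hj0n : (j0 : ℕ) = q - 1 := by omega
  rw [if_pos hqd]
  have hlow : lo + w = q := by
    have h1 := (hsupp j0 j0.2 (by intro h; rw [h] at hj0'; simp at hj0')).2
    have h2 := ((supp k).max' hne).2
    omega
  have key : ‖SqN q q (kext k)‖ ≤ (q : ℝ) ^ 2 * min 1 (9 * w / v) := by
    have hq2 : (0 : ℝ) ≤ (q : ℝ) ^ 2 := by positivity
    have htriv := SqN_triv q q (kext k)
    rw [mul_min_of_nonneg _ _ hq2]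
    refine le_min (by linarith) ?_
    rw [mul_div_assoc', le_div_iff₀ hv]
    by_cases hv9 : 9 * (w : ℝ) ≤ v
    · refine (SqN_bad q (kext k) lo w hw1 hlow (fun j hj h => (hsupp j (by omega) h).1) (by rw [← hj0n]; exact hj0')
        (fun j hj => hsmall j (by omega) (by omega)) v hv9 hvq).trans ?_
      nlinarith
    · push Not at hv9
      calc _ ≤ (q : ℝ) ^ 2 * v := by gcongr
        _ ≤ _ := by gcongr
  have hrw : SqN q d (kext k) = SqN q q (kext k) :=
    congrArg (fun n => SqN q n (kext k)) hqd.symm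
  have hdR : (d : ℝ) = q := by exact_mod_cast hqd.symm
  rw [hrw, hdR]
  linarith

end Kor

namespace Kor

theorem mem_Pset {m p : ℕ} (hp : p ∈ Pset m) : p.Prime ∧ p ≤ m ∧ m < 2 * p := by
  simp only [Pset, Finset.mem_filter, Finset.mem_range] at hp
  refine ⟨hp.2.1, by omega, by omega⟩

theorem sum_log_le_logmin {d : ℕ} (k : Fin d → ℤ) (hk : k ≠ 0) (D : Finset ℕ)
    (hD : ∀ q ∈ D, q.Prime ∧ ∀ j, (q : ℤ) ∣ k j) : ∑ q ∈ D, Real.log q ≤ logmin k := by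
  have hne := supp_nonempty k hk
  rw [logmin, dif_pos hne]
  refine Finset.le_inf' hne _ fun j hj => ?_
  have hkj : k j ≠ 0 := by simpa [supp] using hj
  have h1 : ∏ q ∈ D, q ∣ (k j).natAbs := by
    refine Finset.prod_primes_dvd _ (fun q hq => (hD q hq).1.prime) fun q hq => ?_
    exact Int.natCast_dvd.1 ((hD q hq).2 j)
  have h2 : ∏ q ∈ D, q ≤ (k j).natAbs := Nat.le_of_dvd (Int.natAbs_pos.2 hkj) h1
  rw [← Real.log_prod (fun q hq => by exact_mod_cast (hD q hq).1.ne_zero)]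
  have h3 : (∏ q ∈ D, (q : ℝ)) = ((∏ q ∈ D, q : ℕ) : ℝ) := by push_cast; rfl
  have h4 : |(k j : ℝ)| = ((k j).natAbs : ℝ) := by
    rw [Nat.cast_natAbs]; push_cast; rfl
  rw [h3, h4]
  refine Real.log_le_log ?_ (by exact_mod_cast h2)
  exact_mod_cast Finset.prod_pos fun q hq => (hD q hq).1.pos

theorem final_arith (w t v x L W : ℝ) (hw1 : 1 ≤ w) (ht0 : 0 ≤ t) (hL1 : t * (v - 0.7) ≤ L)
    (hL2 : t * (v / 2) ≤ L) (h1 : x ≤ v) (h2 : x ≤ 9 * w) (hwW : w ≤ W) (hLW : L ≤ W) :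
    2 * w + 4 * t * v + x ≤ 16 * W := by
  rcases le_or_gt v 6 with h6 | h6
  · linarith
  · have h3 : t * 6 ≤ t * v := mul_le_mul_of_nonneg_left h6.le ht0
    have h4 : t * v * (5.3 / 6) ≤ L := by linarith
    linarith

theorem freq (d m : ℕ) (hm : 2 ≤ m)
    (cP : ℝ) (hc0 : 0 < cP) (hc1 : cP < 1)
    (hcard : cP * m / Real.log m ≤ ((Pset m).card : ℝ))
    (hdp : ∀ p ∈ Pset m, d ≤ p) (k : Fin d → ℤ) (hk : k ≠ 0) :
    ‖∑ p ∈ Pset m, ∑ h ∈ range (p ^ 2), e2pi (∑ j, (k j : ℂ) * (korobovPt d p h j : ℂ))‖ ≤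
      16 / (cP * m) * weight2 k * (∑ p ∈ Pset m, p ^ 2 : ℕ) := by
  have hm0 : (0 : ℝ) < m := by positivity
  set v := Real.log m with hv
  have hvpos : 0 < v := Real.log_pos (by exact_mod_cast hm)
  set w : ℝ := (width k : ℝ) with hw
  have hw1 : (1 : ℝ) ≤ w := by rw [hw]; exact_mod_cast width_pos k
  set P := Pset m with hP
  set n : ℝ := ((∑ p ∈ P, p ^ 2 : ℕ) : ℝ) with hn
  have hn' : n = ∑ p ∈ P, (p : ℝ) ^ 2 := by rw [hn]; push_cast; rfl
  set D := P.filter (fun q : ℕ => ∀ j, (q : ℤ) ∣ k j) with hD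
  set t : ℝ := (D.card : ℝ) with ht
  set L := logmin k with hL
  set W := weight2 k with hW
  have hwW : w ≤ W := le_max_left _ _
  have hLW : L ≤ W := le_max_right _ _
  set μ : ℝ := min 1 (9 * w / v) with hμ
  have hμ0 : 0 ≤ μ := le_min (by norm_num) (by positivity)
  have hcP : cP * m ≤ P.card * v := by rwa [div_le_iff₀ hvpos] at hcard
  have hq : ∀ q ∈ P, q.Prime ∧ (q : ℝ) ≤ m ∧ (m : ℝ) ≤ 2 * q := by
    intro q hq
    obtain ⟨h1, h2, h3⟩ := mem_Pset hq
    exact ⟨h1, by exact_mod_cast h2, by exact_mod_cast h3.le⟩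
  have hbound : ‖∑ p ∈ P, ∑ h ∈ range (p ^ 2), e2pi (∑ j, (k j : ℂ) * (korobovPt d p h j : ℂ))‖ ≤
      ∑ q ∈ P, w * q + ∑ q ∈ D, (q : ℝ) ^ 2 + (if d ∈ P then (d : ℝ) ^ 2 * μ else 0) := by
    refine (norm_sum_le _ _).trans ?_
    have : ∀ q ∈ P, ‖∑ h ∈ range (q ^ 2), e2pi (∑ j, (k j : ℂ) * (korobovPt d q h j : ℂ))‖ ≤ _ :=
      fun q hqP => one_prime k hk q (hq q hqP).1 (hdp q hqP) v hvpos
        (Real.log_le_log hm0 (hq q hqP).2.2)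
    refine (Finset.sum_le_sum this).trans (le_of_eq ?_)
    rw [Finset.sum_add_distrib, Finset.sum_add_distrib, Finset.sum_ite_eq', hD, Finset.sum_filter]
  have hn0 : 0 ≤ n := by rw [hn]; positivity
  have hA : (∑ q ∈ P, w * q) * (cP * m) ≤ 2 * w * n := by
    have h0 : (0:ℝ) ≤ ∑ q ∈ P, w * (q:ℝ) := Finset.sum_nonneg fun q _ => by positivity
    have h1 : (∑ q ∈ P, w * q) * m ≤ 2 * w * n := by
      rw [hn', Finset.sum_mul, Finset.mul_sum]
      refine Finset.sum_le_sum fun q hqP => ?_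
      have := (hq q hqP).2.2
      calc w * q * m ≤ w * q * (2 * q) := by gcongr
        _ = _ := by ring
    have h2 : 0 ≤ (∑ q ∈ P, w * (q:ℝ)) * m := by positivity
    nlinarith
  have hcn : (P.card : ℝ) * (m : ℝ) ^ 2 ≤ 4 * n := by
    rw [hn', Finset.mul_sum, ← nsmul_eq_mul]
    refine Finset.card_nsmul_le_sum _ _ _ fun q hqP => ?_
    have := (hq q hqP).2.2
    nlinarith
  have hB : (∑ q ∈ D, (q : ℝ) ^ 2) * (cP * m) ≤ 4 * t * v * n := by
    have h1 : ∑ q ∈ D, (q : ℝ) ^ 2 ≤ t * (m : ℝ) ^ 2 := by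
      rw [ht, ← nsmul_eq_mul]
      refine Finset.sum_le_card_nsmul _ _ _ fun q hqD => ?_
      have := (hq q (Finset.mem_filter.1 hqD).1).2.1
      gcongr
    calc _ ≤ (t * (m : ℝ) ^ 2) * (P.card * v) := by gcongr
      _ = t * v * (P.card * (m : ℝ) ^ 2) := by ring
      _ ≤ t * v * (4 * n) := by gcongr
      _ = _ := by ring
  have hC : (if d ∈ P then (d : ℝ) ^ 2 * μ else 0) * (cP * m) ≤ v * μ * n := by
    have h0 : 0 ≤ v * μ * n := by positivity
    split_ifs with hdP
    · have h1 : (P.card : ℝ) * (d : ℝ) ^ 2 ≤ n := by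
        rw [hn', ← nsmul_eq_mul]
        refine Finset.card_nsmul_le_sum _ _ _ fun q hqP => ?_
        have : (d : ℝ) ≤ q := by exact_mod_cast hdp q hqP
        gcongr
      calc (d : ℝ) ^ 2 * μ * (cP * m) ≤ (d : ℝ) ^ 2 * μ * (P.card * v) := by gcongr
        _ = v * μ * (P.card * (d : ℝ) ^ 2) := by ring
        _ ≤ v * μ * n := by gcongr
    · simpa using h0
  have hDL : ∑ q ∈ D, Real.log q ≤ L := sum_log_le_logmin k hk D fun q hqD =>
    ⟨(hq q (Finset.mem_filter.1 hqD).1).1, (Finset.mem_filter.1 hqD).2⟩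
  have hlogq : ∀ q ∈ D, v - 0.7 ≤ Real.log q ∧ v / 2 ≤ Real.log q := by
    intro q hqD
    obtain ⟨h1, h2, h3⟩ := hq q (Finset.mem_filter.1 hqD).1
    have hq2 : (2 : ℝ) ≤ q := by exact_mod_cast h1.two_le
    have h4 : v ≤ Real.log 2 + Real.log q := by
      rw [← Real.log_mul (by norm_num) (by positivity)]
      exact Real.log_le_log hm0 h3
    have h5 : Real.log 2 ≤ Real.log q := Real.log_le_log (by norm_num) hq2
    have h6 := log_two_le
    constructor <;> linarith
  have ht0 : 0 ≤ t := by positivity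
  have hL1 : t * (v - 0.7) ≤ L := by
    refine le_trans ?_ hDL
    rw [ht, ← nsmul_eq_mul]
    exact Finset.card_nsmul_le_sum _ _ _ fun q hqD => (hlogq q hqD).1
  have hL2 : t * (v / 2) ≤ L := by
    refine le_trans ?_ hDL
    rw [ht, ← nsmul_eq_mul]
    exact Finset.card_nsmul_le_sum _ _ _ fun q hqD => (hlogq q hqD).2
  have hμ1 : v * μ ≤ v := by
    have : μ ≤ 1 := min_le_left _ _
    nlinarith
  have hμ2 : v * μ ≤ 9 * w := by
    have : μ ≤ 9 * w / v := min_le_right _ _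
    rw [le_div_iff₀ hvpos] at this
    linarith
  have hfin : 2 * w + 4 * t * v + v * μ ≤ 16 * W :=
    final_arith w t v (v * μ) L W hw1 ht0 hL1 hL2 hμ1 hμ2 hwW hLW
  have hcm : 0 < cP * m := by positivity
  refine hbound.trans ?_
  rw [show 16 / (cP * m) * W * n = 16 * W * n / (cP * m) by ring, le_div_iff₀ hcm]
  have := mul_le_mul_of_nonneg_right hfin hn0
  linarith

end Kor

namespace Kor

theorem e2pi_zero : e2pi 0 = 1 := by simp [e2pi]

theorem norm_e2pi_real {d : ℕ} (k : Fin d → ℤ) (x : Fin d → ℝ) :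
    ‖e2pi (∑ j, (k j : ℂ) * (x j : ℂ))‖ = 1 := by
  have : e2pi (∑ j, (k j : ℂ) * (x j : ℂ)) =
      Complex.exp (((2 * Real.pi * ∑ j, (k j : ℝ) * x j : ℝ) : ℂ) * Complex.I) := by
    rw [e2pi]; congr 1; push_cast; ring
  rw [this, Complex.norm_exp_ofReal_mul_I]

theorem weight2_ge {d : ℕ} (k : Fin d → ℤ) : 1 ≤ weight2 k :=
  le_trans (by exact_mod_cast width_pos k) (le_max_left _ _)

open MeasureTheory in
theorem integral_one (a : ℤ) (ha : a ≠ 0) :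
    ∫ x in Set.Ico (0 : ℝ) 1, e2pi ((a : ℂ) * (x : ℂ)) = 0 := by
  rw [integral_Ico_eq_integral_Ioc, ← intervalIntegral.integral_of_le (by norm_num)]
  have hc : (2 * Real.pi * Complex.I * a : ℂ) ≠ 0 := by
    simp [Real.pi_ne_zero, ha]
  have h1 : ∀ x : ℝ, e2pi ((a : ℂ) * (x : ℂ)) = Complex.exp (2 * Real.pi * Complex.I * a * x) := by
    intro x; rw [e2pi, mul_assoc (2 * Real.pi * Complex.I : ℂ)]
  simp_rw [h1]
  rw [integral_exp_mul_complex hc]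
  have h2 : Complex.exp (2 * Real.pi * Complex.I * a * (1 : ℝ)) = 1 := by
    rw [Complex.exp_eq_one_iff]
    exact ⟨a, by push_cast; ring⟩
  rw [h2]; simp

open MeasureTheory in
theorem integral_cube {d : ℕ} (k : Fin d → ℤ) :
    ∫ x in Set.univ.pi fun _ : Fin d => Set.Ico (0 : ℝ) 1, e2pi (∑ j, (k j : ℂ) * (x j : ℂ)) =
      if k = 0 then 1 else 0 := by
  have h1 : ∀ x : Fin d → ℝ, e2pi (∑ j, (k j : ℂ) * (x j : ℂ)) =
      ∏ j, e2pi ((k j : ℂ) * (x j : ℂ)) := by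
    intro x
    simp only [e2pi]
    rw [Finset.mul_sum, Complex.exp_sum]
  simp_rw [h1]
  rw [volume_pi, Measure.restrict_pi_pi,
    integral_fintype_prod_eq_prod (fun j (x : ℝ) => e2pi ((k j : ℂ) * (x : ℂ)))]
  split_ifs with hk
  · subst hk
    simp [e2pi]
  · obtain ⟨j, hj⟩ := Function.ne_iff.1 hk
    exact Finset.prod_eq_zero (Finset.mem_univ j) (integral_one (k j) hj)

end Kor

open MeasureTheory in
theorem worst_case_error_Fd2_bound (d m : ℕ) (hm : 2 ≤ m)
    (cP : ℝ) (hc0 : 0 < cP) (hc1 : cP < 1)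
    (hcard : cP * m / Real.log m ≤ ((Pset m).card : ℝ))
    (hd : 1 ≤ d) (hdp : ∀ p ∈ Pset m, d ≤ p)
    (f : (Fin d → ℝ) → ℝ) (hf : Continuous f)
    (fhat : (Fin d → ℤ) → ℂ)
    (habs : Summable fun k : Fin d → ℤ => ‖fhat k‖ * weight2 k)
    (hrep : ∀ x : Fin d → ℝ,
      (f x : ℂ) = ∑' k : Fin d → ℤ, fhat k * e2pi (∑ j, (k j : ℂ) * (x j : ℂ)))
    (hnorm : ∑' k : Fin d → ℤ, ‖fhat k‖ * weight2 k ≤ 1) :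
    ‖(∫ x in Set.univ.pi fun _ : Fin d => Set.Ico (0 : ℝ) 1, (f x : ℂ)) -
        (1 / ((∑ p ∈ Pset m, p ^ 2 : ℕ) : ℂ)) * ∑ p ∈ Pset m, ∑ h ∈ Finset.range (p ^ 2),
          (f (korobovPt d p h) : ℂ)‖
      ≤ 16 / (cP * m) := by
  have hm0 : (0 : ℝ) < m := by positivity
  have hsum : Summable fun k : Fin d → ℤ => ‖fhat k‖ := by
    refine Summable.of_nonneg_of_le (fun _ => norm_nonneg _) (fun k => ?_) habs
    exact le_mul_of_one_le_right (norm_nonneg _) (Kor.weight2_ge k)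
  have hsx : ∀ x : Fin d → ℝ,
      Summable fun k : Fin d → ℤ => fhat k * e2pi (∑ j, (k j : ℂ) * (x j : ℂ)) := by
    intro x
    refine Summable.of_norm ?_
    simpa [norm_mul, Kor.norm_e2pi_real] using hsum
  have hhx : ∀ x : Fin d → ℝ,
      HasSum (fun k : Fin d → ℤ => fhat k * e2pi (∑ j, (k j : ℂ) * (x j : ℂ))) (f x : ℂ) := by
    intro x
    rw [hrep x]
    exact (hsx x).hasSum
  set n : ℕ := ∑ p ∈ Pset m, p ^ 2 with hn
  have hvol : volume (Set.univ.pi fun _ : Fin d => Set.Ico (0 : ℝ) 1) = 1 := by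
    rw [volume_pi_pi]; simp
  have hcard0 : 0 < (Pset m).card := by
    have h1 : 0 < cP * m / Real.log m :=
      div_pos (by positivity) (Real.log_pos (by exact_mod_cast hm))
    exact_mod_cast h1.trans_le hcard
  have hn0 : 0 < n := by
    refine Finset.sum_pos (fun p hp => ?_) (Finset.card_pos.1 hcard0)
    have := (Kor.mem_Pset hp).1.pos
    positivity
  have hnR : (0 : ℝ) < n := by exact_mod_cast hn0
  -- the integral
  have hint : HasSum (fun k : Fin d → ℤ => fhat k * (if k = 0 then 1 else 0))
      (∫ x in Set.univ.pi fun _ : Fin d => Set.Ico (0 : ℝ) 1, (f x : ℂ)) := by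
    have hfin : IsFiniteMeasure ((volume : Measure (Fin d → ℝ)).restrict
        (Set.univ.pi fun _ : Fin d => Set.Ico (0 : ℝ) 1)) :=
      ⟨by rw [Measure.restrict_apply_univ, hvol]; exact ENNReal.one_lt_top⟩
    have key := hasSum_integral_of_summable_integral_norm
      (μ := (volume : Measure (Fin d → ℝ)).restrict
        (Set.univ.pi fun _ : Fin d => Set.Ico (0 : ℝ) 1))
      (F := fun (k : Fin d → ℤ) (x : Fin d → ℝ) =>
        fhat k * e2pi (∑ j, (k j : ℂ) * (x j : ℂ))) ?_ ?_
    · simp_rw [← hrep] at key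
      simp_rw [integral_const_mul, Kor.integral_cube] at key
      exact key
    · intro k
      refine Integrable.mono' (integrable_const ‖fhat k‖) ?_ ?_
      · refine Continuous.aestronglyMeasurable ?_
        unfold e2pi
        fun_prop
      · refine Filter.Eventually.of_forall fun x => ?_
        rw [norm_mul, Kor.norm_e2pi_real, mul_one]
    · have : ∀ k : Fin d → ℤ, ∫ x in Set.univ.pi fun _ : Fin d => Set.Ico (0 : ℝ) 1,
          ‖fhat k * e2pi (∑ j, (k j : ℂ) * (x j : ℂ))‖ = ‖fhat k‖ := by
        intro k
        simp_rw [norm_mul, Kor.norm_e2pi_real, mul_one]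
        rw [setIntegral_const, Measure.real, hvol]
        simp
      simp_rw [this]
      exact hsum
  -- the quadrature rule
  have hqmc : HasSum (fun k : Fin d → ℤ => fhat k * ((1 / (n : ℂ)) *
        ∑ p ∈ Pset m, ∑ h ∈ Finset.range (p ^ 2),
          e2pi (∑ j, (k j : ℂ) * (korobovPt d p h j : ℂ))))
      ((1 / (n : ℂ)) * ∑ p ∈ Pset m, ∑ h ∈ Finset.range (p ^ 2), (f (korobovPt d p h) : ℂ)) := by
    have h1 := (hasSum_sum (s := Pset m) fun p _ =>
      hasSum_sum (s := Finset.range (p ^ 2)) fun h _ => hhx (korobovPt d p h)).mul_left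
        (1 / (n : ℂ))
    have h2 : ∀ k : Fin d → ℤ, fhat k * ((1 / (n : ℂ)) *
        ∑ p ∈ Pset m, ∑ h ∈ Finset.range (p ^ 2),
          e2pi (∑ j, (k j : ℂ) * (korobovPt d p h j : ℂ))) =
        (1 / (n : ℂ)) * ∑ p ∈ Pset m, ∑ h ∈ Finset.range (p ^ 2),
          fhat k * e2pi (∑ j, (k j : ℂ) * (korobovPt d p h j : ℂ)) := by
      intro k
      rw [mul_left_comm, Finset.mul_sum]
      simp_rw [Finset.mul_sum]
    rw [funext h2]
    exact h1
  have hdiff := hint.sub hqmc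
  rw [← hdiff.tsum_eq]
  have hW : HasSum (fun k : Fin d → ℤ => 16 / (cP * m) * (‖fhat k‖ * weight2 k)) _ :=
    habs.hasSum.mul_left (16 / (cP * m))
  refine (tsum_of_norm_bounded hW fun k => ?_).trans ?_
  · rw [← mul_sub, norm_mul, mul_left_comm]
    refine mul_le_mul_of_nonneg_left ?_ (norm_nonneg _)
    have hW0 : 0 ≤ 16 / (cP * m) * weight2 k :=
      mul_nonneg (by positivity) (zero_le_one.trans (Kor.weight2_ge k))
    by_cases hk : k = 0
    · have hT : ∑ p ∈ Pset m, ∑ h ∈ Finset.range (p ^ 2),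
          e2pi (∑ j, (k j : ℂ) * (korobovPt d p h j : ℂ)) = (n : ℂ) := by
        subst hk
        simp [Kor.e2pi_zero, hn]
      have hnC : (n : ℂ) ≠ 0 := by exact_mod_cast hn0.ne'
      rw [hT, if_pos hk, one_div_mul_cancel hnC, sub_self, norm_zero]
      exact hW0
    · rw [if_neg hk, zero_sub, norm_neg, norm_mul, norm_div, norm_one, Complex.norm_natCast,
        one_div_mul_eq_div, div_le_iff₀ hnR]
      exact Kor.freq d m hm cP hc0 hc1 hcard hdp k hk
  · have : 0 ≤ 16 / (cP * (m : ℝ)) := by positivity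
    exact mul_le_of_le_one_right this hnorm
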